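/- Super-critical sharpness for Bernoulli percolation: for every dimension d ≥ 2 and every p ∈ (0,1) with p > p_c(ℤ^d), there exists a constant c = c(p) > 0 such that ℙ_p[0 ↔ ∂Λ_n but the open cluster of 0 is finite] ≤ exp(−c·n) for all integers n ≥ 1. -/

import Mathlib

open MeasureTheory

namespace Perc

/-- Vertices of `ℤ^d`. -/
abbrev Vertex (d : ℕ) := Fin d → ℤ

/-- Nearest-neighbour adjacency in `ℤ^d`: `‖x − y‖₁ = 1`. -/
def adj {d : ℕ} (x y : Vertex d) : Prop :=
  (∑ i, (x i - y i).natAbs) = 1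

/-- The unordered pair `e` is a nearest-neighbour edge of `ℤ^d`. -/
def IsEdge {d : ℕ} (e : Sym2 (Vertex d)) : Prop :=
  ∃ x y : Vertex d, adj x y ∧ e = s(x, y)

/-- The set `E` of nearest-neighbour edges of `ℤ^d`. -/
abbrev Edge (d : ℕ) := {e : Sym2 (Vertex d) // IsEdge e}

/-- Percolation configurations `ω ∈ {0,1}^E`. -/
abbrev Config (d : ℕ) := Edge d → Bool

/-- One step along an open edge of `ω`. -/
def step {d : ℕ} (ω : Config d) (x y : Vertex d) : Prop :=
  ∃ h : adj x y, ω ⟨s(x, y), x, y, h, rfl⟩ = true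

/-- `x` and `y` are joined by a path of open edges. -/
def Conn {d : ℕ} (ω : Config d) : Vertex d → Vertex d → Prop :=
  Relation.ReflTransGen (step ω)

/-- The open cluster of `x` in `ω`. -/
def cluster {d : ℕ} (ω : Config d) (x : Vertex d) : Set (Vertex d) :=
  {y | Conn ω x y}

/-- The box `Λ_n = {−n, …, n}^d`. -/
def box (d n : ℕ) : Set (Vertex d) := {x | ∀ i, |x i| ≤ (n : ℤ)}

/-- `∂Λ_n`: vertices of `Λ_n` having a nearest neighbour outside `Λ_n`. -/
def boxBoundary (d n : ℕ) : Set (Vertex d) :=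
  {x | x ∈ box d n ∧ ∃ y, adj x y ∧ y ∉ box d n}

/-- The origin of `ℤ^d`. -/
def origin (d : ℕ) : Vertex d := fun _ => 0

/-- The event `{0 ↔ ∂Λ_n}`. -/
def ZeroToBoundary (d n : ℕ) : Set (Config d) :=
  {ω | ∃ y ∈ boxBoundary d n, Conn ω (origin d) y}

/-- The event `{0 ↔ ∞}` that the open cluster of the origin is infinite. -/
def ZeroToInfinity (d : ℕ) : Set (Config d) :=
  {ω | (cluster ω (origin d)).Infinite}

/-- `μ` is the law of i.i.d. Bernoulli(p) edge variables: it is a probability measure on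
`{0,1}^E` under which every finite cylinder has the corresponding product probability. -/
def IsBernoulli (d : ℕ) (p : ℝ) (μ : Measure (Config d)) : Prop :=
  IsProbabilityMeasure μ ∧
    ∀ (s : Finset (Edge d)) (f : Edge d → Bool),
      μ {ω : Config d | ∀ e ∈ s, ω e = f e} =
        ENNReal.ofReal (∏ e ∈ s, if f e then p else 1 - p)

/-!
Fix `q < p` with `θ(q) > 0` and write `ℙ_p` as the law of the union of a base layer of parameter
`q` and finitely many sprinkling layers of parameter `δ > 0`. Since `θ(q) > 0`, the infinite
cluster is met by every large cube with high probability, and a square-root trick produces a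
translate of a fully open cube (a seed) connected to a given seed in a neighbouring block. An
exploration that uses a fresh sprinkling layer for every block of a zone therefore performs each
renormalised step with conditional failure probability at most `ε`, whatever it has discovered so
far. It explores a quadrant embedded in `ℤ^d`, and it can only stop after meeting a connected
contour of failed blocks; the Peierls estimate bounds the probability that it stops at height `h`
by `8^{-(h+1)}`.

To get an exponential bound in `n`, suppose that the cluster of the origin reaches level `a` of a
coordinate at a tip `x` of its part in the half-space below. The configuration beyond is fresh;
with a probability bounded below, a stem at `x` is open and the exploration started there either
never stops, so that the cluster is infinite, or stops at a height `h` with a geometric tail,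
after which one restarts at a level higher by a constant times `h + 1`. Thus each constant
increase of the level costs a factor `r < 1` on the event that the cluster is finite.
-/

/-! ### Events in product spaces -/

section DeterminedBy

variable {ι : Type*} {Ω : ι → Type*} {A B : Set (∀ i, Ω i)} {J K : Set ι}

/-- The event `A` only involves the coordinates in `J`. -/
def DeterminedBy (A : Set (∀ i, Ω i)) (J : Set ι) : Prop :=
  DependsOn (· ∈ A) J

lemma determinedBy_of_imp
    (h : ∀ ω ω', (∀ i ∈ J, ω i = ω' i) → ω ∈ A → ω' ∈ A) : DeterminedBy A J :=
  fun ω ω' hω => propext ⟨h ω ω' hω, h ω' ω fun i hi => (hω i hi).symm⟩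

lemma determinedBy_eval_eq (i : ι) (a : Ω i) : DeterminedBy {ω : ∀ i, Ω i | ω i = a} {i} :=
  determinedBy_of_imp fun _ _ h hω => (h i rfl).symm.trans hω

namespace DeterminedBy

lemma mem_iff (hA : DeterminedBy A J) {ω ω' : ∀ i, Ω i} (h : ∀ i ∈ J, ω i = ω' i) :
    ω ∈ A ↔ ω' ∈ A :=
  iff_of_eq (hA h)

lemma mono (hA : DeterminedBy A J) (hJK : J ⊆ K) : DeterminedBy A K :=
  DependsOn.mono hJK hA

lemma inter (hA : DeterminedBy A J) (hB : DeterminedBy B J) : DeterminedBy (A ∩ B) J :=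
  fun _ _ h => propext (and_congr (hA.mem_iff h) (hB.mem_iff h))

lemma compl (hA : DeterminedBy A J) : DeterminedBy Aᶜ J :=
  fun _ _ h => propext (not_congr (hA.mem_iff h))

lemma iInter {κ : Sort*} {A : κ → Set (∀ i, Ω i)} (hA : ∀ k, DeterminedBy (A k) J) :
    DeterminedBy (⋂ k, A k) J :=
  determinedBy_of_imp fun _ _ h hω =>
    Set.mem_iInter.2 fun k => ((hA k).mem_iff h).1 (Set.mem_iInter.1 hω k)

variable [∀ i, MeasurableSpace (Ω i)]

lemma measurableSet [∀ i, Countable (Ω i)] [∀ i, MeasurableSingletonClass (Ω i)]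
    (hA : DeterminedBy A J) (hJ : J.Finite) : MeasurableSet A := by
  lift J to Finset ι using hJ
  have hpre : A = J.restrict ⁻¹' (J.restrict '' A) := by
    refine Set.Subset.antisymm (Set.subset_preimage_image _ _) ?_
    rintro ω ⟨ω', hω', h⟩
    exact (hA.mem_iff fun i hi => congrFun h ⟨i, hi⟩).1 hω'
  rw [hpre]
  exact J.measurable_restrict (Set.to_countable _).measurableSet

lemma measurableSet_iSup_comap (hA : DeterminedBy A J) (hAm : MeasurableSet A) :
    MeasurableSet[⨆ i ∈ J, MeasurableSpace.comap (fun ω : ∀ i, Ω i => ω i) inferInstance] A := by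
  classical
  rcases A.eq_empty_or_nonempty with rfl | ⟨ω₀, -⟩
  · exact MeasurableSpace.measurableSet_empty _
  let g : (∀ i, Ω i) → ∀ i, Ω i := fun ω i => if i ∈ J then ω i else ω₀ i
  have hpre : A = g ⁻¹' A := Set.ext fun ω => hA.mem_iff fun i hi => by simp [g, hi]
  have hg : @Measurable _ _ (⨆ i ∈ J, MeasurableSpace.comap (fun ω : ∀ i, Ω i => ω i) inferInstance)
      MeasurableSpace.pi g := by
    rw [@measurable_pi_iff]
    intro i
    by_cases hi : i ∈ J
    · simp only [g, hi, if_true]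
      refine Measurable.mono (comap_measurable fun ω : ∀ i, Ω i => ω i) ?_ le_rfl
      exact le_iSup₂_of_le (f := fun i (_ : i ∈ J) =>
        MeasurableSpace.comap (fun ω : ∀ i, Ω i => ω i) inferInstance) i hi le_rfl
    · simpa only [g, hi, if_false] using measurable_const
  rw [hpre]
  exact hg hAm

end DeterminedBy

lemma DeterminedBy.disjointed {A : ℕ → Set (∀ i, Ω i)} (hA : ∀ k, DeterminedBy (A k) J) (k : ℕ) :
    DeterminedBy (disjointed A k) J :=
  disjointedRec (p := (DeterminedBy · J)) (fun _ i ht => ht.inter (hA i).compl) (hA k)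

end DeterminedBy

section ProductMeasure

variable {ι : Type*} {Ω : ι → Type*} [∀ i, MeasurableSpace (Ω i)]
  (μ : ∀ i, Measure (Ω i)) [∀ i, IsProbabilityMeasure (μ i)] {A B : Set (∀ i, Ω i)}

lemma infinitePi_inter {J K : Set ι} (hAm : MeasurableSet A) (hBm : MeasurableSet B)
    (hA : DeterminedBy A J) (hB : DeterminedBy B K) (hJK : Disjoint J K) :
    Measure.infinitePi μ (A ∩ B) = Measure.infinitePi μ A * Measure.infinitePi μ B := by
  have hcoord : ProbabilityTheory.iIndepFun (fun i (ω : ∀ i, Ω i) => ω i) (Measure.infinitePi μ) :=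
    ProbabilityTheory.iIndepFun_infinitePi (X := fun _ ω => ω) fun _ => measurable_id
  have hindep := ProbabilityTheory.indep_iSup_of_disjoint
    (fun i => (measurable_pi_apply i).comap_le) hcoord hJK
  exact (ProbabilityTheory.Indep_iff _ _ _).1 hindep _ _
    (hA.measurableSet_iSup_comap hAm) (hB.measurableSet_iSup_comap hBm)

lemma infinitePi_real_inter {J K : Set ι} (hAm : MeasurableSet A) (hBm : MeasurableSet B)
    (hA : DeterminedBy A J) (hB : DeterminedBy B K) (hJK : Disjoint J K) :
    (Measure.infinitePi μ).real (A ∩ B) =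
      (Measure.infinitePi μ).real A * (Measure.infinitePi μ).real B := by
  simp only [measureReal_def, infinitePi_inter μ hAm hBm hA hB hJK, ENNReal.toReal_mul]

lemma infinitePi_real_biInter {κ : Type*} (I : Finset κ) {A : κ → Set (∀ i, Ω i)}
    {Q : κ → Set ι} (hAm : ∀ u ∈ I, MeasurableSet (A u)) (hA : ∀ u ∈ I, DeterminedBy (A u) (Q u))
    (hQ : (I : Set κ).PairwiseDisjoint Q) :
    (Measure.infinitePi μ).real (⋂ u ∈ I, A u) = ∏ u ∈ I, (Measure.infinitePi μ).real (A u) := by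
  classical
  induction I using Finset.induction_on with
  | empty => simp
  | insert u I hu ih =>
    simp only [Finset.forall_mem_insert] at hAm hA
    rw [Finset.coe_insert, Set.pairwiseDisjoint_insert_of_notMem (by simpa using hu)] at hQ
    have hI : DeterminedBy (⋂ v ∈ I, A v) (⋃ v ∈ I, Q v) :=
      .iInter fun v => .iInter fun hv => (hA.2 v hv).mono (Set.subset_biUnion_of_mem hv)
    rw [Finset.set_biInter_insert, Finset.prod_insert hu, ← ih hAm.2 hA.2 hQ.1]
    exact infinitePi_real_inter μ hAm.1 (Finset.measurableSet_biInter I hAm.2) hA.1 hI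
      (Set.disjoint_iUnion₂_right.2 hQ.2)

lemma eq_infinitePi_of_forall_cylinder [∀ i, Countable (Ω i)] [∀ i, MeasurableSingletonClass (Ω i)]
    {ν : Measure (∀ i, Ω i)}
    (hν : ∀ (s : Finset ι) (f : ∀ i, Ω i), ν {ω | ∀ i ∈ s, ω i = f i} = ∏ i ∈ s, μ i {f i}) :
    ν = Measure.infinitePi μ := by
  classical
  obtain ⟨ω₀⟩ : Nonempty (∀ i, Ω i) := (Measure.infinitePi μ).nonempty_of_neZero
  have hmap (s : Finset ι) : ν.map s.restrict = Measure.pi fun i : s => μ i := by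
    refine Measure.ext_of_singleton fun g => ?_
    have hpre : s.restrict ⁻¹' {g} = {ω | ∀ i ∈ s, ω i = Function.updateFinset ω₀ s g i} := by
      ext ω
      simp +contextual [funext_iff, Function.updateFinset]
    rw [Measure.map_apply s.measurable_restrict (measurableSet_singleton g), hpre, hν,
      Measure.pi_singleton, ← Finset.prod_coe_sort s]
    simp [Function.updateFinset]
  refine Measure.eq_infinitePi μ fun s t ht => ?_
  have hpre : (s : Set ι).pi t = s.restrict ⁻¹' Set.univ.pi fun i : s => t i := by
    ext ω; simp
  rw [hpre, ← Measure.map_apply s.measurable_restrict (.univ_pi fun i => ht i), hmap,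
    Measure.pi_pi, Finset.prod_coe_sort s fun i => μ i (t i)]

lemma infinitePi_cylinder (s : Finset ι) (f : ∀ i, Ω i) [∀ i, MeasurableSingletonClass (Ω i)] :
    Measure.infinitePi μ {ω | ∀ i ∈ s, ω i = f i} = ∏ i ∈ s, μ i {f i} := by
  have hpi : {ω : ∀ i, Ω i | ∀ i ∈ s, ω i = f i} = (s : Set ι).pi fun i => {f i} := by
    ext ω; simp
  rw [hpi, Measure.infinitePi_pi μ fun i _ => measurableSet_singleton (f i)]

/-- Conditioning on such an event does not change the probability of any cylinder, hence does not
change the measure. -/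
lemma infinitePi_eq_one_of_forall_determinedBy_compl [∀ i, Countable (Ω i)]
    [∀ i, MeasurableSingletonClass (Ω i)] (hA : MeasurableSet A)
    (htail : ∀ J : Finset ι, DeterminedBy A (J : Set ι)ᶜ) (h0 : Measure.infinitePi μ A ≠ 0) :
    Measure.infinitePi μ A = 1 := by
  have hcond : ProbabilityTheory.cond (Measure.infinitePi μ) A = Measure.infinitePi μ := by
    refine eq_infinitePi_of_forall_cylinder μ fun s f => ?_
    have hcyl : DeterminedBy {ω : ∀ i, Ω i | ∀ i ∈ s, ω i = f i} (s : Set ι) :=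
      determinedBy_of_imp fun ω ω' h hω i hi => (h i hi).symm.trans (hω i hi)
    rw [ProbabilityTheory.cond_apply hA, infinitePi_inter μ hA
      (hcyl.measurableSet s.finite_toSet) (htail s) hcyl disjoint_compl_left, ← mul_assoc,
      ENNReal.inv_mul_cancel h0 (measure_ne_top _ _), one_mul, infinitePi_cylinder]
  calc Measure.infinitePi μ A = ProbabilityTheory.cond (Measure.infinitePi μ) A A := by rw [hcond]
    _ = 1 := by
      rw [ProbabilityTheory.cond_apply hA, Set.inter_self,
        ENNReal.inv_mul_cancel h0 (measure_ne_top _ _)]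

open Classical in
lemma infinitePi_real_eq_sum_updateFinset [∀ i, MeasurableSingletonClass (Ω i)]
    {J : Finset ι} [Fintype (∀ i : J, Ω i)]
    (hA : DeterminedBy A (J : Set ι)) (ω₀ : ∀ i, Ω i) :
    (Measure.infinitePi μ).real A = ∑ g : ∀ i : J, Ω i,
      (∏ i : J, (μ i).real {g i}) * if Function.updateFinset ω₀ J g ∈ A then 1 else 0 := by
  have hpre : A = J.restrict ⁻¹' {g | Function.updateFinset ω₀ J g ∈ A} :=
    Set.ext fun ω => hA.mem_iff fun i hi => by simp [Function.updateFinset, Finset.mem_coe.1 hi]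
  have hfin (s : Set (∀ i : J, Ω i)) : MeasurableSet s := s.to_countable.measurableSet
  conv_lhs => rw [hpre]
  rw [← map_measureReal_apply J.measurable_restrict (hfin _), Measure.infinitePi_map_restrict,
    ← Set.coe_toFinset {g | Function.updateFinset ω₀ J g ∈ A}, ← sum_measureReal_singleton]
  simp only [mul_ite, mul_one, mul_zero, ← Finset.sum_filter, Set.toFinset_ofPred, measureReal_def,
    Measure.pi_singleton, ENNReal.toReal_prod]

end ProductMeasure

lemma updateFinset_mono {ι : Type*} [DecidableEq ι] {Ω : ι → Type*} [∀ i, Preorder (Ω i)]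
    (ω : ∀ i, Ω i) {J : Finset ι} : Monotone (Function.updateFinset ω J) := fun g g' hgg' i => by
  unfold Function.updateFinset
  split_ifs with hi
  · exact hgg' ⟨i, hi⟩
  · exact le_rfl

section Harris

variable {ι : Type*} {Ω : ι → Type*} [∀ i, LinearOrder (Ω i)] [∀ i, Finite (Ω i)]
  [∀ i, MeasurableSpace (Ω i)] [∀ i, MeasurableSingletonClass (Ω i)]
  (μ : ∀ i, Measure (Ω i)) [∀ i, IsProbabilityMeasure (μ i)] {A B : Set (∀ i, Ω i)}

/-- Harris' inequality, from the FKG inequality for the log-modular weights of a finite product. -/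
theorem infinitePi_real_mul_le_inter_of_isLowerSet {J : Finset ι}
    (hA : DeterminedBy A (J : Set ι)) (hB : DeterminedBy B (J : Set ι))
    (hAl : IsLowerSet A) (hBl : IsLowerSet B) :
    (Measure.infinitePi μ).real A * (Measure.infinitePi μ).real B ≤
      (Measure.infinitePi μ).real (A ∩ B) := by
  classical
  have (i : ι) : Fintype (Ω i) := Fintype.ofFinite _
  obtain ⟨ω₀⟩ : Nonempty (∀ i, Ω i) := (Measure.infinitePi μ).nonempty_of_neZero
  let w : (∀ i : J, Ω i)ᵒᵈ → ℝ := fun g => ∏ i : J, (μ i).real {OrderDual.ofDual g i}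
  let ind (C : Set (∀ i, Ω i)) : (∀ i : J, Ω i)ᵒᵈ → ℝ :=
    fun g => if Function.updateFinset ω₀ J (OrderDual.ofDual g) ∈ C then 1 else 0
  have hsum {C : Set (∀ i, Ω i)} (hC : DeterminedBy C (J : Set ι)) :
      (Measure.infinitePi μ).real C = ∑ g, w g * ind C g :=
    infinitePi_real_eq_sum_updateFinset μ hC ω₀
  have hind {C : Set (∀ i, Ω i)} (hC : IsLowerSet C) : Monotone (ind C) := fun g g' hgg' => by
    have hle : Function.updateFinset ω₀ J (OrderDual.ofDual g') ≤
        Function.updateFinset ω₀ J (OrderDual.ofDual g) := updateFinset_mono ω₀ hgg'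
    simp only [ind]
    split_ifs with h h'
    · exact le_rfl
    · exact absurd (hC hle h) h'
    · exact zero_le_one
    · exact le_rfl
  have hind0 (C : Set (∀ i, Ω i)) : 0 ≤ ind C := fun g => by
    simp only [ind]; split_ifs <;> simp
  have hmod (a b : (∀ i : J, Ω i)ᵒᵈ) : w a * w b ≤ w (a ⊓ b) * w (a ⊔ b) := by
    refine le_of_eq ?_
    simp only [w, ← Finset.prod_mul_distrib, ofDual_inf, ofDual_sup]
    refine Finset.prod_congr rfl fun i _ => ?_
    rcases le_total (OrderDual.ofDual a i) (OrderDual.ofDual b i) with h | h <;>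
      simp [h, mul_comm]
  have huniv : ∑ g, w g = 1 := by
    simpa [ind] using (hsum (C := Set.univ) fun _ _ _ => rfl).symm
  have hfkg := fkg (ind A) (ind B) w (fun g => Finset.prod_nonneg fun _ _ => measureReal_nonneg)
    (hind0 A) (hind0 B) (hind hAl) (hind hBl) hmod
  rw [huniv, one_mul, ← hsum hA, ← hsum hB] at hfkg
  refine hfkg.trans_eq ?_
  rw [hsum (hA.inter hB)]
  refine Finset.sum_congr rfl fun g _ => ?_
  by_cases hgA : Function.updateFinset ω₀ J (OrderDual.ofDual g) ∈ A <;> simp [ind, hgA]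

theorem prod_infinitePi_real_le_biInter_of_isLowerSet {κ : Type*} {J : Finset ι} (T : Finset κ)
    {A : κ → Set (∀ i, Ω i)} (hA : ∀ k, DeterminedBy (A k) (J : Set ι))
    (hAl : ∀ k, IsLowerSet (A k)) :
    ∏ k ∈ T, (Measure.infinitePi μ).real (A k) ≤ (Measure.infinitePi μ).real (⋂ k ∈ T, A k) := by
  classical
  induction T using Finset.induction_on with
  | empty => simp
  | insert k T hk ih =>
    rw [Finset.prod_insert hk, Finset.set_biInter_insert]
    exact (mul_le_mul_of_nonneg_left ih measureReal_nonneg).trans <|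
      infinitePi_real_mul_le_inter_of_isLowerSet μ (hA k) (.iInter fun j => .iInter fun _ => hA j)
        (hAl k) (isLowerSet_iInter₂ fun j _ => hAl j)

end Harris

section Comparison

variable {Ω α : Type*} [MeasurableSpace Ω] [Countable α] {μ : Measure Ω} {E : α → Set Ω}

lemma lintegral_le_lintegral_of_forall_setLIntegral_le (hE : ∀ a, MeasurableSet (E a))
    (hEd : Pairwise (Function.onFun Disjoint E)) (hcover : ⋃ a, E a = Set.univ) {F G : Ω → ENNReal}
    (h : ∀ a, ∫⁻ ω in E a, F ω ∂μ ≤ ∫⁻ ω in E a, G ω ∂μ) : ∫⁻ ω, F ω ∂μ ≤ ∫⁻ ω, G ω ∂μ := by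
  rw [← setLIntegral_univ F, ← setLIntegral_univ G, ← hcover, lintegral_iUnion hE hEd,
    lintegral_iUnion hE hEd]
  exact ENNReal.tsum_le_tsum h

lemma measureReal_le_mul_of_forall_inter_le [IsFiniteMeasure μ] (hE : ∀ a, MeasurableSet (E a))
    (hEd : Pairwise (Function.onFun Disjoint E)) {W U : Set Ω} (hW : W ⊆ ⋃ a, E a)
    (hU : MeasurableSet U) {c : ℝ} (hc : 0 ≤ c)
    (h : ∀ a, μ.real (E a ∩ W) ≤ c * μ.real (E a ∩ U)) : μ.real W ≤ c * μ.real U := by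
  have hENNReal (a : α) : μ (E a ∩ W) ≤ ENNReal.ofReal c * μ (E a ∩ U) := by
    rw [← ofReal_measureReal, ← ofReal_measureReal, ← ENNReal.ofReal_mul hc]
    exact ENNReal.ofReal_le_ofReal (h a)
  have hmeasure : μ W ≤ ENNReal.ofReal c * μ U :=
    calc μ W = μ (⋃ a, E a ∩ W) := by rw [← Set.iUnion_inter, Set.inter_eq_right.2 hW]
      _ ≤ ∑' a, ENNReal.ofReal c * μ (E a ∩ U) :=
        (measure_iUnion_le _).trans (ENNReal.tsum_le_tsum hENNReal)
      _ = ENNReal.ofReal c * μ (⋃ a, E a ∩ U) := by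
        rw [ENNReal.tsum_mul_left, measure_iUnion (fun a b hab => (hEd hab).mono
          Set.inter_subset_left Set.inter_subset_left) fun a => (hE a).inter hU]
      _ ≤ ENNReal.ofReal c * μ U := by
        gcongr
        exact Set.iUnion_subset fun a => Set.inter_subset_right
  rw [measureReal_def, measureReal_def, ← ENNReal.toReal_ofReal hc, ← ENNReal.toReal_mul]
  exact ENNReal.toReal_mono (by finiteness) hmeasure

lemma measureReal_iUnion_le_of_hasSum [IsFiniteMeasure μ] {f : α → ℝ} {b : ℝ} (hf : HasSum f b)
    (h : ∀ a, μ.real (E a) ≤ f a) : μ.real (⋃ a, E a) ≤ b := by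
  have hf0 (a : α) : 0 ≤ f a := measureReal_nonneg.trans (h a)
  refine ENNReal.toReal_le_of_le_ofReal (hf.nonneg hf0) ?_
  calc μ (⋃ a, E a) ≤ ∑' a, μ (E a) := measure_iUnion_le E
    _ ≤ ∑' a, ENNReal.ofReal (f a) := ENNReal.tsum_le_tsum fun a =>
        (ENNReal.le_ofReal_iff_toReal_le (measure_ne_top _ _) (hf0 a)).2 (h a)
    _ = ENNReal.ofReal b := by rw [← ENNReal.ofReal_tsum_of_nonneg hf0 hf.summable, hf.tsum_eq]

end Comparison

section Bernoulli

open ProbabilityTheory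

variable {ι : Type*} (r : ι → unitInterval)

/-- The law of independent bits, the `i`-th of which is `true` with probability `r i`. -/
noncomputable abbrev bernoulliProduct : Measure (ι → Bool) :=
  Measure.infinitePi fun i => bernoulliMeasure true false (r i)

lemma bernoulliMeasure_bool_singleton (p : unitInterval) (b : Bool) :
    bernoulliMeasure true false p {b} = ENNReal.ofReal (if b then (p : ℝ) else 1 - p) := by
  rw [← ofReal_measureReal]
  cases b
  · rw [bernoulliMeasure_real_apply_of_notMem_of_mem _ (measurableSet_singleton _) (by simp)
      (by simp)]
    simp
  · rw [bernoulliMeasure_real_apply_of_mem_of_notMem _ (measurableSet_singleton _) (by simp)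
      (by simp)]
    simp

lemma bernoulliProduct_cylinder (s : Finset ι) (f : ι → Bool) :
    bernoulliProduct r {ω | ∀ i ∈ s, ω i = f i} =
      ENNReal.ofReal (∏ i ∈ s, if f i then (r i : ℝ) else 1 - r i) := by
  rw [infinitePi_cylinder, ENNReal.ofReal_prod_of_nonneg fun i _ => by
    split_ifs
    exacts [(r i).2.1, sub_nonneg.2 (r i).2.2]]
  simp only [bernoulliMeasure_bool_singleton]

lemma bernoulliProduct_real_forall_true (s : Finset ι) :
    (bernoulliProduct r).real {ω | ∀ i ∈ s, ω i = true} = ∏ i ∈ s, (r i : ℝ) := by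
  rw [measureReal_def, bernoulliProduct_cylinder r s fun _ => true, ENNReal.toReal_ofReal] <;>
    simp [Finset.prod_nonneg, (r _).2.1]

lemma bernoulliProduct_real_forall_false (s : Finset ι) :
    (bernoulliProduct r).real {ω | ∀ i ∈ s, ω i = false} = ∏ i ∈ s, (1 - r i : ℝ) := by
  rw [measureReal_def, bernoulliProduct_cylinder r s fun _ => false, ENNReal.toReal_ofReal] <;>
    simp [Finset.prod_nonneg, (r _).2.2]

lemma determinedBy_forall_mem_eq (s : Finset ι) (b : Bool) :
    DeterminedBy {ω : ι → Bool | ∀ i ∈ s, ω i = b} (s : Set ι) :=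
  determinedBy_of_imp fun _ _ h hω i hi => (h i hi).symm.trans (hω i hi)

lemma bernoulliProduct_real_forall_not_forall_true_le {κ : Type*} {I : Finset κ} {Q : κ → Finset ι}
    {a : ℝ} (ha : a ∈ Set.Icc 0 1) (hr : ∀ u ∈ I, ∀ i ∈ Q u, a ≤ r i) {M : ℕ}
    (hM : ∀ u ∈ I, (Q u).card ≤ M) (hQ : (I : Set κ).PairwiseDisjoint Q) :
    (bernoulliProduct r).real {ω | ∀ u ∈ I, ¬ ∀ i ∈ Q u, ω i = true} ≤ (1 - a ^ M) ^ I.card := by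
  have hinter : {ω : ι → Bool | ∀ u ∈ I, ¬ ∀ i ∈ Q u, ω i = true} =
      ⋂ u ∈ I, {ω | ∀ i ∈ Q u, ω i = true}ᶜ := by
    ext ω; simp
  have hmeas (u : κ) : MeasurableSet {ω : ι → Bool | ∀ i ∈ Q u, ω i = true} :=
    (determinedBy_forall_mem_eq (Q u) true).measurableSet (Q u).finite_toSet
  rw [hinter, infinitePi_real_biInter _ I (Q := fun u => (Q u : Set ι)) (fun u _ => (hmeas u).compl)
    (fun u _ => (determinedBy_forall_mem_eq (Q u) true).compl)
    fun u hu v hv huv => Finset.disjoint_coe.2 (hQ hu hv huv)]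
  refine (Finset.prod_le_prod (g := fun _ => 1 - a ^ M) (fun _ _ => measureReal_nonneg)
    fun u hu => ?_).trans_eq (Finset.prod_const _)
  rw [probReal_compl_eq_one_sub (hmeas u), bernoulliProduct_real_forall_true]
  gcongr
  calc a ^ M ≤ a ^ (Q u).card := pow_le_pow_of_le_one ha.1 ha.2 (hM u hu)
    _ = ∏ _i ∈ Q u, a := by simp
    _ ≤ ∏ i ∈ Q u, (r i : ℝ) := Finset.prod_le_prod (fun _ _ => ha.1) (hr u hu)

end Bernoulli

section ReflTransGen

open Relation

variable {α : Type*} {R : α → α → Prop} {S : Set α} {a z : α}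

lemma exists_exit_of_reflTransGen (h : ReflTransGen R a z) (ha : a ∈ S) (hz : z ∉ S) :
    ∃ u v, ReflTransGen (fun x y => x ∈ S ∧ y ∈ S ∧ R x y) a u ∧ u ∈ S ∧ v ∉ S ∧ R u v := by
  have hinitial : ReflTransGen (fun x y => x ∈ S ∧ y ∈ S ∧ R x y) a z ∧ z ∈ S ∨
      ∃ u v, ReflTransGen (fun x y => x ∈ S ∧ y ∈ S ∧ R x y) a u ∧ u ∈ S ∧ v ∉ S ∧ R u v := by
    clear hz
    induction h with
    | refl => exact Or.inl ⟨.refl, ha⟩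
    | @tail b c _ hbc ih =>
      rcases ih with ⟨hab, hb⟩ | hexit
      · by_cases hc : c ∈ S
        · exact Or.inl ⟨hab.tail ⟨hb, hc, hbc⟩, hc⟩
        · exact Or.inr ⟨b, c, hab, hb, hc, hbc⟩
      · exact Or.inr hexit
  exact hinitial.resolve_left fun h => hz h.2

lemma exists_last_exit_of_reflTransGen (h : ReflTransGen R a z) (ha : a ∈ S) (hz : z ∉ S) :
    ∃ u v, u ∈ S ∧ v ∉ S ∧ R u v ∧ ReflTransGen (fun x y => x ∉ S ∧ y ∉ S ∧ R x y) v z := by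
  induction h with
  | refl => exact absurd ha hz
  | @tail b c _ hbc ih =>
    by_cases hb : b ∈ S
    · exact ⟨b, c, hb, hz, hbc, .refl⟩
    · obtain ⟨u, v, hu, hv, huv, hvb⟩ := ih hb
      exact ⟨u, v, hu, hv, huv, hvb.tail ⟨hb, hz, hbc⟩⟩

variable {Ω V : Type*} [MeasurableSpace Ω] [Countable V]

lemma measurableSet_reflTransGen {rel : Ω → V → V → Prop}
    (h : ∀ u v, MeasurableSet {ω | rel ω u v}) (a b : V) :
    MeasurableSet {ω | ReflTransGen (rel ω) a b} := by
  let reach : ℕ → V → Set Ω := fun n => Nat.rec (fun b => {_ω | a = b})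
    (fun _ reach b => ⋃ c, reach c ∩ {ω | rel ω c b}) n
  have hreach (n : ℕ) : ∀ b, MeasurableSet (reach n b) := by
    induction n with
    | zero => exact fun b => .const _
    | succ n ih => exact fun b => .iUnion fun c => (ih c).inter (h c b)
  suffices {ω | ReflTransGen (rel ω) a b} = ⋃ n, reach n b by
    rw [this]
    exact .iUnion fun n => hreach n b
  ext ω
  rw [Set.mem_iUnion]
  constructor
  · intro hab
    induction hab with
    | refl => exact ⟨0, rfl⟩
    | tail _ hcb ih =>
      obtain ⟨n, hn⟩ := ih
      exact ⟨n + 1, Set.mem_iUnion.2 ⟨_, hn, hcb⟩⟩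
  · rintro ⟨n, hn⟩
    induction n generalizing b with
    | zero => cases (show a = b from hn); exact .refl
    | succ n ih =>
      obtain ⟨c, hac, hcb⟩ := Set.mem_iUnion.1 hn
      exact (ih c hac).tail hcb

lemma measurableSet_infinite {s : Ω → Set V} (h : ∀ v, MeasurableSet {ω | v ∈ s ω}) :
    MeasurableSet {ω | (s ω).Infinite} := by
  have hinter : {ω | (s ω).Infinite} = ⋂ F : Finset V, ⋃ v : V, {_ω | v ∉ F} ∩ {ω | v ∈ s ω} := by
    ext ω
    simp only [Set.mem_ofPred_eq, Set.mem_iInter, Set.mem_iUnion, Set.mem_inter_iff]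
    refine ⟨fun hinf F => ?_, fun hall hfin => ?_⟩
    · obtain ⟨v, hv, hvF⟩ := hinf.exists_notMem_finset F
      exact ⟨v, hvF, hv⟩
    · obtain ⟨v, hvF, hv⟩ := hall hfin.toFinset
      exact hvF (hfin.mem_toFinset.2 hv)
  rw [hinter]
  exact .iInter fun F => .iUnion fun v => (MeasurableSet.const _).inter (h v)

end ReflTransGen

/-! ### Geometry of the lattice -/

section Lattice

variable {d : ℕ} {x y z : Vertex d}

lemma adj.symm (h : adj x y) : adj y x := by
  unfold adj at *
  rw [← h]
  exact Finset.sum_congr rfl fun i _ => by omega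

lemma adj.ne (h : adj x y) : x ≠ y := by
  rintro rfl
  simp [adj] at h

lemma adj.abs_sub_le_one (h : adj x y) (i : Fin d) : |x i - y i| ≤ 1 := by
  have hi : (x i - y i).natAbs ≤ 1 := h ▸ Finset.single_le_sum
    (f := fun i => (x i - y i).natAbs) (fun _ _ => Nat.zero_le _) (Finset.mem_univ i)
  rw [Int.abs_eq_natAbs]
  exact_mod_cast hi

lemma adj_update {i : Fin d} {a : ℤ} (h : (x i - a).natAbs = 1) :
    adj x (Function.update x i a) := by
  unfold adj
  rw [Finset.sum_eq_single_of_mem i (Finset.mem_univ i) fun j _ hj => by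
    simp [Function.update_of_ne hj]]
  simpa using h

/-- The edge joining two adjacent vertices. -/
def edge (x y : Vertex d) (h : adj x y) : Edge d := ⟨s(x, y), x, y, h, rfl⟩

lemma exists_eq_edge (e : Edge d) : ∃ x y, ∃ h : adj x y, e = edge x y h := by
  obtain ⟨e, x, y, h, rfl⟩ := e
  exact ⟨x, y, h, rfl⟩

instance : Countable (Edge d) := by
  have : Countable (Sym2 (Vertex d)) := Quotient.countable
  infer_instance

/-- The sup-norm ball of radius `r` around `x`; `cube (origin d) n` is `Λ_n`. -/
noncomputable def cube (x : Vertex d) (r : ℕ) : Finset (Vertex d) :=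
  Finset.Icc (fun i => x i - r) (fun i => x i + r)

lemma mem_cube {r : ℕ} : y ∈ cube x r ↔ ∀ i, |y i - x i| ≤ r := by
  simp only [cube, Finset.mem_Icc, Pi.le_def, ← forall_and]
  refine forall_congr' fun i => ?_
  rw [abs_le, neg_le_sub_iff_le_add, sub_le_iff_le_add, sub_le_iff_le_add', add_comm (y i)]

lemma card_cube (x : Vertex d) (r : ℕ) : (cube x r).card = (2 * r + 1) ^ d := by
  have hi (i : Fin d) : (x i + r + 1 - (x i - r)).toNat = 2 * r + 1 := by omega
  simp [cube, Pi.card_Icc, hi]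

lemma self_mem_cube (x : Vertex d) (r : ℕ) : x ∈ cube x r :=
  mem_cube.2 fun i => by simp

lemma mem_cube_add {r r' : ℕ} (hy : y ∈ cube x r) (hz : z ∈ cube y r') : z ∈ cube x (r + r') := by
  rw [mem_cube] at *
  intro i
  have := abs_sub_le (z i) (y i) (x i)
  push_cast
  linarith [hy i, hz i]

lemma mem_cube_comm {r : ℕ} : y ∈ cube x r ↔ x ∈ cube y r := by
  simp only [mem_cube, abs_sub_comm]

lemma cube_subset_cube {r r' : ℕ} (h : r ≤ r') : cube x r ⊆ cube x r' := fun y hy =>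
  mem_cube.2 fun i => (mem_cube.1 hy i).trans (by exact_mod_cast h)

lemma adj.mem_cube (h : adj x y) : y ∈ cube x 1 :=
  Perc.mem_cube.2 fun i => by simpa using h.symm.abs_sub_le_one i

lemma reflTransGen_adj_cube {r : ℕ} (hz : z ∈ cube x r) :
    Relation.ReflTransGen (fun u v => u ∈ cube x r ∧ v ∈ cube x r ∧ adj u v) x z := by
  induction hN : ∑ i, (z i - x i).natAbs using Nat.strong_induction_on generalizing z with
  | _ N ih =>
    rcases eq_or_ne z x with rfl | hzx
    · exact .refl
    obtain ⟨i, hi⟩ := Function.ne_iff.1 hzx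
    obtain ⟨a, ha, hlt⟩ : ∃ a : ℤ, (z i - a).natAbs = 1 ∧ (a - x i).natAbs < (z i - x i).natAbs :=
      ⟨if z i < x i then z i + 1 else z i - 1, by split_ifs <;> omega, by split_ifs <;> omega⟩
    have hcloser (j : Fin d) : (Function.update z i a j - x j).natAbs ≤ (z j - x j).natAbs := by
      rcases eq_or_ne j i with rfl | hj
      · simpa using hlt.le
      · rw [Function.update_of_ne hj]
    have hmem : Function.update z i a ∈ cube x r := mem_cube.2 fun j => by
      have hj := mem_cube.1 hz j
      rw [Int.abs_eq_natAbs] at *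
      exact (Int.ofNat_le.2 (hcloser j)).trans hj
    have hsum : ∑ j, (Function.update z i a j - x j).natAbs < N :=
      hN ▸ Finset.sum_lt_sum (fun j _ => hcloser j) ⟨i, Finset.mem_univ i, by simpa using hlt⟩
    exact (ih _ hsum hmem rfl).tail ⟨hmem, hz, (adj_update ha).symm⟩

lemma exists_separated_subset (r : ℕ) (X : Finset (Vertex d)) :
    ∃ X' ⊆ X, (∀ u ∈ X', ∀ v ∈ X', u ≠ v → v ∉ cube u r) ∧ X.card ≤ X'.card * (2 * r + 1) ^ d := by
  classical
  induction X using Finset.strongInduction with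
  | _ X ih =>
    rcases X.eq_empty_or_nonempty with rfl | ⟨u, hu⟩
    · exact ⟨∅, by simp⟩
    have hlt : X \ cube u r ⊂ X := Finset.ssubset_iff_subset_ne.2
      ⟨Finset.sdiff_subset, fun h => (Finset.mem_sdiff.1 (h ▸ hu)).2 (self_mem_cube u r)⟩
    obtain ⟨X', hX', hsep, hcard⟩ := ih _ hlt
    have hout (v) (hv : v ∈ X') : v ∉ cube u r := (Finset.mem_sdiff.1 (hX' hv)).2
    refine ⟨insert u X', Finset.insert_subset hu (hX'.trans Finset.sdiff_subset), ?_, ?_⟩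
    · simp only [Finset.mem_insert, forall_eq_or_imp]
      exact ⟨⟨fun h => absurd rfl h, fun v hv _ => hout v hv⟩,
        fun v hv => ⟨fun _ h => hout v hv (mem_cube_comm.1 h), hsep v hv⟩⟩
    · rw [Finset.card_insert_of_notMem fun h => hout u h (self_mem_cube u r), add_mul, one_mul]
      have := Finset.card_le_card_sdiff_add_card (s := X) (t := cube u r)
      rw [card_cube] at this
      omega

/-- The edges with both endpoints in `S`. -/
def innerEdges (S : Set (Vertex d)) : Set (Edge d) := {e | ∀ v ∈ e.1, v ∈ S}

/-- The edges with at least one endpoint in `S`. -/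
def incidentEdges (S : Set (Vertex d)) : Set (Edge d) := {e | ∃ v ∈ e.1, v ∈ S}

lemma mem_innerEdges {S : Set (Vertex d)} {e : Edge d} (he : e.1 = s(x, y)) :
    e ∈ innerEdges S ↔ x ∈ S ∧ y ∈ S := by
  simp [innerEdges, he]

lemma mem_incidentEdges {S : Set (Vertex d)} {e : Edge d} (he : e.1 = s(x, y)) :
    e ∈ incidentEdges S ↔ x ∈ S ∨ y ∈ S := by
  simp [incidentEdges, he]

lemma innerEdges_mono {S T : Set (Vertex d)} (h : S ⊆ T) : innerEdges S ⊆ innerEdges T :=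
  fun _ he v hv => h (he v hv)

lemma incidentEdges_mono {S T : Set (Vertex d)} (h : S ⊆ T) : incidentEdges S ⊆ incidentEdges T :=
  fun _ ⟨v, hv, hS⟩ => ⟨v, hv, h hS⟩

lemma disjoint_innerEdges_of_subsingleton {S T : Set (Vertex d)} (h : (S ∩ T).Subsingleton) :
    Disjoint (innerEdges S) (innerEdges T) := by
  refine Set.disjoint_left.2 fun e heS heT => ?_
  obtain ⟨x, y, hxy, rfl⟩ := exists_eq_edge e
  obtain ⟨hxS, hyS⟩ := (mem_innerEdges rfl).1 heS
  obtain ⟨hxT, hyT⟩ := (mem_innerEdges rfl).1 heT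
  exact hxy.ne (h ⟨hxS, hxT⟩ ⟨hyS, hyT⟩)

lemma innerEdges_subset_incidentEdges (S : Set (Vertex d)) : innerEdges S ⊆ incidentEdges S := by
  intro e he
  obtain ⟨x, y, h, rfl⟩ := exists_eq_edge e
  exact (mem_incidentEdges rfl).2 (Or.inl ((mem_innerEdges rfl).1 he).1)

open Classical in
lemma image_val_incidentEdges_subset (S : Finset (Vertex d)) :
    Subtype.val '' incidentEdges (S : Set (Vertex d)) ⊆
      (S.biUnion fun v => (cube v 1).image fun u => s(v, u) : Finset (Sym2 (Vertex d))) := by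
  rintro _ ⟨e, he, rfl⟩
  obtain ⟨x, y, h, rfl⟩ := exists_eq_edge e
  simp only [Finset.coe_biUnion, Set.mem_iUnion, Finset.coe_image, Set.mem_image]
  rcases (mem_incidentEdges rfl).1 he with hx | hy
  · exact ⟨x, hx, y, h.mem_cube, rfl⟩
  · exact ⟨y, hy, x, h.symm.mem_cube, Sym2.eq_swap⟩

lemma incidentEdges_finite (S : Finset (Vertex d)) : (incidentEdges (S : Set (Vertex d))).Finite :=
  .of_finite_image ((Finset.finite_toSet _).subset (image_val_incidentEdges_subset S))
    Subtype.val_injective.injOn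

lemma innerEdges_finite (S : Finset (Vertex d)) : (innerEdges (S : Set (Vertex d))).Finite :=
  (incidentEdges_finite S).subset (innerEdges_subset_incidentEdges _)

/-- `innerEdges` as a finset. -/
noncomputable def innerEdgeFinset (S : Finset (Vertex d)) : Finset (Edge d) :=
  (innerEdges_finite S).toFinset

/-- `incidentEdges` as a finset. -/
noncomputable def incidentEdgeFinset (S : Finset (Vertex d)) : Finset (Edge d) :=
  (incidentEdges_finite S).toFinset

lemma coe_innerEdgeFinset (S : Finset (Vertex d)) :
    (innerEdgeFinset S : Set (Edge d)) = innerEdges (S : Set (Vertex d)) := by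
  simp [innerEdgeFinset]

lemma coe_incidentEdgeFinset (S : Finset (Vertex d)) :
    (incidentEdgeFinset S : Set (Edge d)) = incidentEdges (S : Set (Vertex d)) := by
  simp [incidentEdgeFinset]

lemma card_incidentEdgeFinset_le (S : Finset (Vertex d)) :
    (incidentEdgeFinset S).card ≤ S.card * 3 ^ d := by
  classical
  rw [← Set.ncard_coe_finset, coe_incidentEdgeFinset,
    ← Set.ncard_image_of_injective _ Subtype.val_injective]
  refine (Set.ncard_le_ncard (image_val_incidentEdges_subset S) (Finset.finite_toSet _)).trans ?_
  rw [Set.ncard_coe_finset]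
  exact Finset.card_biUnion_le_card_mul _ _ _ fun v _ =>
    Finset.card_image_le.trans_eq (card_cube v 1)

lemma card_innerEdgeFinset_le (S : Finset (Vertex d)) :
    (innerEdgeFinset S).card ≤ S.card * 3 ^ d := by
  refine (Finset.card_le_card ?_).trans (card_incidentEdgeFinset_le S)
  rw [← Finset.coe_subset, coe_innerEdgeFinset, coe_incidentEdgeFinset]
  exact innerEdges_subset_incidentEdges _

end Lattice

/-! ### Open paths -/

section Connectivity

variable {d : ℕ} {ω ω' : Config d} {x y z : Vertex d}

lemma step_iff_exists_edge : step ω x y ↔ ∃ e : Edge d, e.1 = s(x, y) ∧ ω e = true := by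
  refine ⟨fun ⟨h, ho⟩ => ⟨_, rfl, ho⟩, ?_⟩
  rintro ⟨⟨_, a, b, hab, rfl⟩, he, ho⟩
  obtain ⟨rfl, rfl⟩ | ⟨rfl, rfl⟩ := Sym2.eq_iff.1 he
  · exact ⟨hab, ho⟩
  · refine ⟨hab.symm, ?_⟩
    convert ho using 2
    exact Subtype.ext he.symm

lemma step.symm (h : step ω x y) : step ω y x := by
  rw [step_iff_exists_edge] at *
  rwa [Sym2.eq_swap]

lemma step.congr (h : ∀ e : Edge d, e.1 = s(x, y) → ω e = ω' e) (hs : step ω x y) :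
    step ω' x y := by
  obtain ⟨e, he, ho⟩ := step_iff_exists_edge.1 hs
  exact step_iff_exists_edge.2 ⟨e, he, h e he ▸ ho⟩

/-- `x` and `y` are joined by a path of open edges with both endpoints in `B`. -/
def ConnIn (ω : Config d) (B : Set (Vertex d)) : Vertex d → Vertex d → Prop :=
  Relation.ReflTransGen fun u v => u ∈ B ∧ v ∈ B ∧ step ω u v

lemma connIn_univ : ConnIn ω Set.univ x y ↔ Conn ω x y := by
  simp [ConnIn, Conn]

namespace ConnIn

variable {B B' : Set (Vertex d)}

lemma symm (h : ConnIn ω B x y) : ConnIn ω B y x := by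
  have : Std.Symm fun u v => u ∈ B ∧ v ∈ B ∧ step ω u v := ⟨fun u v h => ⟨h.2.1, h.1, h.2.2.symm⟩⟩
  exact Relation.ReflTransGen.stdSymm.symm _ _ h

lemma mono (h : ConnIn ω B x y) (hB : B ⊆ B') (hω : ∀ e ∈ innerEdges B, ω e = true → ω' e = true) :
    ConnIn ω' B' x y := by
  refine Relation.ReflTransGen.mono ?_ _ _ h
  rintro u v ⟨hu, hv, huv⟩
  obtain ⟨e, he, ho⟩ := step_iff_exists_edge.1 huv
  exact ⟨hB hu, hB hv,
    step_iff_exists_edge.2 ⟨e, he, hω e ((mem_innerEdges he).2 ⟨hu, hv⟩) ho⟩⟩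

lemma congr (h : ConnIn ω B x y) (hω : ∀ e ∈ innerEdges B, ω e = ω' e) : ConnIn ω' B x y :=
  h.mono le_rfl fun e he ho => hω e he ▸ ho

lemma conn (h : ConnIn ω B x y) : Conn ω x y :=
  Relation.ReflTransGen.mono (fun _ _ h => h.2.2) _ _ h

end ConnIn

lemma connIn_cube_of_open {r : ℕ} (h : ∀ e ∈ innerEdgeFinset (cube x r), ω e = true)
    (hz : z ∈ cube x r) : ConnIn ω (cube x r) x z := by
  refine Relation.ReflTransGen.mono ?_ _ _ (reflTransGen_adj_cube hz)
  rintro u v ⟨hu, hv, huv⟩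
  refine ⟨hu, hv, huv, h _ ?_⟩
  rw [← Finset.mem_coe, coe_innerEdgeFinset]
  exact (mem_innerEdges rfl).2 ⟨hu, hv⟩

lemma measurableSet_step (u v : Vertex d) : MeasurableSet {ω : Config d | step ω u v} := by
  simp only [step_iff_exists_edge, Set.ofPred_exists]
  exact .iUnion fun e => (MeasurableSet.const _).inter
    (measurableSet_eq_fun (measurable_pi_apply e) measurable_const)

lemma measurableSet_connIn (B : Set (Vertex d)) (x y : Vertex d) :
    MeasurableSet {ω : Config d | ConnIn ω B x y} :=
  measurableSet_reflTransGen (fun u v =>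
    (MeasurableSet.const _).inter ((MeasurableSet.const _).inter (measurableSet_step u v))) x y

lemma measurableSet_conn (x y : Vertex d) : MeasurableSet {ω : Config d | Conn ω x y} :=
  measurableSet_reflTransGen measurableSet_step x y

lemma measurableSet_cluster_infinite (x : Vertex d) :
    MeasurableSet {ω : Config d | (cluster ω x).Infinite} :=
  measurableSet_infinite fun v => measurableSet_conn x v

end Connectivity

section Automorphisms

variable {d : ℕ}

/-- The automorphisms of the nearest-neighbour graph of `ℤ^d`. -/
abbrev LatticeAut (d : ℕ) := (@adj d) ≃r (@adj d)

namespace LatticeAut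

/-- The action of a lattice automorphism on edges. -/
def mapEdge (φ : LatticeAut d) (e : Edge d) : Edge d :=
  ⟨e.1.map φ, by
    obtain ⟨e, x, y, hxy, rfl⟩ := e
    exact ⟨φ x, φ y, φ.map_rel_iff.2 hxy, rfl⟩⟩

lemma mapEdge_injective (φ : LatticeAut d) : Function.Injective φ.mapEdge := fun _ _ h =>
  Subtype.ext (Sym2.map.injective φ.injective (congrArg Subtype.val h))

/-- The configuration `ω` seen through the automorphism `φ`. -/
def pullback (φ : LatticeAut d) (ω : Config d) : Config d := fun e => ω (φ.mapEdge e)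

lemma step_pullback {φ : LatticeAut d} {ω : Config d} {x y : Vertex d} :
    step (φ.pullback ω) x y ↔ step ω (φ x) (φ y) :=
  ⟨fun ⟨h, ho⟩ => ⟨φ.map_rel_iff.2 h, ho⟩, fun ⟨h, ho⟩ => ⟨φ.map_rel_iff.1 h, ho⟩⟩

lemma connIn_pullback {φ : LatticeAut d} {ω : Config d} {B : Set (Vertex d)} {x y : Vertex d} :
    ConnIn (φ.pullback ω) (φ ⁻¹' B) x y ↔ ConnIn ω B (φ x) (φ y) := by
  constructor <;> intro h
  · exact Relation.ReflTransGen.lift φ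
      (fun _ _ ⟨ha, hb, hab⟩ => ⟨ha, hb, step_pullback.1 hab⟩) _ _ h
  · have hlift := Relation.ReflTransGen.lift φ.symm
      (p := fun u v => u ∈ φ ⁻¹' B ∧ v ∈ φ ⁻¹' B ∧ step (φ.pullback ω) u v)
      (fun a b ⟨ha, hb, hab⟩ => ⟨by simpa using ha, by simpa using hb,
        step_pullback.2 (by simpa using hab)⟩) _ _ h
    simpa only [ConnIn, Function.onFun, RelIso.symm_apply_apply] using hlift

lemma conn_pullback {φ : LatticeAut d} {ω : Config d} {x y : Vertex d} :
    Conn (φ.pullback ω) x y ↔ Conn ω (φ x) (φ y) := by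
  rw [← connIn_univ, ← connIn_univ, ← connIn_pullback, Set.preimage_univ]

end LatticeAut

/-- The lattice automorphism `y ↦ x₀ + (s i * y (π i))ᵢ`. -/
def affineAut (x₀ : Vertex d) (π : Equiv.Perm (Fin d)) (s : Fin d → ℤˣ) : LatticeAut d where
  toFun y := fun i => x₀ i + (s i : ℤ) * y (π i)
  invFun z := fun j => (s (π.symm j) : ℤ) * (z (π.symm j) - x₀ (π.symm j))
  left_inv y := by
    funext j
    rcases Int.units_eq_one_or (s (π.symm j)) with h | h <;> simp [h]
  right_inv z := by
    funext j
    rcases Int.units_eq_one_or (s j) with h | h <;> simp [h]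
  map_rel_iff' := fun {x y} => by
    have hi (i : Fin d) : (x₀ i + (s i : ℤ) * x (π i) - (x₀ i + (s i : ℤ) * y (π i))).natAbs =
        (x (π i) - y (π i)).natAbs := by
      rw [add_sub_add_left_eq_sub, ← mul_sub, Int.natAbs_mul, Int.units_natAbs, one_mul]
    simp only [adj, Equiv.coe_fn_mk, hi, Equiv.sum_comp π fun i => (x i - y i).natAbs]

variable {x₀ : Vertex d} {π : Equiv.Perm (Fin d)} {s : Fin d → ℤˣ}

lemma affineAut_apply (y : Vertex d) (i : Fin d) :
    affineAut x₀ π s y i = x₀ i + (s i : ℤ) * y (π i) := rfl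

lemma abs_affineAut_sub (y z : Vertex d) (i : Fin d) :
    |affineAut x₀ π s y i - affineAut x₀ π s z i| = |y (π i) - z (π i)| := by
  rw [affineAut_apply, affineAut_apply, add_sub_add_left_eq_sub, ← mul_sub, abs_mul,
    Int.isUnit_iff_abs_eq.1 (s i).isUnit, one_mul]

lemma affineAut_mem_cube {y z : Vertex d} {r : ℕ} :
    affineAut x₀ π s z ∈ cube (affineAut x₀ π s y) r ↔ z ∈ cube y r := by
  simp only [mem_cube, abs_affineAut_sub]
  exact ⟨fun h i => by simpa using h (π.symm i), fun h i => h _⟩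

end Automorphisms

/-! ### Infinite clusters and exit sites -/

section InfiniteCluster

variable {d : ℕ}

lemma determinedBy_exists_infinite_cluster (J : Finset (Edge d)) :
    DeterminedBy {ω : Config d | ∃ x, (cluster ω x).Infinite} (J : Set (Edge d))ᶜ := by
  refine determinedBy_of_imp ?_
  rintro ω ω' hω ⟨x, hx⟩
  let U : Set (Vertex d) := insert x (⋃ e ∈ J, {v | v ∈ e.1})
  have hU : U.Finite := by
    refine .insert _ (.biUnion J.finite_toSet fun e _ => ?_)
    obtain ⟨a, b, h, rfl⟩ := exists_eq_edge e
    exact (Set.toFinite {a, b}).subset fun v hv => by simpa [edge] using hv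
  have hcluster : cluster ω x ⊆ ⋃ u ∈ U, cluster ω' u := by
    intro y hy
    change Conn ω x y at hy
    induction hy with
    | refl => exact Set.mem_biUnion (Set.mem_insert _ _) .refl
    | @tail b c _ hbc ih =>
      obtain ⟨e, he, ho⟩ := step_iff_exists_edge.1 hbc
      by_cases heJ : e ∈ J
      · have hc : c ∈ U := Set.mem_insert_of_mem _ (Set.mem_biUnion heJ (by simp [he]))
        exact Set.mem_biUnion hc .refl
      · obtain ⟨u, hu, hub⟩ := Set.mem_iUnion₂.1 ih
        exact Set.mem_biUnion hu (.tail hub (step_iff_exists_edge.2 ⟨e, he, hω e heJ ▸ ho⟩))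
  by_contra! hfin
  simp only [Set.mem_ofPred_eq, not_exists, Set.not_infinite] at hfin
  exact hx ((hU.biUnion fun u _ => hfin u).subset hcluster)

/-- Bernoulli bond percolation on `ℤ^d` with parameter `q`. -/
noncomputable abbrev bernoulliPercolation (d : ℕ) (q : unitInterval) : Measure (Config d) :=
  bernoulliProduct fun _ : Edge d => q

/-- The event `{Λ_m ↔ ∞}`. -/
def CubeToInfinity (d m : ℕ) : Set (Config d) :=
  {ω | ∃ x ∈ cube (origin d) m, (cluster ω x).Infinite}

lemma cubeToInfinity_eq_biUnion (m : ℕ) :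
    CubeToInfinity d m = ⋃ x ∈ cube (origin d) m, {ω | (cluster ω x).Infinite} := by
  ext; simp [CubeToInfinity]

lemma measurableSet_cubeToInfinity (m : ℕ) : MeasurableSet (CubeToInfinity d m) := by
  rw [cubeToInfinity_eq_biUnion]
  exact Finset.measurableSet_biUnion _ fun x _ => measurableSet_cluster_infinite x

lemma monotone_cubeToInfinity : Monotone (CubeToInfinity d) :=
  fun _ _ hab _ ⟨x, hx, hinf⟩ => ⟨x, cube_subset_cube hab hx, hinf⟩

lemma exists_mem_cube_origin (x : Vertex d) : ∃ m, x ∈ cube (origin d) m := by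
  refine ⟨∑ i, (x i).natAbs, mem_cube.2 fun i => ?_⟩
  simp only [origin, sub_zero, Int.abs_eq_natAbs]
  exact_mod_cast Finset.single_le_sum (f := fun i => (x i).natAbs) (fun _ _ => Nat.zero_le _)
    (Finset.mem_univ i)

lemma iUnion_cubeToInfinity : ⋃ m, CubeToInfinity d m = {ω | ∃ x, (cluster ω x).Infinite} := by
  ext ω
  simp only [CubeToInfinity, Set.mem_iUnion, Set.mem_ofPred_eq]
  refine ⟨fun ⟨_, x, _, hx⟩ => ⟨x, hx⟩, fun ⟨x, hx⟩ => ?_⟩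
  obtain ⟨m, hm⟩ := exists_mem_cube_origin x
  exact ⟨m, x, hm, hx⟩

variable {q : unitInterval}

lemma bernoulliPercolation_exists_infinite_cluster
    (h0 : bernoulliPercolation d q (ZeroToInfinity d) ≠ 0) :
    bernoulliPercolation d q {ω | ∃ x, (cluster ω x).Infinite} = 1 := by
  refine infinitePi_eq_one_of_forall_determinedBy_compl _ ?_ determinedBy_exists_infinite_cluster ?_
  · rw [← iUnion_cubeToInfinity]
    exact .iUnion measurableSet_cubeToInfinity
  · have hsub : ZeroToInfinity d ⊆ {ω | ∃ x, (cluster ω x).Infinite} := fun _ h => ⟨origin d, h⟩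
    exact fun h => h0 (measure_mono_null hsub h)

lemma tendsto_bernoulliPercolation_cubeToInfinity
    (h0 : bernoulliPercolation d q (ZeroToInfinity d) ≠ 0) :
    Filter.Tendsto (fun m => (bernoulliPercolation d q).real (CubeToInfinity d m))
      Filter.atTop (nhds 1) := by
  have h := tendsto_measure_iUnion_atTop (μ := bernoulliPercolation d q)
    (monotone_cubeToInfinity (d := d))
  rw [iUnion_cubeToInfinity, bernoulliPercolation_exists_infinite_cluster h0] at h
  exact (ENNReal.tendsto_toReal ENNReal.one_ne_top).comp h

end InfiniteCluster

section ExitSites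

variable {d m n : ℕ} {ω ω' : Config d} {u : Vertex d}

open Classical in
/-- The vertices of `∂Λ_n` joined to `Λ_m` inside `Λ_n`. -/
noncomputable def exitSites (m n : ℕ) (ω : Config d) : Finset (Vertex d) :=
  (cube (origin d) n).filter fun u => (∃ i, |u i| = n) ∧
    ∃ a ∈ cube (origin d) m, ConnIn ω (cube (origin d) n) a u

lemma mem_exitSites : u ∈ exitSites m n ω ↔ u ∈ cube (origin d) n ∧ (∃ i, |u i| = n) ∧
    ∃ a ∈ cube (origin d) m, ConnIn ω (cube (origin d) n) a u := by
  simp only [exitSites, Finset.mem_filter]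

lemma adj.exists_abs_eq {v : Vertex d} (h : adj u v) (hu : u ∈ cube (origin d) n)
    (hv : v ∉ cube (origin d) n) : ∃ i, |u i| = n := by
  rw [Perc.mem_cube] at *
  push Not at hv
  obtain ⟨i, hi⟩ := hv
  have hui := hu i
  have huv := h.abs_sub_le_one i
  simp only [origin, sub_zero, Int.abs_eq_natAbs] at *
  exact ⟨i, by omega⟩

lemma Conn.exists_mem_exitSites (hmn : m ≤ n) {a z : Vertex d} (h : Conn ω a z)
    (ha : a ∈ cube (origin d) m) (hz : z ∉ cube (origin d) n) :
    ∃ u ∈ exitSites m n ω, ∃ v ∉ cube (origin d) n, step ω u v := by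
  obtain ⟨u, v, hau, hu, hv, huv⟩ := exists_exit_of_reflTransGen
    (S := (cube (origin d) n : Set (Vertex d))) h (cube_subset_cube hmn ha) hz
  exact ⟨u, mem_exitSites.2 ⟨hu, huv.1.exists_abs_eq hu hv, a, ha, hau⟩, v, hv, huv⟩

lemma exitSites_congr (h : ∀ e ∈ innerEdges (cube (origin d) n : Set (Vertex d)), ω e = ω' e) :
    exitSites m n ω = exitSites m n ω' := by
  ext u
  simp only [mem_exitSites]
  exact and_congr_right fun _ => and_congr_right fun _ => exists_congr fun a =>
    and_congr_right fun _ => ⟨fun hc => hc.congr h, fun hc => hc.congr fun e he => (h e he).symm⟩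

lemma determinedBy_exitSites (s : Set (Finset (Vertex d))) :
    DeterminedBy (exitSites m n ⁻¹' s) (innerEdges (cube (origin d) n : Set (Vertex d))) :=
  determinedBy_of_imp fun _ _ h hω => by rwa [Set.mem_preimage, ← exitSites_congr h]

lemma measurableSet_exitSites (s : Set (Finset (Vertex d))) :
    MeasurableSet (exitSites m n ⁻¹' s) :=
  (determinedBy_exitSites s).measurableSet (innerEdges_finite _)

lemma exists_step_of_exitSites_succ_nonempty (hmn : m ≤ n) (h : (exitSites m (n + 1) ω).Nonempty) :
    ∃ u ∈ exitSites m n ω, ∃ v ∉ cube (origin d) n, step ω u v := by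
  obtain ⟨z, hz⟩ := h
  obtain ⟨_, ⟨i, hi⟩, a, ha, haz⟩ := mem_exitSites.1 hz
  refine haz.conn.exists_mem_exitSites hmn ha fun hz' => ?_
  have := mem_cube.1 hz' i
  simp only [origin, sub_zero, hi] at this
  push_cast at this
  linarith

lemma exitSites_nonempty_antitone (hmn : m ≤ n) :
    {ω : Config d | (exitSites m (n + 1) ω).Nonempty} ⊆ {ω | (exitSites m n ω).Nonempty} := by
  intro ω hω
  obtain ⟨u, hu, _⟩ := exists_step_of_exitSites_succ_nonempty hmn hω
  exact ⟨u, hu⟩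

lemma cubeToInfinity_subset_exitSites_nonempty (hmn : m ≤ n) :
    CubeToInfinity d m ⊆ {ω | (exitSites m n ω).Nonempty} := by
  rintro ω ⟨x, hx, hinf⟩
  obtain ⟨z, hz, hzn⟩ := hinf.exists_notMem_finset (cube (origin d) n)
  obtain ⟨u, hu, _⟩ := Conn.exists_mem_exitSites hmn hz hx hzn
  exact ⟨u, hu⟩

lemma not_exitSites_succ_nonempty (hmn : m ≤ n) (hω : ∀ e ∈ incidentEdgeFinset (exitSites m n ω) \
      innerEdgeFinset (cube (origin d) n), ω e = false) :
    ¬(exitSites m (n + 1) ω).Nonempty := by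
  classical
  intro hne
  obtain ⟨u, hu, v, hv, huv⟩ := exists_step_of_exitSites_succ_nonempty hmn hne
  obtain ⟨e, he, ho⟩ := step_iff_exists_edge.1 huv
  suffices he : e ∈ incidentEdgeFinset (exitSites m n ω) \ innerEdgeFinset (cube (origin d) n) by
    simp [hω e he] at ho
  rw [Finset.mem_sdiff, ← Finset.mem_coe, coe_incidentEdgeFinset, mem_incidentEdges he,
    ← Finset.mem_coe, coe_innerEdgeFinset, mem_innerEdges he]
  exact ⟨Or.inl hu, fun h => hv h.2⟩

variable {q : unitInterval}

/- Closing the at most `t * 3 ^ d` edges through which the connection could leave `Λ_n` is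
independent of `exitSites m n`, so few exit sites make the connection likely to stop here. -/
lemma real_exitSites_card_le_of_nonempty (hq : (q : ℝ) < 1) (t : ℕ) (hmn : m ≤ n) :
    (bernoulliPercolation d q).real
        {ω | (exitSites m n ω).Nonempty ∧ (exitSites m n ω).card ≤ t} ≤
      ((1 - (q : ℝ)) ^ (t * 3 ^ d))⁻¹ *
        ((bernoulliPercolation d q).real {ω | (exitSites m n ω).Nonempty} -
          (bernoulliPercolation d q).real {ω | (exitSites m (n + 1) ω).Nonempty}) := by
  classical
  have hq0 : 0 < 1 - (q : ℝ) := sub_pos.2 hq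
  have hpow : 0 < (1 - (q : ℝ)) ^ (t * 3 ^ d) := pow_pos hq0 _
  have hmeas (k : ℕ) : MeasurableSet {ω : Config d | (exitSites m k ω).Nonempty} :=
    measurableSet_exitSites {X | X.Nonempty}
  rw [← measureReal_sdiff (exitSites_nonempty_antitone hmn) (hmeas (n + 1))]
  let E (X : {X : Finset (Vertex d) // X.Nonempty ∧ X.card ≤ t}) : Set (Config d) :=
    exitSites m n ⁻¹' {X.1}
  have hE : Pairwise (Function.onFun Disjoint E) := fun X Y hXY =>
    (Set.disjoint_singleton.2 (Subtype.coe_injective.ne hXY)).preimage _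
  refine measureReal_le_mul_of_forall_inter_le (fun X => measurableSet_exitSites _) hE
    (fun ω hω => Set.mem_iUnion.2 ⟨⟨_, hω⟩, rfl⟩) ((hmeas n).diff (hmeas (n + 1)))
    (by positivity) fun ⟨X, hX, hXt⟩ => ?_
  let Q : Finset (Edge d) := incidentEdgeFinset X \ innerEdgeFinset (cube (origin d) n)
  have hQcard : Q.card ≤ t * 3 ^ d := (Finset.card_le_card Finset.sdiff_subset).trans <|
    (card_incidentEdgeFinset_le X).trans (Nat.mul_le_mul_right _ hXt)
  have hQ : Disjoint (innerEdges (cube (origin d) n : Set (Vertex d))) (Q : Set (Edge d)) := by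
    rw [Finset.coe_sdiff, coe_innerEdgeFinset]
    exact disjoint_sdiff_self_right
  have hclosed := determinedBy_forall_mem_eq Q false
  have hsub : E ⟨X, hX, hXt⟩ ∩ {ω | ∀ e ∈ Q, ω e = false} ⊆ E ⟨X, hX, hXt⟩ ∩
      ({ω | (exitSites m n ω).Nonempty} \ {ω | (exitSites m (n + 1) ω).Nonempty}) := by
    rintro ω ⟨rfl, hω⟩
    exact ⟨rfl, hX, not_exitSites_succ_nonempty hmn hω⟩
  rw [inv_mul_eq_div, le_div_iff₀ hpow]
  calc _ ≤ (bernoulliPercolation d q).real (E ⟨X, hX, hXt⟩) * (1 - (q : ℝ)) ^ Q.card :=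
        mul_le_mul (measureReal_mono Set.inter_subset_left)
          (pow_le_pow_of_le_one hq0.le (by linarith [q.2.1]) hQcard) hpow.le measureReal_nonneg
    _ = (bernoulliPercolation d q).real (E ⟨X, hX, hXt⟩ ∩ {ω | ∀ e ∈ Q, ω e = false}) := by
        rw [infinitePi_real_inter _ (measurableSet_exitSites _)
          (hclosed.measurableSet Q.finite_toSet) (determinedBy_exitSites _) hclosed hQ,
          bernoulliProduct_real_forall_false, Finset.prod_const]
    _ ≤ _ := measureReal_mono hsub

lemma exists_real_exitSites_card_le (hq : (q : ℝ) < 1) (m t N : ℕ) {ε : ℝ} (hε : 0 < ε)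
    (hm : 1 - ε ≤ (bernoulliPercolation d q).real (CubeToInfinity d m)) :
    ∃ n, N ≤ n ∧ m ≤ n ∧
      (bernoulliPercolation d q).real {ω | (exitSites m n ω).card ≤ t} ≤ 2 * ε := by
  let a (k : ℕ) : ℝ := (bernoulliPercolation d q).real {ω | (exitSites m (m + k) ω).Nonempty}
  have ha : Antitone a := antitone_nat_of_succ_le fun k =>
    measureReal_mono (exitSites_nonempty_antitone (Nat.le_add_right m k))
  have hlim : Filter.Tendsto (fun k => a k - a (k + 1)) Filter.atTop (nhds 0) := by
    have := tendsto_atTop_ciInf ha ⟨0, by rintro _ ⟨k, rfl⟩; exact measureReal_nonneg⟩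
    simpa using this.sub (this.comp (Filter.tendsto_add_atTop_nat 1))
  have hq0 : 0 < 1 - (q : ℝ) := sub_pos.2 hq
  have hpow : 0 < (1 - (q : ℝ)) ^ (t * 3 ^ d) := pow_pos hq0 _
  obtain ⟨k, hk, hkN⟩ := ((hlim.eventually (gt_mem_nhds (mul_pos hpow hε))).and
    (Filter.eventually_ge_atTop N)).exists
  have hmk : m ≤ m + k := Nat.le_add_right m k
  refine ⟨m + k, by omega, hmk, ?_⟩
  have hsub : {ω : Config d | (exitSites m (m + k) ω).card ≤ t} ⊆ (CubeToInfinity d m)ᶜ ∪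
      {ω | (exitSites m (m + k) ω).Nonempty ∧ (exitSites m (m + k) ω).card ≤ t} := by
    intro ω hω
    by_cases h : ω ∈ CubeToInfinity d m
    · exact Or.inr ⟨cubeToInfinity_subset_exitSites_nonempty hmk h, hω⟩
    · exact Or.inl h
  have hunion := (measureReal_mono (μ := bernoulliPercolation d q) hsub).trans
    (measureReal_union_le _ _)
  rw [probReal_compl_eq_one_sub (measurableSet_cubeToInfinity m)] at hunion
  have hfew := (real_exitSites_card_le_of_nonempty hq t hmk).trans
    ((inv_mul_le_iff₀ hpow).2 hk.le)
  linarith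

end ExitSites

/-! ### Seeds -/

section Seeds

variable {d m n : ℕ} {ω ω' : Config d} {u v y : Vertex d} {i₀ : Fin d}

/-- The cube of radius `m` around `y` is internally connected, and `y` is joined to `Λ_m` inside
`Λ_{n + 2m + 1}`: a large cluster spawned by `Λ_m` that can serve as a new `Λ_m`. -/
structure IsSeed (m n : ℕ) (ω : Config d) (y : Vertex d) : Prop where
  connIn_cube : ∀ z ∈ cube y m, ConnIn ω (cube y m) y z
  exists_connIn : ∃ a ∈ cube (origin d) m, ConnIn ω (cube (origin d) (n + 2 * m + 1)) a y

/-- The centres of the cubes of radius `m` at distance one from a face of `Λ_n`. -/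
def InShell (m n : ℕ) (y : Vertex d) : Prop :=
  ∃ i, |y i| = n + m + 1 ∧ ∀ j, j ≠ i → |y j| ≤ n

/-- The part of the shell `InShell m n` in direction `i₀` with nonnegative coordinates. -/
def InFacet (i₀ : Fin d) (m n : ℕ) (y : Vertex d) : Prop :=
  y i₀ = n + m + 1 ∧ ∀ j, j ≠ i₀ → 0 ≤ y j ∧ y j ≤ n

/-- The cube of radius `m` around `y` lies outside `Λ_n` and touches it at `u`. -/
structure IsTouchingCube (m n : ℕ) (u y : Vertex d) : Prop where
  inShell : InShell m n y
  mem_cube : y ∈ cube u (m + 1)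
  disjoint : Disjoint (cube (origin d) n) (cube y m)
  exists_adj : ∃ v ∈ cube y m, adj u v

lemma exists_isTouchingCube (m : ℕ) (hu : u ∈ cube (origin d) n) (hi : ∃ i, |u i| = n) :
    ∃ y, IsTouchingCube m n u y := by
  obtain ⟨i, hi⟩ := hi
  obtain ⟨a, b, ha, hau, hbu, hba, hout⟩ : ∃ a b : ℤ, a.natAbs = n + m + 1 ∧
      (a - u i).natAbs = m + 1 ∧ (u i - b).natAbs = 1 ∧ (b - a).natAbs = m ∧
      ∀ c : ℤ, (c - a).natAbs ≤ m → n < c.natAbs := by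
    rcases (abs_eq (Int.natCast_nonneg n)).1 hi with h | h
    · exact ⟨n + m + 1, n + 1, by omega, by omega, by omega, by omega, fun c hc => by omega⟩
    · exact ⟨-(n + m + 1), -(n + 1), by omega, by omega, by omega, by omega, fun c hc => by omega⟩
  simp only [mem_cube, origin, sub_zero] at hu
  refine ⟨Function.update u i a, ⟨i, ?_, fun j hj => ?_⟩, mem_cube.2 fun j => ?_, ?_,
    Function.update u i b, mem_cube.2 fun j => ?_, adj_update hbu⟩
  · rw [Function.update_self, Int.abs_eq_natAbs, ha]
    push_cast
    rfl
  · rw [Function.update_of_ne hj]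
    exact hu j
  · rcases eq_or_ne j i with rfl | hj
    · rw [Function.update_self, Int.abs_eq_natAbs, hau]
    · rw [Function.update_of_ne hj, sub_self, abs_zero]
      positivity
  · refine Finset.disjoint_left.2 fun z hz hzy => ?_
    have hzi := mem_cube.1 hz i
    have hzyi := mem_cube.1 hzy i
    simp only [Function.update_self, origin, sub_zero, Int.abs_eq_natAbs, Nat.cast_le] at hzi hzyi
    exact (hout _ hzyi).not_ge hzi
  · rcases eq_or_ne j i with rfl | hj
    · rw [Function.update_self, Function.update_self, Int.abs_eq_natAbs, hba]
    · rw [Function.update_of_ne hj, Function.update_of_ne hj, sub_self, abs_zero]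
      positivity

namespace IsTouchingCube

lemma insert_subset (h : IsTouchingCube m n u y) : insert u (cube y m) ⊆ cube u (2 * m + 1) := by
  refine Finset.insert_subset (self_mem_cube _ _) fun z hz => ?_
  exact cube_subset_cube (by omega) (mem_cube_add h.mem_cube hz)

lemma disjoint_innerEdges (h : IsTouchingCube m n u y) :
    Disjoint (innerEdges (cube (origin d) n : Set (Vertex d)))
      (innerEdges (insert u (cube y m) : Finset (Vertex d))) := by
  refine disjoint_innerEdges_of_subsingleton fun a ha b hb => ?_
  suffices hu : ∀ a ∈ (cube (origin d) n : Set (Vertex d)) ∩ (insert u (cube y m) : Finset _),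
      a = u from (hu a ha).trans (hu b hb).symm
  rintro a ⟨ha, ha'⟩
  exact (Finset.mem_insert.1 ha').resolve_right (Finset.disjoint_left.1 h.disjoint ha)

lemma isSeed (h : IsTouchingCube m n u y) (hu : u ∈ exitSites m n ω)
    (ho : ∀ e ∈ innerEdgeFinset (insert u (cube y m)), ω e = true) : IsSeed m n ω y := by
  simp only [← Finset.mem_coe, coe_innerEdgeFinset] at ho
  have hcube : ∀ z ∈ cube y m, ConnIn ω (cube y m) y z := fun z hz =>
    connIn_cube_of_open (fun e he => ho e <| innerEdges_mono
      (Finset.coe_subset.2 (Finset.subset_insert _ _)) <| by rwa [← coe_innerEdgeFinset]) hz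
  obtain ⟨hun, _, a, ha, hau⟩ := mem_exitSites.1 hu
  obtain ⟨v, hv, huv⟩ := h.exists_adj
  have hsub : cube y m ⊆ cube (origin d) (n + 2 * m + 1) := fun z hz =>
    cube_subset_cube (by omega) (mem_cube_add (mem_cube_add hun h.mem_cube) hz)
  have hn : cube (origin d) n ⊆ cube (origin d) (n + 2 * m + 1) := cube_subset_cube (by omega)
  have huv' : step ω u v := ⟨huv, ho _ ((mem_innerEdges rfl).2 (by simp [hv]))⟩
  exact ⟨hcube, a, ha, ((hau.mono (Finset.coe_subset.2 hn) fun _ _ h => h).tail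
    ⟨hn hun, hsub hv, huv'⟩).trans
      ((hcube v hv).symm.mono (Finset.coe_subset.2 hsub) fun _ _ h => h)⟩

end IsTouchingCube

lemma exists_separated_isTouchingCube {X Z : Finset (Vertex d)} {k : ℕ}
    (hX : ∀ u ∈ X, ∃ y, IsTouchingCube m n u y) (hcard : (k + Z.card) * (8 * m + 5) ^ d < X.card) :
    ∃ (I : Finset (Vertex d)) (y : Vertex d → Vertex d), I ⊆ X ∧ k ≤ I.card ∧
      (∀ u ∈ I, IsTouchingCube m n u (y u) ∧ y u ∉ Z) ∧
      ∀ u ∈ I, ∀ v ∈ I, u ≠ v → v ∉ cube u (4 * m + 2) := by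
  classical
  choose! y hy using hX
  obtain ⟨X', hX', hsep, hXcard⟩ := exists_separated_subset (4 * m + 2) X
  have hinj : Set.InjOn y X' := by
    intro u hu v hv huv
    by_contra hne
    have hvu := mem_cube_comm.1 (hy v (hX' hv)).mem_cube
    rw [← huv] at hvu
    exact hsep u hu v hv hne
      (cube_subset_cube (by omega) (mem_cube_add (hy u (hX' hu)).mem_cube hvu))
  refine ⟨X'.filter fun u => y u ∉ Z, y, (Finset.filter_subset _ _).trans hX', ?_, fun u hu => ?_,
    fun u hu v hv => hsep u (Finset.mem_of_mem_filter u hu) v (Finset.mem_of_mem_filter v hv)⟩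
  · have hZ : (X'.filter fun u => y u ∈ Z).card ≤ Z.card :=
      Finset.card_le_card_of_injOn y (fun u hu => (Finset.mem_filter.1 hu).2)
        (hinj.mono (Finset.coe_subset.2 (Finset.filter_subset _ _)))
    have hsplit := Finset.card_filter_add_card_filter_not (s := X') fun u => y u ∈ Z
    have hlt : k + Z.card < X'.card := by
      rw [show 2 * (4 * m + 2) + 1 = 8 * m + 5 by ring] at hXcard
      exact lt_of_mul_lt_mul_right (hcard.trans_le hXcard) (Nat.zero_le _)
    omega
  · exact ⟨hy u (hX' (Finset.mem_of_mem_filter u hu)), (Finset.mem_filter.1 hu).2⟩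

variable {q : unitInterval}

lemma real_exitSites_eq_inter_forall_not_isSeed_le {X Z : Finset (Vertex d)} {k : ℕ}
    (hX : ∀ u ∈ X, ∃ y, IsTouchingCube m n u y) (hcard : (k + Z.card) * (8 * m + 5) ^ d < X.card) :
    (bernoulliPercolation d q).real
        (exitSites m n ⁻¹' {X} ∩ {ω | ∀ y, InShell m n y → y ∉ Z → ¬ IsSeed m n ω y}) ≤
      (1 - (q : ℝ) ^ (((2 * m + 1) ^ d + 1) * 3 ^ d)) ^ k *
        (bernoulliPercolation d q).real (exitSites m n ⁻¹' {X}) := by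
  classical
  obtain ⟨I, y, hIX, hkI, hy, hsep⟩ := exists_separated_isTouchingCube hX hcard
  let Q (u : Vertex d) : Finset (Edge d) := innerEdgeFinset (insert u (cube (y u) m))
  let V : Set (Config d) := {ω | ∀ u ∈ I, ¬ ∀ e ∈ Q u, ω e = true}
  have hQcard (u) (_ : u ∈ I) : (Q u).card ≤ ((2 * m + 1) ^ d + 1) * 3 ^ d := by
    refine (card_innerEdgeFinset_le _).trans (Nat.mul_le_mul_right _ ?_)
    exact (Finset.card_insert_le _ _).trans (by rw [card_cube])
  have hQdisj : (I : Set (Vertex d)).PairwiseDisjoint Q := fun u hu v hv huv => by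
    simp only [Function.onFun, Q, ← Finset.disjoint_coe, coe_innerEdgeFinset]
    refine disjoint_innerEdges_of_subsingleton fun a ⟨hau, hav⟩ => (hsep u hu v hv huv ?_).elim
    exact cube_subset_cube (by omega) (mem_cube_add ((hy u hu).1.insert_subset hau)
      (mem_cube_comm.1 ((hy v hv).1.insert_subset hav)))
  have hV : DeterminedBy V (I.biUnion Q : Finset (Edge d)) := determinedBy_of_imp
    fun ω ω' h hω u hu hopen => hω u hu fun e he =>
      (h e (Finset.mem_biUnion.2 ⟨u, hu, he⟩)).trans (hopen e he)
  have hdisj : Disjoint (innerEdges (cube (origin d) n : Set (Vertex d)))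
      (I.biUnion Q : Finset (Edge d)) := by
    simp only [Finset.coe_biUnion, Q, coe_innerEdgeFinset]
    exact Set.disjoint_iUnion₂_right.2 fun u hu => (hy u hu).1.disjoint_innerEdges
  have hsub : exitSites m n ⁻¹' {X} ∩ {ω | ∀ y, InShell m n y → y ∉ Z → ¬ IsSeed m n ω y} ⊆
      exitSites m n ⁻¹' {X} ∩ V := by
    rintro ω ⟨rfl, hω⟩
    exact ⟨rfl, fun u hu hopen =>
      hω (y u) (hy u hu).1.inShell (hy u hu).2 ((hy u hu).1.isSeed (hIX hu) hopen)⟩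
  have hq : (q : ℝ) ^ (((2 * m + 1) ^ d + 1) * 3 ^ d) ∈ unitInterval :=
    ⟨pow_nonneg q.2.1 _, pow_le_one₀ q.2.1 q.2.2⟩
  refine (measureReal_mono hsub).trans ?_
  rw [infinitePi_real_inter _ (measurableSet_exitSites _) (hV.measurableSet (Finset.finite_toSet _))
    (determinedBy_exitSites _) hV hdisj, mul_comm]
  refine mul_le_mul_of_nonneg_right (.trans ?_ <| pow_le_pow_of_le_one (sub_nonneg.2 hq.2)
    (sub_le_self _ hq.1) hkI) measureReal_nonneg
  exact bernoulliProduct_real_forall_not_forall_true_le _ q.2 (fun _ _ _ _ => le_rfl) hQcard hQdisj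

lemma real_forall_inShell_not_isSeed_le {Z : Finset (Vertex d)} {k t : ℕ}
    (ht : (k + Z.card) * (8 * m + 5) ^ d ≤ t) :
    (bernoulliPercolation d q).real {ω | ∀ y, InShell m n y → y ∉ Z → ¬ IsSeed m n ω y} ≤
      (bernoulliPercolation d q).real {ω | (exitSites m n ω).card ≤ t} +
        (1 - (q : ℝ) ^ (((2 * m + 1) ^ d + 1) * 3 ^ d)) ^ k := by
  set W : Set (Config d) := {ω | ∀ y, InShell m n y → y ∉ Z → ¬ IsSeed m n ω y}
  let E (X : {X : Finset (Vertex d) // t < X.card ∧ ∀ u ∈ X, ∃ y, IsTouchingCube m n u y}) :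
    Set (Config d) := exitSites m n ⁻¹' {X.1}
  have hE : Pairwise (Function.onFun Disjoint E) := fun X Y hXY =>
    (Set.disjoint_singleton.2 (Subtype.coe_injective.ne hXY)).preimage _
  have hq : (q : ℝ) ^ (((2 * m + 1) ^ d + 1) * 3 ^ d) ∈ unitInterval :=
    ⟨pow_nonneg q.2.1 _, pow_le_one₀ q.2.1 q.2.2⟩
  have htouch (ω : Config d) : ∀ u ∈ exitSites m n ω, ∃ y, IsTouchingCube m n u y := fun u hu =>
    exists_isTouchingCube m (mem_exitSites.1 hu).1 (mem_exitSites.1 hu).2.1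
  have hmany := measureReal_le_mul_of_forall_inter_le (μ := bernoulliPercolation d q) (E := E)
    (W := W \ {ω | (exitSites m n ω).card ≤ t}) (fun X => measurableSet_exitSites _) hE
    (fun ω hω => Set.mem_iUnion.2 ⟨⟨_, not_le.1 hω.2, htouch ω⟩, rfl⟩) MeasurableSet.univ
    (pow_nonneg (sub_nonneg.2 hq.2) k) fun ⟨X, hXt, hX⟩ => by
      rw [Set.inter_univ]
      exact (measureReal_mono (Set.inter_subset_inter_right _ Set.sdiff_subset)).trans
        (real_exitSites_eq_inter_forall_not_isSeed_le hX (ht.trans_lt hXt))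
  rw [probReal_univ, mul_one] at hmany
  calc (bernoulliPercolation d q).real W
      ≤ (bernoulliPercolation d q).real ({ω | (exitSites m n ω).card ≤ t} ∪
          (W \ {ω | (exitSites m n ω).card ≤ t})) := measureReal_mono (by simp)
    _ ≤ _ := (measureReal_union_le _ _).trans (add_le_add_right hmany _)

end Seeds

section Symmetry

variable {d m n : ℕ} {ω ω' : Config d} {y : Vertex d} {i₀ : Fin d} {q : unitInterval}
  {π : Equiv.Perm (Fin d)} {s : Fin d → ℤˣ}

lemma LatticeAut.measurePreserving_pullback (φ : LatticeAut d) :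
    MeasurePreserving φ.pullback (bernoulliPercolation d q) (bernoulliPercolation d q) where
  measurable := measurable_pi_lambda _ fun e => measurable_pi_apply (φ.mapEdge e)
  map_eq := Measure.map_infinitePi_infinitePi_of_inj φ.mapEdge_injective

lemma LatticeAut.real_pullback_mem (φ : LatticeAut d) {A : Set (Config d)} (hA : MeasurableSet A) :
    (bernoulliPercolation d q).real {ω | φ.pullback ω ∈ A} = (bernoulliPercolation d q).real A :=
  φ.measurePreserving_pullback.measureReal_preimage hA.nullMeasurableSet

lemma affineAut_origin : affineAut (origin d) π s (origin d) = origin d := by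
  funext i
  simp [affineAut_apply, origin]

lemma affineAut_preimage_cube {x₀ : Vertex d} {r : ℕ} :
    affineAut x₀ π s ⁻¹' (cube (affineAut x₀ π s y) r : Set (Vertex d)) = cube y r :=
  Set.ext fun _ => affineAut_mem_cube

lemma affineAut_mem_cube_origin {r : ℕ} :
    affineAut (origin d) π s y ∈ cube (origin d) r ↔ y ∈ cube (origin d) r := by
  have h := affineAut_mem_cube (x₀ := origin d) (π := π) (s := s) (y := origin d) (z := y) (r := r)
  rwa [affineAut_origin] at h

lemma affineAut_preimage_cube_origin {r : ℕ} :
    affineAut (origin d) π s ⁻¹' (cube (origin d) r : Set (Vertex d)) = cube (origin d) r :=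
  Set.ext fun _ => affineAut_mem_cube_origin

namespace IsSeed

lemma pullback (h : IsSeed m n ω (affineAut (origin d) π s y)) :
    IsSeed m n ((affineAut (origin d) π s).pullback ω) y where
  connIn_cube z hz := by
    rw [← affineAut_preimage_cube (x₀ := origin d) (π := π) (s := s), LatticeAut.connIn_pullback]
    exact h.connIn_cube _ (affineAut_mem_cube.2 hz)
  exists_connIn := by
    obtain ⟨a, ha, hc⟩ := h.exists_connIn
    obtain ⟨a, rfl⟩ := (affineAut (origin d) π s).surjective a
    refine ⟨a, ?_, ?_⟩
    · exact affineAut_mem_cube_origin.1 ha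
    · rwa [← affineAut_preimage_cube_origin (π := π) (s := s), LatticeAut.connIn_pullback]

lemma mono (h : IsSeed m n ω y) (hω : ω ≤ ω') : IsSeed m n ω' y where
  connIn_cube z hz := (h.connIn_cube z hz).mono le_rfl fun e _ => hω e
  exists_connIn := by
    obtain ⟨a, ha, hc⟩ := h.exists_connIn
    exact ⟨a, ha, hc.mono le_rfl fun e _ => hω e⟩

lemma congr (h : IsSeed m n ω y) (hy : cube y m ⊆ cube (origin d) (n + 2 * m + 1))
    (hω : ∀ e ∈ innerEdges (cube (origin d) (n + 2 * m + 1) : Set (Vertex d)), ω e = ω' e) :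
    IsSeed m n ω' y where
  connIn_cube z hz := (h.connIn_cube z hz).congr fun e he =>
    hω e (innerEdges_mono (Finset.coe_subset.2 hy) he)
  exists_connIn := by
    obtain ⟨a, ha, hc⟩ := h.exists_connIn
    exact ⟨a, ha, hc.congr hω⟩

end IsSeed

namespace InFacet

lemma mem_cube (h : InFacet i₀ m n y) : y ∈ cube (origin d) (n + m + 1) := by
  refine Perc.mem_cube.2 fun j => ?_
  simp only [origin, sub_zero]
  push_cast
  rcases eq_or_ne j i₀ with rfl | hj
  · rw [h.1, abs_of_nonneg (by positivity)]
  · rw [abs_of_nonneg (h.2 j hj).1]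
    linarith [(h.2 j hj).2]

lemma cube_subset (h : InFacet i₀ m n y) : cube y m ⊆ cube (origin d) (n + 2 * m + 1) :=
  fun _ hz => cube_subset_cube (by omega) (mem_cube_add h.mem_cube hz)

end InFacet

lemma InShell.exists_affineAut (h : InShell m n y) (i₀ : Fin d) :
    ∃ π s y', InFacet i₀ m n y' ∧ affineAut (origin d) π s y' = y := by
  obtain ⟨i, hi, hj⟩ := h
  refine ⟨Equiv.swap i i₀, fun j => if 0 ≤ y j then 1 else -1, fun j => |y (Equiv.swap i i₀ j)|,
    ⟨by simpa using hi, fun j hj₀ => ⟨abs_nonneg _, hj _ fun hji => hj₀ ?_⟩⟩, ?_⟩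
  · rw [Equiv.swap_apply_eq_iff.1 hji, Equiv.swap_apply_left]
  · funext j
    simp only [affineAut_apply, origin, zero_add, Equiv.swap_apply_self]
    split_ifs with h
    · simp [abs_of_nonneg h]
    · simp [abs_of_neg (not_le.1 h)]

/-- No `y ∉ Z` in the facet `InFacet i₀ m n` is mapped to a seed by `φ`. -/
def NoSeedOn (i₀ : Fin d) (m n : ℕ) (Z : Finset (Vertex d)) (φ : Vertex d → Vertex d) :
    Set (Config d) :=
  {ω | ∀ y, InFacet i₀ m n y → y ∉ Z → ¬ IsSeed m n ω (φ y)}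

variable (Z : Finset (Vertex d))

lemma isLowerSet_noSeedOn (φ : Vertex d → Vertex d) : IsLowerSet (NoSeedOn i₀ m n Z φ) :=
  fun _ _ hω h y hy hyZ hseed => h y hy hyZ (hseed.mono hω)

lemma determinedBy_noSeedOn :
    DeterminedBy (NoSeedOn i₀ m n Z (affineAut (origin d) π s))
      (innerEdgeFinset (cube (origin d) (n + 2 * m + 1)) : Set (Edge d)) := by
  rw [coe_innerEdgeFinset]
  refine determinedBy_of_imp fun ω ω' hω h y hy hyZ hseed =>
    h y hy hyZ (hseed.congr (fun z hz => ?_) fun e he => (hω e he).symm)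
  obtain ⟨z, rfl⟩ := (affineAut (origin d) π s).surjective z
  exact affineAut_mem_cube_origin.2 (hy.cube_subset (affineAut_mem_cube.1 hz))

lemma measurableSet_noSeedOn_id : MeasurableSet (NoSeedOn i₀ m n Z id) := by
  have hid : (affineAut (origin d) 1 1 : Vertex d → Vertex d) = id := by
    funext y i
    simp [affineAut_apply, origin]
  exact hid ▸ (determinedBy_noSeedOn Z).measurableSet (Finset.finite_toSet _)

lemma real_noSeedOn_id_le :
    (bernoulliPercolation d q).real (NoSeedOn i₀ m n Z id) ≤
      (bernoulliPercolation d q).real (NoSeedOn i₀ m n Z (affineAut (origin d) π s)) := by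
  rw [← (affineAut (origin d) π s).real_pullback_mem (measurableSet_noSeedOn_id Z)]
  exact measureReal_mono fun ω hω y hy hyZ hseed => hω y hy hyZ hseed.pullback

/- The square-root trick: the hyperoctahedral group moves the facet over the whole shell, and the
events that its images contain no seed are positively correlated. -/
lemma real_noSeedOn_id_pow_le :
    (bernoulliPercolation d q).real (NoSeedOn i₀ m n Z id) ^
        Fintype.card (Equiv.Perm (Fin d) × (Fin d → ℤˣ)) ≤
      (bernoulliPercolation d q).real {ω | ∀ y, InShell m n y →
        y ∉ (Finset.univ.biUnion fun γ : Equiv.Perm (Fin d) × (Fin d → ℤˣ) =>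
          Z.image (affineAut (origin d) γ.1 γ.2)) → ¬ IsSeed m n ω y} := by
  let A (γ : Equiv.Perm (Fin d) × (Fin d → ℤˣ)) : Set (Config d) :=
    NoSeedOn i₀ m n Z (affineAut (origin d) γ.1 γ.2)
  calc _ = ∏ _γ : Equiv.Perm (Fin d) × (Fin d → ℤˣ),
        (bernoulliPercolation d q).real (NoSeedOn i₀ m n Z id) := by simp
    _ ≤ ∏ γ, (bernoulliPercolation d q).real (A γ) :=
        Finset.prod_le_prod (fun _ _ => measureReal_nonneg) fun γ _ => real_noSeedOn_id_le Z
    _ ≤ (bernoulliPercolation d q).real (⋂ γ ∈ Finset.univ, A γ) :=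
        prod_infinitePi_real_le_biInter_of_isLowerSet _ _ (fun γ => determinedBy_noSeedOn Z)
          fun γ => isLowerSet_noSeedOn Z _
    _ ≤ _ := by
        refine measureReal_mono fun ω hω y hy hyZ hseed => ?_
        obtain ⟨π, s, y, hy', rfl⟩ := hy.exists_affineAut i₀
        refine Set.mem_iInter₂.1 hω (π, s) (Finset.mem_univ _) y hy' (fun hyZ' => hyZ ?_) hseed
        exact Finset.mem_biUnion.2 ⟨(π, s), Finset.mem_univ _, Finset.mem_image_of_mem _ hyZ'⟩

end Symmetry

theorem exists_forall_real_not_isSeed_le {d : ℕ} {q : unitInterval} (hq0 : 0 < (q : ℝ))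
    (hq1 : (q : ℝ) < 1) (h0 : bernoulliPercolation d q (ZeroToInfinity d) ≠ 0) (i₀ : Fin d)
    {ε : ℝ} (hε : 0 < ε) :
    ∃ m : ℕ, 1 ≤ m ∧ ∀ K N : ℕ, ∃ n, N ≤ n ∧ m ≤ n ∧ ∀ Z : Finset (Vertex d), Z.card ≤ K →
      (bernoulliPercolation d q).real
        {ω | ∀ y, InFacet i₀ m n y → y ∉ Z → ¬ IsSeed m n ω y} ≤ ε := by
  set g := Fintype.card (Equiv.Perm (Fin d) × (Fin d → ℤˣ))
  have hεg : 0 < ε ^ g / 4 := by positivity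
  obtain ⟨m, hm, hm1⟩ := ((tendsto_bernoulliPercolation_cubeToInfinity h0).eventually
    (lt_mem_nhds (sub_lt_self 1 hεg))).and (Filter.eventually_ge_atTop 1) |>.exists
  refine ⟨m, hm1, fun K N => ?_⟩
  have hlt : 1 - (q : ℝ) ^ (((2 * m + 1) ^ d + 1) * 3 ^ d) < 1 := sub_lt_self _ (by positivity)
  obtain ⟨k, hk⟩ := exists_pow_lt_of_lt_one hεg hlt
  obtain ⟨n, hnN, hmn, hn⟩ :=
    exists_real_exitSites_card_le hq1 m ((k + g * K) * (8 * m + 5) ^ d) N hεg hm.le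
  refine ⟨n, hnN, hmn, fun Z hZ => ?_⟩
  have hcard : ((Finset.univ : Finset (Equiv.Perm (Fin d) × (Fin d → ℤˣ))).biUnion
      fun γ => Z.image (affineAut (origin d) γ.1 γ.2)).card ≤ g * K :=
    Finset.card_biUnion_le_card_mul _ _ _ fun _ _ => Finset.card_image_le.trans hZ
  have hshell := real_forall_inShell_not_isSeed_le (m := m) (n := n) (q := q) (k := k)
    (Nat.mul_le_mul_right ((8 * m + 5) ^ d) (Nat.add_le_add_left hcard k))
  refine le_of_pow_le_pow_left₀ (Fintype.card_ne_zero : g ≠ 0) hε.le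
    ((real_noSeedOn_id_pow_le Z).trans (hshell.trans ?_))
  linarith

/-! ### Sprinkling layers -/

section Layers

variable {d : ℕ} {C : Type*}

/-- Configurations with a base layer, of index `none`, and one sprinkling layer for each colour. -/
abbrev LayeredConfig (d : ℕ) (C : Type*) := Edge d × Option C → Bool

/-- The layer of index `o` of a layered configuration. -/
def layer (o : Option C) (w : LayeredConfig d C) : Config d := fun e => w (e, o)

/-- The copy of an edge in the layer of index `o`. -/
def layerEdge (o : Option C) : Edge d ↪ Edge d × Option C :=
  ⟨fun e => (e, o), Prod.mk_left_injective o⟩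

/-- The layered percolation measure: the edges of the base layer are open with probability `q`,
those of the sprinkling layers with probability `δ`. -/
noncomputable abbrev layeredPercolation (d : ℕ) (C : Type*) (q δ : unitInterval) :
    Measure (LayeredConfig d C) :=
  bernoulliProduct fun i => i.2.elim q fun _ => δ

/-- The action of a lattice automorphism on all the layers simultaneously. -/
def LatticeAut.layeredPullback (φ : LatticeAut d) (w : LayeredConfig d C) : LayeredConfig d C :=
  fun i => w (φ.mapEdge i.1, i.2)

variable {q δ : unitInterval}

lemma real_layer_none_mem {A : Set (Config d)} (hA : MeasurableSet A) :
    (layeredPercolation d C q δ).real {w | layer none w ∈ A} =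
      (bernoulliPercolation d q).real A := by
  have hmap : MeasurePreserving (layer none) (layeredPercolation d C q δ)
      (bernoulliPercolation d q) :=
    ⟨measurable_pi_lambda _ fun e => measurable_pi_apply _,
      Measure.map_infinitePi_infinitePi_of_inj (Prod.mk_left_injective (none : Option C))⟩
  exact hmap.measureReal_preimage hA.nullMeasurableSet

lemma LatticeAut.real_layeredPullback_mem (φ : LatticeAut d) {A : Set (LayeredConfig d C)}
    (hA : MeasurableSet A) :
    (layeredPercolation d C q δ).real {w | φ.layeredPullback w ∈ A} =
      (layeredPercolation d C q δ).real A := by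
  have hmap : MeasurePreserving φ.layeredPullback (layeredPercolation d C q δ)
      (layeredPercolation d C q δ) :=
    ⟨measurable_pi_lambda _ fun i => measurable_pi_apply _,
      Measure.map_infinitePi_infinitePi_of_inj (φ.mapEdge_injective.prodMap Function.injective_id)⟩
  exact hmap.measureReal_preimage hA.nullMeasurableSet

lemma DeterminedBy.layer {A : Set (Config d)} {J : Set (Edge d)} (hA : DeterminedBy A J)
    (o : Option C) : DeterminedBy {w | Perc.layer o w ∈ A} (layerEdge o '' J) :=
  determinedBy_of_imp fun _ _ h => (hA.mem_iff fun e he => h _ ⟨e, he, rfl⟩).1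

lemma disjoint_range_layerEdge {o o' : Option C} (h : o ≠ o') :
    Disjoint (Set.range (layerEdge (d := d) o)) (Set.range (layerEdge o')) := by
  rw [Set.disjoint_left]
  rintro _ ⟨e, rfl⟩ ⟨e', he⟩
  exact h (congrArg Prod.snd he).symm

end Layers

section Growth

variable {d : ℕ} {ω σ ω' σ' : Config d} {S B : Set (Vertex d)} {C : Type*} {m : ℕ}

/-- The vertices reached from the explored set `S` inside `B` when `σ` reveals new edges everywhere,
and `ω` only away from `S`. -/
def grow (S B : Set (Vertex d)) (ω σ : Config d) : Set (Vertex d) :=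
  {z | ∃ a ∈ S, Relation.ReflTransGen
    (fun u v => u ∈ B ∧ v ∈ B ∧ (step σ u v ∨ (step ω u v ∧ u ∉ S ∧ v ∉ S))) a z}

lemma grow_subset_of_eqOn (hω : ∀ e ∈ innerEdges B, ω e = ω' e)
    (hσ : ∀ e ∈ innerEdges B, σ e = σ' e) : grow S B ω σ ⊆ grow S B ω' σ' := by
  rintro z ⟨a, ha, haz⟩
  refine ⟨a, ha, Relation.ReflTransGen.mono ?_ _ _ haz⟩
  rintro u v ⟨hu, hv, huv⟩
  have hmem : ∀ e : Edge d, e.1 = s(u, v) → e ∈ innerEdges B := fun e he =>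
    (mem_innerEdges he).2 ⟨hu, hv⟩
  exact ⟨hu, hv, huv.imp (step.congr fun e he => hσ e (hmem e he))
    (And.imp_left (step.congr fun e he => hω e (hmem e he)))⟩

lemma LatticeAut.image_grow_subset (φ : LatticeAut d) :
    φ '' grow (φ ⁻¹' S) (φ ⁻¹' B) (φ.pullback ω) (φ.pullback σ) ⊆ grow S B ω σ := by
  rintro _ ⟨z, ⟨a, ha, haz⟩, rfl⟩
  refine ⟨φ a, ha, Relation.ReflTransGen.lift φ ?_ _ _ haz⟩
  exact fun u v ⟨hu, hv, huv⟩ =>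
    ⟨hu, hv, huv.imp LatticeAut.step_pullback.1 (And.imp_left LatticeAut.step_pullback.1)⟩

/-- The event that no cube of radius `m` centred in `T` is reached from `S` inside `B`, using the
base layer and the sprinkling layer `c`. -/
def NoCubeReached (m : ℕ) (S B T : Set (Vertex d)) (c : C) : Set (LayeredConfig d C) :=
  {w | ∀ y ∈ T, ¬ (cube y m : Set (Vertex d)) ⊆ grow S B (layer none w) (layer (some c) w)}

lemma determinedBy_noCubeReached (T : Set (Vertex d)) (c : C) :
    DeterminedBy (NoCubeReached m S B T c) (innerEdges B ×ˢ {none, some c}) := by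
  refine determinedBy_of_imp fun w w' h hw y hy hc => hw y hy (hc.trans (grow_subset_of_eqOn ?_ ?_))
  · exact fun e he => (h (e, none) ⟨he, by simp⟩).symm
  · exact fun e he => (h (e, some c) ⟨he, by simp⟩).symm

lemma measurableSet_noCubeReached (B : Finset (Vertex d)) (T : Set (Vertex d)) (c : C) :
    MeasurableSet (NoCubeReached m S B T c) :=
  (determinedBy_noCubeReached T c).measurableSet
    ((innerEdges_finite B).prod (Set.toFinite _))

end Growth

section Pivotal

variable {d : ℕ} {i₀ : Fin d} {m n t k : ℕ} {S Z : Finset (Vertex d)} {ω ω' σ : Config d}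
  {e : Edge d} {C : Type*} {q δ : unitInterval}

open Classical in
/-- The edges leaving `S` from whose outer endpoint some internally connected cube on the facet,
centred outside `Z`, is reached in the complement of `S`. -/
noncomputable def pivotalEdges (i₀ : Fin d) (m n : ℕ) (S Z : Finset (Vertex d)) (ω : Config d) :
    Finset (Edge d) :=
  (innerEdgeFinset (cube (origin d) (n + 2 * m + 1))).filter fun e =>
    ∃ a b y : Vertex d, e.1 = s(a, b) ∧ a ∈ S ∧ b ∉ S ∧ InFacet i₀ m n y ∧ y ∉ Z ∧
      (∀ z ∈ cube y m, ConnIn ω (cube y m) y z) ∧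
      ConnIn ω ((cube (origin d) (n + 2 * m + 1) : Set (Vertex d)) \ S) b y

lemma mem_pivotalEdges : e ∈ pivotalEdges i₀ m n S Z ω ↔
    e ∈ innerEdges (cube (origin d) (n + 2 * m + 1) : Set (Vertex d)) ∧
    ∃ a b y, e.1 = s(a, b) ∧ a ∈ S ∧ b ∉ S ∧ InFacet i₀ m n y ∧ y ∉ Z ∧
      (∀ z ∈ cube y m, ConnIn ω (cube y m) y z) ∧
      ConnIn ω ((cube (origin d) (n + 2 * m + 1) : Set (Vertex d)) \ S) b y := by
  classical
  rw [pivotalEdges, Finset.mem_filter, ← Finset.mem_coe, coe_innerEdgeFinset]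

lemma disjoint_innerEdges_pivotalEdges :
    Disjoint (innerEdges ((cube (origin d) (n + 2 * m + 1) : Set (Vertex d)) \ S))
      (pivotalEdges i₀ m n S Z ω : Set (Edge d)) := by
  rw [Set.disjoint_left]
  intro e he hpiv
  obtain ⟨-, a, b, -, hab, ha, -⟩ := mem_pivotalEdges.1 hpiv
  exact ((mem_innerEdges hab).1 he).1.2 ha

lemma pivotalEdges_subset_of_eqOn
    (hZ : ∀ y, InFacet i₀ m n y → y ∉ Z → Disjoint (cube y m) S)
    (hω : ∀ e ∈ innerEdges ((cube (origin d) (n + 2 * m + 1) : Set (Vertex d)) \ S),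
      ω e = ω' e) :
    pivotalEdges i₀ m n S Z ω ⊆ pivotalEdges i₀ m n S Z ω' := by
  intro e he
  obtain ⟨he, a, b, y, hab, ha, hb, hy, hyZ, hcube, hby⟩ := mem_pivotalEdges.1 he
  refine mem_pivotalEdges.2 ⟨he, a, b, y, hab, ha, hb, hy, hyZ, fun z hz => ?_, hby.congr hω⟩
  have hsub : (cube y m : Set (Vertex d)) ⊆
      (cube (origin d) (n + 2 * m + 1) : Set (Vertex d)) \ S := fun v hv =>
    ⟨hy.cube_subset hv, Finset.disjoint_left.1 (hZ y hy hyZ) hv⟩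
  exact (hcube z hz).congr fun e he => hω e (innerEdges_mono hsub he)

lemma determinedBy_pivotalEdges (hZ : ∀ y, InFacet i₀ m n y → y ∉ Z → Disjoint (cube y m) S)
    (P : Set (Finset (Edge d))) : DeterminedBy (pivotalEdges i₀ m n S Z ⁻¹' P)
      (innerEdges ((cube (origin d) (n + 2 * m + 1) : Set (Vertex d)) \ S)) :=
  determinedBy_of_imp fun _ _ h hω => by
    rwa [Set.mem_preimage, (pivotalEdges_subset_of_eqOn hZ fun e he => (h e he).symm).antisymm
      (pivotalEdges_subset_of_eqOn hZ h)]

lemma innerEdges_cube_sdiff_finite (x : Vertex d) (r : ℕ) (S : Set (Vertex d)) :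
    (innerEdges ((cube x r : Set (Vertex d)) \ S)).Finite :=
  (innerEdges_finite (cube x r)).subset (innerEdges_mono Set.sdiff_subset)

lemma measurableSet_pivotalEdges (hZ : ∀ y, InFacet i₀ m n y → y ∉ Z → Disjoint (cube y m) S)
    (P : Set (Finset (Edge d))) : MeasurableSet (pivotalEdges i₀ m n S Z ⁻¹' P) :=
  (determinedBy_pivotalEdges hZ P).measurableSet (innerEdges_cube_sdiff_finite _ _ _)

lemma exists_cube_subset_grow_of_mem_pivotalEdges
    (hZ : ∀ y, InFacet i₀ m n y → y ∉ Z → Disjoint (cube y m) S)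
    (he : e ∈ pivotalEdges i₀ m n S Z ω) (heσ : σ e = true) :
    ∃ y, InFacet i₀ m n y ∧
      (cube y m : Set (Vertex d)) ⊆ grow S (cube (origin d) (n + 2 * m + 1)) ω σ := by
  obtain ⟨he, a, b, y, hab, ha, -, hy, hyZ, hcube, hby⟩ := mem_pivotalEdges.1 he
  have hyS := Finset.disjoint_left.1 (hZ y hy hyZ)
  refine ⟨y, hy, fun z hz => ⟨a, ha, .head (b := b) ?_ (.trans (b := y) ?_ ?_)⟩⟩
  · obtain ⟨ha, hb⟩ := (mem_innerEdges hab).1 he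
    exact ⟨ha, hb, Or.inl (step_iff_exists_edge.2 ⟨e, hab, heσ⟩)⟩
  · exact Relation.ReflTransGen.mono
      (fun u v ⟨hu, hv, huv⟩ => ⟨hu.1, hv.1, Or.inr ⟨huv, hu.2, hv.2⟩⟩) _ _ hby
  · exact Relation.ReflTransGen.mono (fun u v ⟨hu, hv, huv⟩ =>
      ⟨hy.cube_subset hu, hy.cube_subset hv, Or.inr ⟨huv, hyS hu, hyS hv⟩⟩) _ _ (hcube z hz)

lemma not_isSeed_of_pivotalEdges_closed (hS : cube (origin d) m ⊆ S)
    (hZ : ∀ y, InFacet i₀ m n y → y ∉ Z → Disjoint (cube y m) S)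
    (hclosed : ∀ e ∈ pivotalEdges i₀ m n S Z ω, ω e = false) {y : Vertex d}
    (hy : InFacet i₀ m n y) (hyZ : y ∉ Z) : ¬ IsSeed m n ω y := by
  rintro ⟨hcube, a, ha, hay⟩
  obtain ⟨u, v, hu, hv, ⟨hu', hv', huv⟩, hvy⟩ := exists_last_exit_of_reflTransGen
    (S := (S : Set (Vertex d))) hay (hS ha)
    (Finset.disjoint_left.1 (hZ y hy hyZ) (self_mem_cube y m))
  obtain ⟨e, he, hopen⟩ := step_iff_exists_edge.1 huv
  have hpiv : e ∈ pivotalEdges i₀ m n S Z ω := by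
    refine mem_pivotalEdges.2 ⟨(mem_innerEdges he).2 ⟨hu', hv'⟩, u, v, y, he, hu, hv, hy, hyZ,
      hcube, Relation.ReflTransGen.mono ?_ _ _ hvy⟩
    exact fun _ _ ⟨ha, hb, ha', hb', hab⟩ => ⟨⟨ha', ha⟩, ⟨hb', hb⟩, hab⟩
  exact Bool.false_ne_true ((hclosed e hpiv).symm.trans hopen)

/- Closing the few pivotal edges destroys all the seeds, at a bounded multiplicative cost. -/
lemma real_card_pivotalEdges_le (hq1 : (q : ℝ) < 1) (hS : cube (origin d) m ⊆ S)
    (hZ : ∀ y, InFacet i₀ m n y → y ∉ Z → Disjoint (cube y m) S) :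
    (bernoulliPercolation d q).real {ω | (pivotalEdges i₀ m n S Z ω).card ≤ t} ≤
      ((1 - (q : ℝ)) ^ t)⁻¹ * (bernoulliPercolation d q).real (NoSeedOn i₀ m n Z id) := by
  have hq : 0 < 1 - (q : ℝ) := sub_pos.2 hq1
  let E (X : {X : Finset (Edge d) // X.card ≤ t ∧ ∃ ω, pivotalEdges i₀ m n S Z ω = X}) :
    Set (Config d) := pivotalEdges i₀ m n S Z ⁻¹' {X.1}
  have hE : Pairwise (Function.onFun Disjoint E) := fun X Y hXY =>
    (Set.disjoint_singleton.2 (Subtype.coe_injective.ne hXY)).preimage _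
  refine measureReal_le_mul_of_forall_inter_le (μ := bernoulliPercolation d q) (E := E)
    (fun X => measurableSet_pivotalEdges hZ _) hE
    (fun ω hω => Set.mem_iUnion.2 ⟨⟨_, hω, ω, rfl⟩, rfl⟩)
    (measurableSet_noSeedOn_id Z) (by positivity) ?_
  rintro ⟨X, hXt, ω₀, hω₀⟩
  have hindep : (bernoulliPercolation d q).real
      (pivotalEdges i₀ m n S Z ⁻¹' {X} ∩ {ω | ∀ e ∈ X, ω e = false}) = _ :=
    infinitePi_real_inter _ (measurableSet_pivotalEdges hZ {X})
    ((determinedBy_forall_mem_eq X false).measurableSet X.finite_toSet)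
    (determinedBy_pivotalEdges hZ {X}) (determinedBy_forall_mem_eq X false)
    (hω₀ ▸ disjoint_innerEdges_pivotalEdges)
  rw [inv_mul_eq_div, le_div_iff₀ (by positivity)]
  calc (bernoulliPercolation d q).real (E ⟨X, hXt, ω₀, hω₀⟩ ∩ _) * (1 - (q : ℝ)) ^ t
      ≤ (bernoulliPercolation d q).real (pivotalEdges i₀ m n S Z ⁻¹' {X}) *
          (1 - (q : ℝ)) ^ X.card :=
        mul_le_mul (measureReal_mono Set.inter_subset_left)
          (pow_le_pow_of_le_one hq.le (sub_le_self _ q.2.1) hXt) (by positivity) measureReal_nonneg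
    _ = (bernoulliPercolation d q).real
          (pivotalEdges i₀ m n S Z ⁻¹' {X} ∩ {ω | ∀ e ∈ X, ω e = false}) := by
        rw [hindep, bernoulliProduct_real_forall_false, Finset.prod_const]
    _ ≤ _ := by
        refine measureReal_mono fun ω ⟨hωX, hclosed⟩ => ⟨hωX, fun _ => ?_⟩
        exact not_isSeed_of_pivotalEdges_closed hS hZ (hωX.symm ▸ hclosed)

/- Given the base layer, each pivotal edge is opened by the sprinkling with probability `δ`. -/
lemma real_noCubeReached_inter_card_pivotalEdges_le
    (hZ : ∀ y, InFacet i₀ m n y → y ∉ Z → Disjoint (cube y m) S) (c : C) :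
    (layeredPercolation d C q δ).real
      (NoCubeReached m S (cube (origin d) (n + 2 * m + 1)) {y | InFacet i₀ m n y} c ∩
        {w | t < (pivotalEdges i₀ m n S Z (layer none w)).card}) ≤ (1 - (δ : ℝ)) ^ t := by
  let f (w : LayeredConfig d C) := pivotalEdges i₀ m n S Z (layer none w)
  let E (X : {X : Finset (Edge d) // t < X.card}) : Set (LayeredConfig d C) := f ⁻¹' {X.1}
  have hE : Pairwise (Function.onFun Disjoint E) := fun X Y hXY =>
    (Set.disjoint_singleton.2 (Subtype.coe_injective.ne hXY)).preimage _
  have hdet (X : Finset (Edge d)) : DeterminedBy (f ⁻¹' {X}) _ :=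
    (determinedBy_pivotalEdges hZ {X}).layer none
  have hmeas (X : Finset (Edge d)) : MeasurableSet (f ⁻¹' {X}) :=
    (hdet X).measurableSet ((innerEdges_cube_sdiff_finite _ _ _).image _)
  have hδ : 0 ≤ 1 - (δ : ℝ) := sub_nonneg.2 δ.2.2
  refine (measureReal_le_mul_of_forall_inter_le (μ := layeredPercolation d C q δ) (E := E)
    (fun X => hmeas X) hE (fun w hw => Set.mem_iUnion.2 ⟨⟨_, hw.2⟩, rfl⟩) MeasurableSet.univ
    (pow_nonneg hδ t) ?_).trans_eq (by rw [probReal_univ, mul_one])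
  rintro ⟨X, hXt⟩
  have hcyl := determinedBy_forall_mem_eq (X.map (layerEdge (some c))) false
  have hindep : (layeredPercolation d C q δ).real
      (f ⁻¹' {X} ∩ {w | ∀ i ∈ X.map (layerEdge (some c)), w i = false}) = _ :=
    infinitePi_real_inter _ (hmeas X) (hcyl.measurableSet (Finset.finite_toSet _)) (hdet X) hcyl (by
      rw [Finset.coe_map]
      exact (disjoint_range_layerEdge (by simp)).mono (Set.image_subset_range _ _)
        (Set.image_subset_range _ _))
  rw [Set.inter_univ]
  calc _ ≤ (layeredPercolation d C q δ).real
          (f ⁻¹' {X} ∩ {w | ∀ i ∈ X.map (layerEdge (some c)), w i = false}) := by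
        refine measureReal_mono fun w ⟨hwX, hw, _⟩ => ⟨hwX, fun i hi => ?_⟩
        obtain ⟨e, he, rfl⟩ := Finset.mem_map.1 hi
        rw [← show f w = X from hwX] at he
        by_contra hopen
        obtain ⟨y, hy, hreached⟩ := exists_cube_subset_grow_of_mem_pivotalEdges hZ he
          (σ := layer (some c) w) (Bool.eq_true_of_not_eq_false hopen)
        exact hw y hy hreached
    _ = (layeredPercolation d C q δ).real (f ⁻¹' {X}) * (1 - (δ : ℝ)) ^ X.card := by
        rw [hindep, bernoulliProduct_real_forall_false, Finset.prod_map]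
        simp [layerEdge]
    _ ≤ (1 - (δ : ℝ)) ^ t * (layeredPercolation d C q δ).real (f ⁻¹' {X}) := by
        rw [mul_comm]
        exact mul_le_mul_of_nonneg_right
          (pow_le_pow_of_le_one hδ (sub_le_self _ δ.2.1) hXt.le) measureReal_nonneg

lemma real_noCubeReached_le_of_forall_disjoint (hq1 : (q : ℝ) < 1) (hS : cube (origin d) m ⊆ S)
    (hZ : ∀ y, InFacet i₀ m n y → y ∉ Z → Disjoint (cube y m) S) (c : C) :
    (layeredPercolation d C q δ).real
        (NoCubeReached m S (cube (origin d) (n + 2 * m + 1)) {y | InFacet i₀ m n y} c) ≤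
      ((1 - (q : ℝ)) ^ t)⁻¹ * (bernoulliPercolation d q).real (NoSeedOn i₀ m n Z id) +
        (1 - (δ : ℝ)) ^ t := by
  set W : Set (LayeredConfig d C) :=
    NoCubeReached m S (cube (origin d) (n + 2 * m + 1)) {y | InFacet i₀ m n y} c
  calc (layeredPercolation d C q δ).real W
      ≤ (layeredPercolation d C q δ).real
          ({w | layer none w ∈ {ω | (pivotalEdges i₀ m n S Z ω).card ≤ t}} ∪
            (W ∩ {w | t < (pivotalEdges i₀ m n S Z (layer none w)).card})) :=
        measureReal_mono fun w hw =>
          (le_or_gt (pivotalEdges i₀ m n S Z (layer none w)).card t).imp id fun h => ⟨hw, h⟩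
    _ ≤ _ := measureReal_union_le _ _
    _ ≤ _ := by
        rw [real_layer_none_mem (A := {ω | (pivotalEdges i₀ m n S Z ω).card ≤ t})
          (measurableSet_pivotalEdges hZ {X | X.card ≤ t})]
        exact add_le_add (real_card_pivotalEdges_le hq1 hS hZ)
          (real_noCubeReached_inter_card_pivotalEdges_le hZ c)

/- A cube that already meets `S` is reached as soon as its sprinkled edges are all open. -/
lemma real_noCubeReached_le_of_forall_not_disjoint {Y : Finset (Vertex d)}
    (hY : ∀ y ∈ Y, InFacet i₀ m n y ∧ ¬ Disjoint (cube y m) S)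
    (hk : k * (4 * m + 1) ^ d ≤ Y.card) (c : C) :
    (layeredPercolation d C q δ).real
        (NoCubeReached m S (cube (origin d) (n + 2 * m + 1)) {y | InFacet i₀ m n y} c) ≤
      (1 - (δ : ℝ) ^ ((2 * m + 1) ^ d * 3 ^ d)) ^ k := by
  obtain ⟨Y', hY'Y, hsep, hcard⟩ := exists_separated_subset (2 * m) Y
  have hkY' : k ≤ Y'.card := by
    rw [show 2 * (2 * m) + 1 = 4 * m + 1 by ring] at hcard
    exact Nat.le_of_mul_le_mul_right (hk.trans hcard) (by positivity)
  let Q (y : Vertex d) : Finset (Edge d × Option C) :=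
    (innerEdgeFinset (cube y m)).map (layerEdge (some c))
  have hQcard (y : Vertex d) : (Q y).card ≤ (2 * m + 1) ^ d * 3 ^ d := by
    simpa only [Q, Finset.card_map, card_cube] using card_innerEdgeFinset_le (cube y m)
  have hQdisj : (Y' : Set (Vertex d)).PairwiseDisjoint Q := by
    intro u hu v hv huv
    refine (Finset.disjoint_map _).2 (Finset.disjoint_coe.1 ?_)
    rw [coe_innerEdgeFinset, coe_innerEdgeFinset]
    exact disjoint_innerEdges_of_subsingleton fun z ⟨hzu, hzv⟩ => (hsep u hu v hv huv
      (cube_subset_cube (by omega) (mem_cube_add hzu (mem_cube_comm.1 hzv)))).elim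
  have hδ : (δ : ℝ) ^ ((2 * m + 1) ^ d * 3 ^ d) ∈ unitInterval :=
    ⟨pow_nonneg δ.2.1 _, pow_le_one₀ δ.2.1 δ.2.2⟩
  calc _ ≤ (layeredPercolation d C q δ).real {w | ∀ u ∈ Y', ¬ ∀ i ∈ Q u, w i = true} := by
        refine measureReal_mono fun w hw u hu hopen => ?_
        obtain ⟨hfacet, hmeets⟩ := hY u (hY'Y hu)
        obtain ⟨a, ha, haS⟩ := Finset.not_disjoint_iff.1 hmeets
        have hcube : ∀ e ∈ innerEdgeFinset (cube u m), layer (some c) w e = true := fun e he =>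
          hopen _ (Finset.mem_map_of_mem _ he)
        refine hw u hfacet fun z hz => ⟨a, haS, Relation.ReflTransGen.mono ?_ _ _
          ((connIn_cube_of_open hcube ha).symm.trans (connIn_cube_of_open hcube hz))⟩
        exact fun _ _ ⟨hx, hy, hxy⟩ =>
          ⟨hfacet.cube_subset hx, hfacet.cube_subset hy, Or.inl hxy⟩
    _ ≤ (1 - (δ : ℝ) ^ ((2 * m + 1) ^ d * 3 ^ d)) ^ Y'.card :=
        bernoulliProduct_real_forall_not_forall_true_le _ (Q := Q) δ.2
          (fun u _ i hi => by
            obtain ⟨e, -, rfl⟩ := Finset.mem_map.1 hi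
            exact le_rfl)
          (fun u _ => hQcard u) hQdisj
    _ ≤ _ := pow_le_pow_of_le_one (sub_nonneg.2 hδ.2) (sub_le_self _ hδ.1) hkY'

theorem exists_forall_real_noCubeReached_facet_le (hq0 : 0 < (q : ℝ)) (hq1 : (q : ℝ) < 1)
    (hδ : 0 < (δ : ℝ)) (h0 : bernoulliPercolation d q (ZeroToInfinity d) ≠ 0) (i₀ : Fin d) {ε : ℝ}
    (hε : 0 < ε) :
    ∃ m n : ℕ, 1 ≤ m ∧ m ≤ n ∧ ∀ (S : Finset (Vertex d)) (c : C), cube (origin d) m ⊆ S →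
      (layeredPercolation d C q δ).real
        (NoCubeReached m S (cube (origin d) (n + 2 * m + 1)) {y | InFacet i₀ m n y} c) ≤ ε := by
  classical
  obtain ⟨t, ht⟩ := exists_pow_lt_of_lt_one (half_pos hε) (sub_lt_self 1 hδ)
  have hqt : 0 < (1 - (q : ℝ)) ^ t := pow_pos (sub_pos.2 hq1) t
  obtain ⟨m, hm1, hm⟩ := exists_forall_real_not_isSeed_le hq0 hq1 h0 i₀ (mul_pos (half_pos hε) hqt)
  obtain ⟨k, hk⟩ := exists_pow_lt_of_lt_one hε
    (sub_lt_self 1 (pow_pos hδ ((2 * m + 1) ^ d * 3 ^ d)))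
  obtain ⟨n, -, hmn, hn⟩ := hm (k * (4 * m + 1) ^ d) 0
  refine ⟨m, n, hm1, hmn, fun S c hS => ?_⟩
  let Y := (cube (origin d) (n + m + 1)).filter fun y => InFacet i₀ m n y ∧ ¬ Disjoint (cube y m) S
  obtain hY | hY := le_total (k * (4 * m + 1) ^ d) Y.card
  · exact (real_noCubeReached_le_of_forall_not_disjoint
      (fun y hy => (Finset.mem_filter.1 hy).2) hY c).trans hk.le
  · have hdisj : ∀ y, InFacet i₀ m n y → y ∉ Y → Disjoint (cube y m) S := fun y hy hyY =>
      by_contra fun h => hyY (Finset.mem_filter.2 ⟨hy.mem_cube, hy, h⟩)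
    have hseed : ((1 - (q : ℝ)) ^ t)⁻¹ *
        (bernoulliPercolation d q).real (NoSeedOn i₀ m n Y id) ≤ ε / 2 := by
      rw [inv_mul_eq_div, div_le_iff₀ hqt]
      exact hn Y hY
    linarith [real_noCubeReached_le_of_forall_disjoint (δ := δ) (t := t) hq1 hS hdisj c]

end Pivotal

section Steering

variable {d : ℕ} {m n : ℕ} {C : Type*} {q δ : unitInterval}

/- The reflections are chosen so that the facet is steered back towards the line through `u`. -/
lemma exists_forall_affineAut_mem_cube (i₀ i₁ : Fin d) (sg : ℤˣ) {x u v : Vertex d}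
    (hx : x ∈ cube u n) (hv : v i₁ = u i₁ + sg * (n + m + 1 : ℤ)) (hvj : ∀ j, j ≠ i₁ → v j = u j) :
    ∃ s : Fin d → ℤˣ, ∀ y, InFacet i₀ m n y → affineAut x (Equiv.swap i₀ i₁) s y ∈ cube v n := by
  refine ⟨fun j => if j = i₁ then sg else if x j - u j ≤ 0 then 1 else -1, fun y hy => ?_⟩
  refine mem_cube.2 fun j => ?_
  have hxj := abs_le.1 (mem_cube.1 hx j)
  rw [affineAut_apply, abs_le]
  obtain rfl | hj := eq_or_ne j i₁
  · rw [if_pos rfl, Equiv.swap_apply_right, hy.1, hv]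
    constructor <;> linarith
  · rw [if_neg hj, hvj j hj]
    have hyj := hy.2 (Equiv.swap i₀ i₁ j) fun h => hj ((Equiv.swap_apply_eq_iff.1 h).trans
      (Equiv.swap_apply_left i₀ i₁))
    split_ifs with h
    · rw [Units.val_one]
      constructor <;> linarith
    · rw [Units.val_neg, Units.val_one]
      push Not at h
      constructor <;> linarith

theorem exists_forall_real_noCubeReached_cube_le (hq0 : 0 < (q : ℝ)) (hq1 : (q : ℝ) < 1)
    (hδ : 0 < (δ : ℝ)) (h0 : bernoulliPercolation d q (ZeroToInfinity d) ≠ 0) (i₀ : Fin d) {ε : ℝ}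
    (hε : 0 < ε) :
    ∃ m n : ℕ, 1 ≤ m ∧ m ≤ n ∧ ∀ (S : Finset (Vertex d)) (c : C) (i₁ : Fin d) (sg : ℤˣ)
      (x u v : Vertex d), cube x m ⊆ S → x ∈ cube u n → v i₁ = u i₁ + sg * (n + m + 1 : ℤ) →
      (∀ j, j ≠ i₁ → v j = u j) → (layeredPercolation d C q δ).real
        (NoCubeReached m S (cube x (n + 2 * m + 1)) (cube v n) c) ≤ ε := by
  obtain ⟨m, n, hm, hmn, h⟩ :=
    exists_forall_real_noCubeReached_facet_le (C := C) hq0 hq1 hδ h0 i₀ hε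
  refine ⟨m, n, hm, hmn, fun S c i₁ sg x u v hS hx hv hvj => ?_⟩
  obtain ⟨s, hs⟩ := exists_forall_affineAut_mem_cube (m := m) i₀ i₁ sg hx hv hvj
  set φ := affineAut x (Equiv.swap i₀ i₁) s
  have hφ : φ (origin d) = x := by
    funext j
    simp [φ, affineAut_apply, origin]
  have hpre (r : ℕ) : φ ⁻¹' (cube x r : Set (Vertex d)) = cube (origin d) r := by
    rw [← hφ, affineAut_preimage_cube]
  let S' : Finset (Vertex d) := S.map φ.symm.toEquiv.toEmbedding
  have hS' : (S' : Set (Vertex d)) = φ ⁻¹' S := by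
    rw [Finset.coe_map]
    exact φ.symm.toEquiv.image_eq_preimage_symm S
  have hcube : cube (origin d) m ⊆ S' := by
    rw [← Finset.coe_subset, hS', ← hpre]
    exact Set.preimage_mono hS
  refine (measureReal_mono ?_).trans
    ((φ.real_layeredPullback_mem (measurableSet_noCubeReached _ _ c)).trans_le (h S' c hcube))
  intro w hw y hy hreached
  refine hw (φ y) (hs y hy) (.trans (fun z hz => ?_) φ.image_grow_subset)
  rw [hpre, ← hS']
  refine ⟨φ.symm z, hreached ?_, φ.apply_symm_apply z⟩
  rwa [Finset.mem_coe, ← affineAut_mem_cube, φ.apply_symm_apply]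

end Steering

/-! ### Exploration of a graph by renormalised steps -/

section FinsetGrowth

variable {d : ℕ} {ω σ ω' σ' : Config d}

lemma reflTransGen_iff_of_forall_reachable {α : Type*} {r r' : α → α → Prop} {a z : α}
    (h : ∀ u v, Relation.ReflTransGen r a u → (r u v ↔ r' u v)) :
    Relation.ReflTransGen r a z ↔ Relation.ReflTransGen r' a z := by
  refine ⟨fun haz => ?_, fun haz => ?_⟩
  · induction haz with
    | refl => exact .refl
    | tail hu huv ih => exact ih.tail ((h _ _ hu).1 huv)
  · induction haz with
    | refl => exact .refl
    | tail _ huv ih => exact ih.tail ((h _ _ ih).2 huv)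

lemma step_iff_of_forall_edge {x y : Vertex d} (h : ∀ e : Edge d, e.1 = s(x, y) → ω e = ω' e) :
    step ω x y ↔ step ω' x y :=
  ⟨step.congr h, step.congr fun e he => (h e he).symm⟩

lemma subset_grow (S B : Set (Vertex d)) (ω σ : Config d) : S ⊆ grow S B ω σ :=
  fun z hz => ⟨z, hz, .refl⟩

lemma grow_subset_union (S B : Set (Vertex d)) (ω σ : Config d) : grow S B ω σ ⊆ S ∪ B := by
  rintro z ⟨a, ha, haz⟩
  rcases Relation.ReflTransGen.cases_tail haz with rfl | ⟨_, _, h⟩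
  exacts [Or.inl ha, Or.inr h.2.1]

lemma grow_eq_of_eqOn_incidentEdges_grow {S B : Set (Vertex d)}
    (hω : ∀ e ∈ innerEdges B, e ∈ incidentEdges (grow S B ω σ) → e ∉ incidentEdges S → ω e = ω' e)
    (hσ : ∀ e ∈ innerEdges B, σ e = σ' e) : grow S B ω' σ' = grow S B ω σ := by
  have hrel (a : Vertex d) (ha : a ∈ S) (z : Vertex d) := reflTransGen_iff_of_forall_reachable
    (r := fun u v => u ∈ B ∧ v ∈ B ∧ (step σ u v ∨ (step ω u v ∧ u ∉ S ∧ v ∉ S)))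
    (r' := fun u v => u ∈ B ∧ v ∈ B ∧ (step σ' u v ∨ (step ω' u v ∧ u ∉ S ∧ v ∉ S)))
    (a := a) (z := z) fun u v hau => by
      refine and_congr_right fun hu => and_congr_right fun hv => or_congr ?_ ?_
      · exact step_iff_of_forall_edge fun e he => hσ e ((mem_innerEdges he).2 ⟨hu, hv⟩)
      · refine and_congr_left fun huv => step_iff_of_forall_edge fun e he => ?_
        refine hω e ((mem_innerEdges he).2 ⟨hu, hv⟩)
          ((mem_incidentEdges he).2 (Or.inl ⟨a, ha, hau⟩)) ?_
        rw [mem_incidentEdges he]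
        exact not_or.2 huv
  ext z
  exact exists_congr fun a => and_congr_right fun ha => (hrel a ha z).symm

open Classical in
/-- The set `grow S B ω σ` as a finset. -/
noncomputable def growFinset (S B : Finset (Vertex d)) (ω σ : Config d) : Finset (Vertex d) :=
  {z ∈ S ∪ B | z ∈ grow (S : Set (Vertex d)) B ω σ}

@[simp]
lemma coe_growFinset (S B : Finset (Vertex d)) (ω σ : Config d) :
    (growFinset S B ω σ : Set (Vertex d)) = grow (S : Set (Vertex d)) B ω σ := by
  classical
  ext z
  rw [growFinset, Finset.coe_filter, Set.mem_ofPred_eq, Finset.mem_union]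
  exact and_iff_right_of_imp fun hz => grow_subset_union _ _ _ _ hz

lemma subset_growFinset (S B : Finset (Vertex d)) (ω σ : Config d) : S ⊆ growFinset S B ω σ := by
  rw [← Finset.coe_subset, coe_growFinset]
  exact subset_grow _ _ _ _

end FinsetGrowth

/-- Adjacency in the subgraph of `G` induced by `A`, as a relation on all vertices. -/
def AdjWithin {V : Type*} (G : SimpleGraph V) (A : Set V) (u v : V) : Prop :=
  G.Adj u v ∧ u ∈ A ∧ v ∈ A

/-- What an exploration of renormalised sites has found so far: the explored vertices, the occupied
sites, each with the centre of an explored cube, and the sites whose examination failed. -/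
structure ExplorationState (d : ℕ) (V : Type*) where
  explored : Finset (Vertex d)
  occupied : Finset (V × Vertex d)
  failed : Finset V

/-- The examination of the site `target` from the cube of centre `center` at the site `source`. -/
structure Move (d : ℕ) (V : Type*) where
  source : V
  center : Vertex d
  target : V

namespace ExplorationState

variable {d : ℕ} {V : Type*} {s : ExplorationState d V} {v : V}

instance [Countable V] : Countable (ExplorationState d V) :=
  Function.Injective.countable (f := fun s : ExplorationState d V =>
    (s.explored, s.occupied, s.failed)) fun ⟨_, _, _⟩ ⟨_, _, _⟩ h => by simpa using h

open Classical in
/-- The occupied sites, without the centres of their cubes. -/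
noncomputable def occupiedSites (s : ExplorationState d V) : Finset V := s.occupied.image Prod.fst

lemma mem_occupiedSites : v ∈ s.occupiedSites ↔ ∃ x, (v, x) ∈ s.occupied := by
  classical
  simp [occupiedSites]

open Classical in
/-- The sites which are occupied or failed. -/
noncomputable def examined (s : ExplorationState d V) : Finset V := s.occupiedSites ∪ s.failed

lemma mem_examined : v ∈ s.examined ↔ v ∈ s.occupiedSites ∨ v ∈ s.failed := by
  classical
  exact Finset.mem_union

open Classical in
/-- The state after a move to `u` which has found a cube of centre `y`, `R` being then explored. -/
noncomputable def occupy (s : ExplorationState d V) (u : V) (y : Vertex d) (R : Finset (Vertex d)) :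
    ExplorationState d V :=
  ⟨R, insert (u, y) s.occupied, s.failed⟩

open Classical in
/-- The state after a failed move to `u`, `R` being then explored. -/
noncomputable def fail (s : ExplorationState d V) (u : V) (R : Finset (Vertex d)) :
    ExplorationState d V :=
  ⟨R, s.occupied, insert u s.failed⟩

variable {u : V} {y : Vertex d} {R : Finset (Vertex d)} {p : V × Vertex d}

lemma mem_occupied_occupy : p ∈ (s.occupy u y R).occupied ↔ p = (u, y) ∨ p ∈ s.occupied := by
  classical
  exact Finset.mem_insert

lemma mem_occupiedSites_occupy :
    v ∈ (s.occupy u y R).occupiedSites ↔ v = u ∨ v ∈ s.occupiedSites := by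
  simp only [mem_occupiedSites, mem_occupied_occupy, Prod.mk.injEq]
  exact ⟨fun ⟨x, hx⟩ => hx.imp And.left fun h => ⟨x, h⟩,
    fun h => h.elim (fun h => ⟨y, Or.inl ⟨h, rfl⟩⟩) fun ⟨x, hx⟩ => ⟨x, Or.inr hx⟩⟩

lemma mem_failed_fail : v ∈ (s.fail u R).failed ↔ v = u ∨ v ∈ s.failed := by
  classical
  exact Finset.mem_insert

lemma occupiedSites_fail : (s.fail u R).occupiedSites = s.occupiedSites := rfl

end ExplorationState

/-- The data of an exploration of the sites of `graph` starting from `root`: cubes of radius `m` are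
searched for around the centres of the sites at distance `n`, using at the site `v` the sprinkling
layer `color v`. At the start `initial` is explored, and contains the cube of centre `seed`. -/
structure ExplorationScheme (d : ℕ) (C V : Type*) where
  graph : SimpleGraph V
  root : V
  m : ℕ
  n : ℕ
  center : V → Vertex d
  color : V → C
  seed : Vertex d
  initial : Finset (Vertex d)

namespace ExplorationScheme

open ExplorationState

variable {d : ℕ} {C V : Type*} (X : ExplorationScheme d C V)

/-- The radius of the box in which a move takes place. -/
def boxRadius : ℕ := X.n + 2 * X.m + 1

/-- The radius of a box around the centre of a site containing all the moves to this site. -/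
def zoneRadius : ℕ := 3 * X.n + 3 * X.m + 2

/-- The compatibility conditions under which distinct moves use distinct coordinates. -/
structure Admissible : Prop where
  center_mem_cube : ∀ v w, X.graph.Adj v w → X.center v ∈ cube (X.center w) (X.n + X.m + 1)
  disjoint_zones : ∀ u u', u ≠ u' → X.color u = X.color u' →
    Disjoint (cube (X.center u) X.zoneRadius) (cube (X.center u') X.zoneRadius)
  seed_mem_cube : X.seed ∈ cube (X.center X.root) X.n
  cube_seed_subset : cube X.seed X.m ⊆ X.initial

/-- A move is possible if it goes from an occupied site to an adjacent unexamined one. -/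
def IsPossible (s : ExplorationState d V) (p : Move d V) : Prop :=
  (p.source, p.center) ∈ s.occupied ∧ X.graph.Adj p.source p.target ∧ p.target ∉ s.examined

open Classical in
/-- An arbitrary choice of a possible move, if there is one. -/
noncomputable def nextMove (s : ExplorationState d V) : Option (Move d V) :=
  if h : ∃ p, X.IsPossible s p then some h.choose else none

variable {X} {s : ExplorationState d V} {p : Move d V}

lemma isPossible_of_nextMove_eq_some (h : X.nextMove s = some p) : X.IsPossible s p := by
  unfold nextMove at h
  split_ifs at h with hex
  cases h
  exact hex.choose_spec

lemma not_isPossible_of_nextMove_eq_none (h : X.nextMove s = none) : ¬ X.IsPossible s p := by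
  unfold nextMove at h
  split_ifs at h with hex
  exact fun hp => hex ⟨p, hp⟩

variable (X)

open Classical in
/-- The state after the move `p`, `R` being then explored. -/
noncomputable def update (s : ExplorationState d V) (p : Move d V) (R : Finset (Vertex d)) :
    ExplorationState d V :=
  if h : ∃ y ∈ cube (X.center p.target) X.n, cube y X.m ⊆ R then s.occupy p.target h.choose R
  else s.fail p.target R

/-- The vertices explored after the move `p`. -/
noncomputable def reveal (w : LayeredConfig d C) (s : ExplorationState d V) (p : Move d V) :
    Finset (Vertex d) :=
  growFinset s.explored (cube p.center X.boxRadius) (layer none w)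
    (layer (some (X.color p.target)) w)

/-- One step of the exploration; it does nothing if no move is possible. -/
noncomputable def next (w : LayeredConfig d C) (s : ExplorationState d V) : ExplorationState d V :=
  (X.nextMove s).elim s fun p => X.update s p (X.reveal w s p)

/-- The state of the exploration after `t` steps. -/
noncomputable def state (w : LayeredConfig d C) (t : ℕ) : ExplorationState d V :=
  (X.next w)^[t] ⟨X.initial, {(X.root, X.seed)}, ∅⟩

variable {w w' : LayeredConfig d C}

lemma state_succ (t : ℕ) : X.state w (t + 1) = X.next w (X.state w t) :=
  Function.iterate_succ_apply' _ _ _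

lemma next_of_nextMove_eq_none (h : X.nextMove s = none) : X.next w s = s := by
  rw [next, h, Option.elim_none]

lemma next_of_nextMove_eq_some (h : X.nextMove s = some p) :
    X.next w s = X.update s p (X.reveal w s p) := by
  rw [next, h, Option.elim_some]

lemma update_eq_occupy_or_fail (s : ExplorationState d V) (p : Move d V) (R : Finset (Vertex d)) :
    (∃ y ∈ cube (X.center p.target) X.n, cube y X.m ⊆ R ∧ X.update s p R = s.occupy p.target y R) ∨
    ((∀ y ∈ cube (X.center p.target) X.n, ¬ cube y X.m ⊆ R) ∧
      X.update s p R = s.fail p.target R) := by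
  by_cases h : ∃ y ∈ cube (X.center p.target) X.n, cube y X.m ⊆ R
  · exact Or.inl ⟨h.choose, h.choose_spec.1, h.choose_spec.2, dif_pos h⟩
  · exact Or.inr ⟨fun y hy hyR => h ⟨y, hy, hyR⟩, dif_neg h⟩

lemma explored_update (s : ExplorationState d V) (p : Move d V) (R : Finset (Vertex d)) :
    (X.update s p R).explored = R := by
  rcases X.update_eq_occupy_or_fail s p R with ⟨_, _, _, h⟩ | ⟨_, h⟩ <;> rw [h] <;> rfl

lemma mem_examined_update {R : Finset (Vertex d)} {v : V} :
    v ∈ (X.update s p R).examined ↔ v = p.target ∨ v ∈ s.examined := by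
  rcases X.update_eq_occupy_or_fail s p R with ⟨y, _, _, h⟩ | ⟨_, h⟩
  · rw [h, mem_examined, mem_examined, mem_occupiedSites_occupy, or_assoc]
    rfl
  · rw [h, mem_examined, mem_examined, mem_failed_fail, occupiedSites_fail]
    exact or_left_comm

lemma failed_subset_failed_update (s : ExplorationState d V) (p : Move d V)
    (R : Finset (Vertex d)) : s.failed ⊆ (X.update s p R).failed := by
  rcases X.update_eq_occupy_or_fail s p R with ⟨y, _, _, h⟩ | ⟨_, h⟩ <;> rw [h]
  · exact Finset.Subset.refl _
  · exact fun v hv => mem_failed_fail.2 (Or.inr hv)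

variable (w s)

lemma explored_subset_explored_next : s.explored ⊆ (X.next w s).explored := by
  rcases h : X.nextMove s with _ | p
  · rw [X.next_of_nextMove_eq_none h]
  · rw [X.next_of_nextMove_eq_some h, explored_update]
    exact subset_growFinset _ _ _ _

lemma examined_subset_examined_next : s.examined ⊆ (X.next w s).examined := by
  rcases h : X.nextMove s with _ | p
  · rw [X.next_of_nextMove_eq_none h]
  · rw [X.next_of_nextMove_eq_some h]
    exact fun v hv => X.mem_examined_update.2 (Or.inr hv)

lemma failed_subset_failed_next : s.failed ⊆ (X.next w s).failed := by
  rcases h : X.nextMove s with _ | p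
  · rw [X.next_of_nextMove_eq_none h]
  · rw [X.next_of_nextMove_eq_some h]
    exact X.failed_subset_failed_update _ _ _

variable {w s}

/-- The properties preserved along the exploration. -/
structure IsConsistent (s : ExplorationState d V) : Prop where
  cube_subset_explored : ∀ p ∈ s.occupied,
    p.2 ∈ cube (X.center p.1) X.n ∧ cube p.2 X.m ⊆ s.explored
  notMem_occupiedSites : ∀ v ∈ s.failed, v ∉ s.occupiedSites
  exists_adj_failed : ∀ v ∈ s.failed, ∃ u ∈ s.occupiedSites, X.graph.Adj u v
  reachable : ∀ v ∈ s.occupiedSites,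
    Relation.ReflTransGen (AdjWithin X.graph s.occupiedSites) X.root v
  root_mem : X.root ∈ s.occupiedSites
  initial_subset : X.initial ⊆ s.explored
  explored_subset : ∀ z ∈ s.explored,
    z ∈ X.initial ∨ ∃ p ∈ s.occupied, z ∈ cube p.2 X.boxRadius

variable {X} {R : Finset (Vertex d)}

lemma IsConsistent.occupy (hs : X.IsConsistent s) (hp : X.IsPossible s p) (hsR : s.explored ⊆ R)
    (hR : ∀ z ∈ R, z ∈ s.explored ∨ z ∈ cube p.center X.boxRadius) {y : Vertex d}
    (hy : y ∈ cube (X.center p.target) X.n) (hyR : cube y X.m ⊆ R) :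
    X.IsConsistent (s.occupy p.target y R) := by
  obtain ⟨hsource, hadj, htarget⟩ := hp
  rw [mem_examined, not_or] at htarget
  have hsource' : p.source ∈ s.occupiedSites := mem_occupiedSites.2 ⟨_, hsource⟩
  have hmono : AdjWithin X.graph s.occupiedSites ≤
      AdjWithin X.graph (s.occupy p.target y R).occupiedSites := fun u v h =>
    ⟨h.1, mem_occupiedSites_occupy.2 (Or.inr h.2.1), mem_occupiedSites_occupy.2 (Or.inr h.2.2)⟩
  have hreach : ∀ v ∈ s.occupiedSites,
      Relation.ReflTransGen (AdjWithin X.graph (s.occupy p.target y R).occupiedSites) X.root v :=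
    fun v hv => Relation.ReflTransGen.mono hmono _ _ (hs.reachable v hv)
  refine ⟨fun z hz => ?_, fun v hv hv' => ?_, fun v hv => ?_, fun v hv => ?_, ?_,
    hs.initial_subset.trans hsR, fun z hz => ?_⟩
  · rcases mem_occupied_occupy.1 hz with rfl | hz
    exacts [⟨hy, hyR⟩, (hs.cube_subset_explored z hz).imp_right fun h => h.trans hsR]
  · rcases mem_occupiedSites_occupy.1 hv' with rfl | hv'
    exacts [htarget.2 hv, hs.notMem_occupiedSites v hv hv']
  · obtain ⟨u, hu, huv⟩ := hs.exists_adj_failed v hv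
    exact ⟨u, mem_occupiedSites_occupy.2 (Or.inr hu), huv⟩
  · rcases mem_occupiedSites_occupy.1 hv with rfl | hv'
    exacts [(hreach _ hsource').tail ⟨hadj, mem_occupiedSites_occupy.2 (Or.inr hsource'), hv⟩,
      hreach v hv']
  · exact mem_occupiedSites_occupy.2 (Or.inr hs.root_mem)
  · rcases hR z hz with hz | hz
    · exact (hs.explored_subset z hz).imp_right fun ⟨r, hr, hzr⟩ =>
        ⟨r, mem_occupied_occupy.2 (Or.inr hr), hzr⟩
    · exact Or.inr ⟨_, mem_occupied_occupy.2 (Or.inr hsource), hz⟩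

lemma IsConsistent.fail (hs : X.IsConsistent s) (hp : X.IsPossible s p) (hsR : s.explored ⊆ R)
    (hR : ∀ z ∈ R, z ∈ s.explored ∨ z ∈ cube p.center X.boxRadius) :
    X.IsConsistent (s.fail p.target R) := by
  obtain ⟨hsource, hadj, htarget⟩ := hp
  rw [mem_examined, not_or] at htarget
  refine ⟨fun z hz => (hs.cube_subset_explored z hz).imp_right fun h => h.trans hsR,
    fun v hv => ?_, fun v hv => ?_, hs.reachable, hs.root_mem, hs.initial_subset.trans hsR,
    fun z hz => ?_⟩
  · rcases mem_failed_fail.1 hv with rfl | hv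
    exacts [htarget.1, hs.notMem_occupiedSites v hv]
  · rcases mem_failed_fail.1 hv with rfl | hv
    exacts [⟨_, mem_occupiedSites.2 ⟨_, hsource⟩, hadj⟩, hs.exists_adj_failed v hv]
  · rcases hR z hz with hz | hz
    exacts [hs.explored_subset z hz, Or.inr ⟨_, hsource, hz⟩]

lemma IsConsistent.next (hs : X.IsConsistent s) : X.IsConsistent (X.next w s) := by
  rcases h : X.nextMove s with _ | p
  · rwa [X.next_of_nextMove_eq_none h]
  · rw [X.next_of_nextMove_eq_some h]
    have hp := isPossible_of_nextMove_eq_some h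
    have hsR : s.explored ⊆ X.reveal w s p := subset_growFinset _ _ _ _
    have hR (z) (hz : z ∈ X.reveal w s p) : z ∈ s.explored ∨ z ∈ cube p.center X.boxRadius := by
      rw [← Finset.mem_coe, reveal, coe_growFinset] at hz
      exact grow_subset_union _ _ _ _ hz
    rcases X.update_eq_occupy_or_fail s p (X.reveal w s p) with ⟨y, hy, hyR, h⟩ | ⟨_, h⟩ <;> rw [h]
    exacts [hs.occupy hp hsR hR hy hyR, hs.fail hp hsR hR]

lemma isConsistent_state (hX : X.Admissible) (w : LayeredConfig d C) (t : ℕ) :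
    X.IsConsistent (X.state w t) := by
  induction t with
  | zero =>
    have hocc {v : V} : v ∈ (X.state w 0).occupiedSites ↔ v = X.root := by
      simp [mem_occupiedSites, state]
    refine ⟨?_, by simp [state], by simp [state], fun v hv => ?_, hocc.2 rfl,
      Finset.Subset.refl _, fun z => Or.inl⟩
    · simpa [state] using ⟨hX.seed_mem_cube, hX.cube_seed_subset⟩
    · rw [hocc.1 hv]
  | succ t ih =>
    rw [state_succ]
    exact ih.next

lemma IsConsistent.cube_center_subset (hs : X.IsConsistent s) (hX : X.Admissible)
    (hp : X.IsPossible s p) :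
    cube p.center X.boxRadius ⊆ cube (X.center p.target) X.zoneRadius := by
  intro z hz
  have hz' := mem_cube_add (mem_cube_add (hX.center_mem_cube _ _ hp.2.1)
    (hs.cube_subset_explored _ hp.1).1) hz
  refine cube_subset_cube ?_ hz'
  unfold boxRadius zoneRadius
  omega

variable (X)

/-- The coordinates on which the first visit to a state depends. -/
def revealed (s : ExplorationState d V) : Set (Edge d × Option C) :=
  layerEdge none '' (incidentEdges (s.explored : Set (Vertex d)) \ incidentEdges X.initial) ∪
    ⋃ u ∈ s.examined, layerEdge (some (X.color u)) ''
      innerEdges (cube (X.center u) X.zoneRadius : Set (Vertex d))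

lemma revealed_finite (s : ExplorationState d V) : (X.revealed s).Finite :=
  (((incidentEdges_finite _).subset Set.sdiff_subset).image _).union <|
    s.examined.finite_toSet.biUnion fun _ _ => (innerEdges_finite _).image _

lemma revealed_mono {s s' : ExplorationState d V} (hexp : s.explored ⊆ s'.explored)
    (hexam : s.examined ⊆ s'.examined) : X.revealed s ⊆ X.revealed s' :=
  Set.union_subset_union
    (Set.image_mono (Set.sdiff_subset_sdiff_left (incidentEdges_mono (Finset.coe_subset.2 hexp))))
    (Set.biUnion_subset_biUnion_left hexam)

variable {X}

lemma next_eq_next_of_forall_revealed (hX : X.Admissible) (hs : X.IsConsistent s)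
    (h : ∀ i ∈ X.revealed (X.next w s), w i = w' i) : X.next w' s = X.next w s := by
  rcases hp : X.nextMove s with _ | p
  · rw [X.next_of_nextMove_eq_none hp, X.next_of_nextMove_eq_none hp]
  rw [X.next_of_nextMove_eq_some hp] at h
  rw [X.next_of_nextMove_eq_some hp, X.next_of_nextMove_eq_some hp]
  congr 1
  rw [reveal, reveal, ← Finset.coe_inj, coe_growFinset, coe_growFinset]
  refine grow_eq_of_eqOn_incidentEdges_grow (fun e _ hgrow hS => ?_) fun e he => ?_
  · refine h _ (Or.inl ⟨e, ⟨?_, fun hini => hS ?_⟩, rfl⟩)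
    · rwa [explored_update, reveal, coe_growFinset]
    · exact incidentEdges_mono (Finset.coe_subset.2 hs.initial_subset) hini
  · refine h _ (Or.inr (Set.mem_biUnion (X.mem_examined_update.2 (Or.inl rfl)) ⟨e, ?_, rfl⟩))
    exact innerEdges_mono (Finset.coe_subset.2
      (hs.cube_center_subset hX (isPossible_of_nextMove_eq_some hp))) he

lemma state_eq_state_of_forall_revealed (hX : X.Admissible) {t : ℕ}
    (h : ∀ i ∈ X.revealed (X.state w t), w i = w' i) : X.state w' t = X.state w t := by
  induction t with
  | zero => rfl
  | succ t ih =>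
    rw [state_succ] at h
    have ih' := ih fun i hi => h i (X.revealed_mono (X.explored_subset_explored_next _ w)
      (X.examined_subset_examined_next _ w) hi)
    rw [state_succ, state_succ, ih',
      next_eq_next_of_forall_revealed hX (isConsistent_state hX w t) h]

lemma determinedBy_state_eq (hX : X.Admissible) (t : ℕ) (s : ExplorationState d V) :
    DeterminedBy {w | X.state w t = s} (X.revealed s) :=
  determinedBy_of_imp fun _ _ h hw => by
    subst hw
    exact state_eq_state_of_forall_revealed hX h

lemma measurableSet_state_eq (hX : X.Admissible) (t : ℕ) (s : ExplorationState d V) :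
    MeasurableSet {w | X.state w t = s} :=
  (determinedBy_state_eq hX t s).measurableSet (X.revealed_finite s)

lemma state_eq_state_of_forall_innerEdges (hX : X.Admissible) {T : Set (Vertex d)}
    (hT : ∀ v, ∀ x ∈ cube (X.center v) X.n, (cube x X.boxRadius : Set (Vertex d)) ⊆ T)
    (hnone : ∀ e ∈ innerEdges T \ incidentEdges X.initial, w (e, none) = w' (e, none))
    (hsome : ∀ e ∈ innerEdges T, ∀ c, w (e, some c) = w' (e, some c)) (t : ℕ) :
    X.state w' t = X.state w t := by
  induction t with
  | zero => rfl
  | succ t ih =>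
    have hs := isConsistent_state hX w t
    rw [state_succ, state_succ, ih]
    rcases hp : X.nextMove (X.state w t) with _ | p
    · rw [X.next_of_nextMove_eq_none hp, X.next_of_nextMove_eq_none hp]
    rw [X.next_of_nextMove_eq_some hp, X.next_of_nextMove_eq_some hp]
    have hB := hT _ _ (hs.cube_subset_explored _ (isPossible_of_nextMove_eq_some hp).1).1
    congr 1
    rw [reveal, reveal, ← Finset.coe_inj, coe_growFinset, coe_growFinset]
    refine grow_eq_of_eqOn_incidentEdges_grow (fun e he _ hS => ?_) fun e he => ?_
    · exact hnone e ⟨innerEdges_mono hB he, fun hini =>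
        hS (incidentEdges_mono (Finset.coe_subset.2 hs.initial_subset) hini)⟩
    · exact hsome e (innerEdges_mono hB he) _

end ExplorationScheme

section UnionOfLayers

variable {d : ℕ} {C V : Type*} {w : LayeredConfig d C}

open Classical in
/-- The configuration whose open edges are those open in at least one layer. -/
noncomputable def unionLayers (w : LayeredConfig d C) : Config d :=
  fun e => decide (∃ o, w (e, o) = true)

lemma step.unionLayers {o : Option C} {x y : Vertex d} (h : step (layer o w) x y) :
    step (unionLayers w) x y := by
  obtain ⟨e, he, ho⟩ := step_iff_exists_edge.1 h
  refine step_iff_exists_edge.2 ⟨e, he, ?_⟩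
  simpa [Perc.unionLayers] using ⟨o, ho⟩

lemma ExplorationScheme.exists_conn_of_mem_explored (X : ExplorationScheme d C V) {t : ℕ} :
    ∀ z ∈ (X.state w t).explored, ∃ a ∈ X.initial, Conn (unionLayers w) a z := by
  induction t with
  | zero => exact fun z hz => ⟨z, hz, .refl⟩
  | succ t ih =>
    rw [state_succ]
    rcases hp : X.nextMove (X.state w t) with _ | p
    · rwa [X.next_of_nextMove_eq_none hp]
    rw [X.next_of_nextMove_eq_some hp, explored_update]
    intro z hz
    rw [← Finset.mem_coe, reveal, coe_growFinset] at hz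
    obtain ⟨b, hb, hbz⟩ := hz
    obtain ⟨a, ha, hab⟩ := ih b hb
    refine ⟨a, ha, hab.trans (Relation.ReflTransGen.mono ?_ _ _ hbz)⟩
    rintro u v ⟨_, _, h | h⟩
    exacts [h.unionLayers, h.1.unionLayers]

end UnionOfLayers

namespace ExplorationScheme

open ExplorationState

variable {d : ℕ} {C V : Type*} {X : ExplorationScheme d C V} {s : ExplorationState d V}
  {p : Move d V} {q δ : unitInterval} {ε : ℝ} {a : ENNReal} {D : Finset V} {R : Finset (Vertex d)}
  {w : LayeredConfig d C} {t : ℕ}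

variable (X) in
/-- The event that the move `p` fails. -/
def MoveFails (s : ExplorationState d V) (p : Move d V) : Set (LayeredConfig d C) :=
  NoCubeReached X.m s.explored (cube p.center X.boxRadius) (cube (X.center p.target) X.n)
    (X.color p.target)

variable (X) in
/-- The coordinates used by the move `p`. -/
def moveCoords (s : ExplorationState d V) (p : Move d V) : Set (Edge d × Option C) :=
  layerEdge none '' (innerEdges (cube p.center X.boxRadius) \ incidentEdges s.explored) ∪
    layerEdge (some (X.color p.target)) '' innerEdges (cube p.center X.boxRadius)

lemma determinedBy_moveFails : DeterminedBy (X.MoveFails s p) (X.moveCoords s p) := by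
  refine determinedBy_of_imp fun w w' h hw y hy hc => hw y hy (hc.trans_eq ?_)
  refine grow_eq_of_eqOn_incidentEdges_grow (fun e he _ hS => ?_) fun e he => ?_
  exacts [h _ (Or.inl ⟨e, ⟨he, hS⟩, rfl⟩), h _ (Or.inr ⟨e, he, rfl⟩)]

lemma measurableSet_moveFails : MeasurableSet (X.MoveFails s p) :=
  measurableSet_noCubeReached _ _ _

lemma exists_cube_subset_reveal_of_notMem_moveFails (hw : w ∉ X.MoveFails s p) :
    ∃ y ∈ cube (X.center p.target) X.n, cube y X.m ⊆ X.reveal w s p := by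
  simp only [MoveFails, NoCubeReached, Set.mem_ofPred_eq, not_forall, not_not] at hw
  obtain ⟨y, hy, hyR⟩ := hw
  refine ⟨y, hy, ?_⟩
  rwa [reveal, ← Finset.coe_subset, coe_growFinset]

lemma disjoint_revealed_moveCoords (hX : X.Admissible) (hs : X.IsConsistent s)
    (hp : X.IsPossible s p) : Disjoint (X.revealed s) (X.moveCoords s p) := by
  rw [Set.disjoint_left]
  rintro _ (⟨e, he, rfl⟩ | hi) (⟨e', he', heq⟩ | ⟨e', he', heq⟩)
  · obtain rfl : e' = e := congrArg Prod.fst heq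
    exact he'.2 he.1
  · cases congrArg Prod.snd heq
  all_goals
    obtain ⟨u, hu, e, he, rfl⟩ := Set.mem_iUnion₂.1 hi
  · cases congrArg Prod.snd heq
  · obtain rfl : e' = e := congrArg Prod.fst heq
    have hcolor : X.color p.target = X.color u := Option.some.inj (congrArg Prod.snd heq)
    have hne : u ≠ p.target := by
      rintro rfl
      exact hp.2.2 hu
    obtain ⟨x, y, hxy, rfl⟩ := exists_eq_edge e'
    exact Finset.disjoint_left.1 (hX.disjoint_zones u p.target hne hcolor.symm)
      ((mem_innerEdges rfl).1 he).1
      (hs.cube_center_subset hX hp ((mem_innerEdges rfl).1 he').1)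

variable (X) in
/-- Every move towards a site fails with probability at most `ε`, whatever has been explored. -/
def MoveFailureLe (q δ : unitInterval) (ε : ℝ) : Prop :=
  ∀ (S : Finset (Vertex d)) (v u : V) (x : Vertex d), X.graph.Adj v u → cube x X.m ⊆ S →
    x ∈ cube (X.center v) X.n → (layeredPercolation d C q δ).real
      (NoCubeReached X.m S (cube x X.boxRadius) (cube (X.center u) X.n) (X.color u)) ≤ ε

lemma measure_state_eq_inter_moveFails_le (hX : X.Admissible) (hε : X.MoveFailureLe q δ ε)
    (hp : X.nextMove s = some p) :
    layeredPercolation d C q δ ({w | X.state w t = s} ∩ X.MoveFails s p) ≤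
      ENNReal.ofReal ε * layeredPercolation d C q δ {w | X.state w t = s} := by
  rcases Set.eq_empty_or_nonempty {w | X.state w t = s} with hempty | ⟨w₀, rfl⟩
  · rw [hempty, Set.empty_inter, measure_empty]
    exact zero_le
  have hs := isConsistent_state hX w₀ t
  have hp' := isPossible_of_nextMove_eq_some hp
  rw [infinitePi_inter _ (measurableSet_state_eq hX t _) measurableSet_moveFails
    (determinedBy_state_eq hX t _) determinedBy_moveFails (disjoint_revealed_moveCoords hX hs hp'),
    mul_comm]
  gcongr
  rw [← ofReal_measureReal]
  have hcube := hs.cube_subset_explored _ hp'.1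
  exact ENNReal.ofReal_le_ofReal (hε _ _ _ _ hp'.2.1 hcube.2 hcube.1)

open Classical in
/-- The bound on the conditional probability, in the state `s`, that all the sites of `D` eventually
fail when each examination fails with conditional probability at most `a`. -/
noncomputable def failPotential (a : ENNReal) (D : Finset V) (s : ExplorationState d V) : ENNReal :=
  if Disjoint D s.occupiedSites then a ^ (D \ s.failed).card else 0

lemma failPotential_update_le_of_notMem (h : p.target ∉ D) :
    failPotential a D (X.update s p R) ≤ failPotential a D s := by
  classical
  rcases X.update_eq_occupy_or_fail s p R with ⟨y, _, _, hu⟩ | ⟨_, hu⟩ <;> rw [hu]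
  · unfold failPotential
    split_ifs with hocc hocc'
    · exact le_rfl
    · exact (hocc' (hocc.mono_right fun v hv => mem_occupiedSites_occupy.2 (Or.inr hv))).elim
    all_goals exact zero_le
  · have hD : D \ (s.fail p.target R).failed = D \ s.failed := by
      ext v
      simp only [Finset.mem_sdiff, mem_failed_fail, not_or]
      exact and_congr_right fun hv => and_iff_right (ne_of_mem_of_not_mem hv h)
    rw [failPotential, failPotential, hD, occupiedSites_fail]

lemma failPotential_occupy_of_mem {u : V} {y : Vertex d} (h : u ∈ D) :
    failPotential a D (s.occupy u y R) = 0 :=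
  if_neg (Finset.not_disjoint_iff.2 ⟨u, h, mem_occupiedSites_occupy.2 (Or.inl rfl)⟩)

lemma failPotential_fail_mul_of_mem {u : V} (h : u ∈ D) (hu : u ∉ s.failed) :
    failPotential a D (s.fail u R) * a = failPotential a D s := by
  classical
  have hD : D \ s.failed = insert u (D \ (s.fail u R).failed) := by
    ext v
    simp only [Finset.mem_sdiff, mem_failed_fail, Finset.mem_insert]
    by_cases hv : v = u
    · simp [hv, h, hu]
    · simp [hv]
  have hu' : u ∉ D \ (s.fail u R).failed := fun hu' =>
    (Finset.mem_sdiff.1 hu').2 (mem_failed_fail.2 (Or.inl rfl))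
  rw [failPotential, failPotential, hD, Finset.card_insert_of_notMem hu', pow_succ, ite_mul,
    zero_mul, occupiedSites_fail]

lemma failPotential_update_le_indicator (ha0 : a ≠ 0) (ha : a ≠ ⊤) (h : p.target ∈ D)
    (hp : p.target ∉ s.failed) : failPotential a D (X.update s p (X.reveal w s p)) ≤
      (X.MoveFails s p).indicator (fun _ => failPotential a D s / a) w := by
  rcases X.update_eq_occupy_or_fail s p (X.reveal w s p) with ⟨y, _, _, hu⟩ | ⟨hno, hu⟩ <;> rw [hu]
  · rw [failPotential_occupy_of_mem h]
    exact zero_le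
  · have hw : w ∈ X.MoveFails s p := by
      by_contra hw
      obtain ⟨y, hy, hyR⟩ := exists_cube_subset_reveal_of_notMem_moveFails hw
      exact hno y hy hyR
    rw [Set.indicator_of_mem hw, ENNReal.le_div_iff_mul_le (Or.inl ha0) (Or.inl ha),
      failPotential_fail_mul_of_mem h hp]

lemma setLIntegral_failPotential_next_le (hX : X.Admissible) (hε0 : 0 < ε)
    (hε : X.MoveFailureLe q δ ε) :
    ∫⁻ w in {w | X.state w t = s}, failPotential (ENNReal.ofReal ε) D (X.next w s)
        ∂layeredPercolation d C q δ ≤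
      failPotential (ENNReal.ofReal ε) D s * layeredPercolation d C q δ {w | X.state w t = s} := by
  rw [← setLIntegral_const]
  rcases hp : X.nextMove s with _ | p
  · simp only [X.next_of_nextMove_eq_none hp, le_refl]
  simp only [X.next_of_nextMove_eq_some hp]
  by_cases hD : p.target ∈ D
  swap
  · exact lintegral_mono fun w => failPotential_update_le_of_notMem hD
  have ha0 : ENNReal.ofReal ε ≠ 0 := (ENNReal.ofReal_pos.2 hε0).ne'
  have hfailed : p.target ∉ s.failed := fun h =>
    (isPossible_of_nextMove_eq_some hp).2.2 (mem_examined.2 (Or.inr h))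
  refine (lintegral_mono fun w => failPotential_update_le_indicator ha0 ENNReal.ofReal_ne_top hD
    hfailed).trans ?_
  rw [lintegral_indicator_const measurableSet_moveFails, setLIntegral_const,
    Measure.restrict_apply measurableSet_moveFails, Set.inter_comm]
  refine (mul_le_mul_right (measure_state_eq_inter_moveFails_le hX hε hp) _).trans ?_
  rw [← mul_assoc, ENNReal.div_mul_cancel ha0 ENNReal.ofReal_ne_top]

lemma pairwise_disjoint_state_eq :
    Pairwise (Function.onFun Disjoint fun s => {w | X.state w t = s}) := fun _ _ hne =>
  Set.disjoint_left.2 fun _ h h' => hne (h.symm.trans h')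

lemma lintegral_failPotential_state_succ_le [Countable V] (hX : X.Admissible) (hε0 : 0 < ε)
    (hε : X.MoveFailureLe q δ ε) :
    ∫⁻ w, failPotential (ENNReal.ofReal ε) D (X.state w (t + 1)) ∂layeredPercolation d C q δ ≤
      ∫⁻ w, failPotential (ENNReal.ofReal ε) D (X.state w t) ∂layeredPercolation d C q δ := by
  refine lintegral_le_lintegral_of_forall_setLIntegral_le (measurableSet_state_eq hX t)
    pairwise_disjoint_state_eq (Set.iUnion_eq_univ_iff.2 fun w => ⟨_, rfl⟩) fun s => ?_
  have hm := measurableSet_state_eq hX t s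
  calc ∫⁻ w in {w | X.state w t = s}, failPotential (ENNReal.ofReal ε) D (X.state w (t + 1))
          ∂layeredPercolation d C q δ
      = ∫⁻ w in {w | X.state w t = s}, failPotential (ENNReal.ofReal ε) D (X.next w s)
          ∂layeredPercolation d C q δ :=
        setLIntegral_congr_fun hm fun w hw => by
          simp only [state_succ, show X.state w t = s from hw]
    _ ≤ failPotential (ENNReal.ofReal ε) D s *
          layeredPercolation d C q δ {w | X.state w t = s} :=
        setLIntegral_failPotential_next_le hX hε0 hε
    _ = ∫⁻ w in {w | X.state w t = s}, failPotential (ENNReal.ofReal ε) D (X.state w t)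
          ∂layeredPercolation d C q δ := by
        rw [← setLIntegral_const]
        exact setLIntegral_congr_fun hm fun w hw => by simp only [show X.state w t = s from hw]

lemma lintegral_failPotential_state_le [Countable V] (hX : X.Admissible) (hε0 : 0 < ε)
    (hε : X.MoveFailureLe q δ ε) (D : Finset V) (t : ℕ) :
    ∫⁻ w, failPotential (ENNReal.ofReal ε) D (X.state w t) ∂layeredPercolation d C q δ ≤
      ENNReal.ofReal ε ^ D.card := by
  induction t with
  | zero =>
    refine (lintegral_mono (g := fun _ => ENNReal.ofReal ε ^ D.card) fun w => ?_).trans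
      (by simp)
    unfold failPotential
    split_ifs
    · simp [state]
    · exact zero_le
  | succ t ih => exact (lintegral_failPotential_state_succ_le hX hε0 hε).trans ih

lemma measurableSet_state_mem [Countable V] (hX : X.Admissible) (t : ℕ)
    (A : Set (ExplorationState d V)) : MeasurableSet {w | X.state w t ∈ A} := by
  have hA : {w | X.state w t ∈ A} = ⋃ s ∈ A, {w | X.state w t = s} := by
    ext w
    simp
  rw [hA]
  exact .biUnion A.to_countable fun s _ => measurableSet_state_eq hX t s

lemma measure_subset_failed_le [Countable V] (hX : X.Admissible) (hε0 : 0 < ε)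
    (hε : X.MoveFailureLe q δ ε) (D : Finset V) (t : ℕ) :
    layeredPercolation d C q δ {w | D ⊆ (X.state w t).failed} ≤ ENNReal.ofReal ε ^ D.card := by
  classical
  refine le_trans ?_ (lintegral_failPotential_state_le hX hε0 hε D t)
  have hm : MeasurableSet {w | D ⊆ (X.state w t).failed} :=
    measurableSet_state_mem hX t {s | D ⊆ s.failed}
  rw [← lintegral_indicator_one hm]
  refine lintegral_mono (Set.indicator_le fun w hw => ?_)
  have hdisj : Disjoint D (X.state w t).occupiedSites := Finset.disjoint_left.2 fun v hv =>
    (isConsistent_state hX w t).notMem_occupiedSites v (hw hv)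
  rw [failPotential, if_pos hdisj, Finset.sdiff_eq_empty_iff_subset.2 hw]
  exact (pow_zero _).ge

theorem real_exists_subset_failed_le [Countable V] (hX : X.Admissible) (hε0 : 0 < ε)
    (hε : X.MoveFailureLe q δ ε) (D : Finset V) :
    (layeredPercolation d C q δ).real {w | ∃ t, D ⊆ (X.state w t).failed} ≤ ε ^ D.card := by
  have hmono : Monotone fun t => {w | D ⊆ (X.state w t).failed} :=
    monotone_nat_of_le_succ fun t w (hw : D ⊆ _) => hw.trans <| by
      rw [state_succ]
      exact X.failed_subset_failed_next _ _
  refine ENNReal.toReal_le_of_le_ofReal (pow_nonneg hε0.le _) ?_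
  rw [Set.ofPred_exists, hmono.measure_iUnion, ENNReal.ofReal_pow hε0.le]
  exact iSup_le (measure_subset_failed_le hX hε0 hε D)

lemma le_card_examined_of_forall_nextMove_ne_none (h : ∀ t, X.nextMove (X.state w t) ≠ none) :
    ∀ t, t ≤ (X.state w t).examined.card
  | 0 => Nat.zero_le _
  | t + 1 => by
    obtain ⟨p, hp⟩ := Option.ne_none_iff_exists'.1 (h t)
    have hlt : (X.state w t).examined ⊂ (X.state w (t + 1)).examined := by
      rw [state_succ]
      refine (Finset.ssubset_iff_of_subset (X.examined_subset_examined_next _ w)).2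
        ⟨p.target, ?_, (isPossible_of_nextMove_eq_some hp).2.2⟩
      rw [X.next_of_nextMove_eq_some hp]
      exact X.mem_examined_update.2 (Or.inl rfl)
    exact (le_card_examined_of_forall_nextMove_ne_none h t).trans_lt (Finset.card_lt_card hlt)

theorem infinite_occupied_of_forall_nextMove_ne_none (hX : X.Admissible)
    (hfin : ∀ v, (X.graph.neighborSet v).Finite) (h : ∀ t, X.nextMove (X.state w t) ≠ none) :
    {v | ∃ t, v ∈ (X.state w t).occupiedSites}.Infinite := by
  intro hocc
  have hN := hocc.union (hocc.biUnion fun v _ => hfin v)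
  have hsub (t : ℕ) : (X.state w t).examined ⊆ hN.toFinset := by
    intro v hv
    rw [Set.Finite.mem_toFinset]
    rcases mem_examined.1 hv with hv | hv
    · exact Or.inl ⟨t, hv⟩
    · obtain ⟨u, hu, huv⟩ := (isConsistent_state hX w t).exists_adj_failed v hv
      exact Or.inr (Set.mem_biUnion (x := u) ⟨t, hu⟩ huv)
  have hcard := (le_card_examined_of_forall_nextMove_ne_none h (hN.toFinset.card + 1)).trans
    (Finset.card_le_card (hsub _))
  omega

end ExplorationScheme

/-! ### King-connectivity of planar boundaries -/

section Planar

open Relation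

/-- The sites of the renormalised lattice. -/
abbrev Site := ℕ × ℕ

/-- The nearest-neighbour graph on the sites. -/
abbrev quadrant : SimpleGraph Site :=
  (SimpleGraph.hasse ℕ).boxProd (SimpleGraph.hasse ℕ)

/-- The graph of the moves of a chess king, in which the boundaries of the connected sets of
`quadrant` are connected. -/
def kingGraph : SimpleGraph Site where
  Adj u v := u ≠ v ∧ u.1 ≤ v.1 + 1 ∧ v.1 ≤ u.1 + 1 ∧ u.2 ≤ v.2 + 1 ∧ v.2 ≤ u.2 + 1
  symm := ⟨fun _ _ h => ⟨h.1.symm, by omega⟩⟩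
  loopless := ⟨fun _ h => h.1 rfl⟩

lemma quadrant_adj {u v : Site} : quadrant.Adj u v ↔
    (u.1 + 1 = v.1 ∨ v.1 + 1 = u.1) ∧ u.2 = v.2 ∨ (u.2 + 1 = v.2 ∨ v.2 + 1 = u.2) ∧ u.1 = v.1 := by
  simp only [SimpleGraph.boxProd_adj, SimpleGraph.hasse_adj, Nat.covBy_iff_add_one_eq]

lemma quadrant_adj_right (x y : ℕ) : quadrant.Adj (x, y) (x + 1, y) :=
  quadrant_adj.2 (Or.inl ⟨Or.inl rfl, rfl⟩)

lemma quadrant_adj_up (x y : ℕ) : quadrant.Adj (x, y) (x, y + 1) :=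
  quadrant_adj.2 (Or.inr ⟨Or.inl rfl, rfl⟩)

instance {V : Type*} (G : SimpleGraph V) (A : Set V) : Std.Symm (AdjWithin G A) :=
  ⟨fun _ _ h => ⟨h.1.symm, h.2.2, h.2.1⟩⟩

lemma exists_discrete_potential {A : Type*} [AddCommMonoid A] (hor ver : ℕ → ℕ → A)
    (hsq : ∀ x y, hor x y + ver (x + 1) y = ver x y + hor x (y + 1)) :
    ∃ B : Site → A, (∀ x y, B (x + 1, y) = B (x, y) + hor x y) ∧
      ∀ x y, B (x, y + 1) = B (x, y) + ver x y := by
  let B : Site → A := fun v =>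
    ∑ i ∈ Finset.range v.1, hor i 0 + ∑ j ∈ Finset.range v.2, ver v.1 j
  have hver : ∀ x y, B (x, y + 1) = B (x, y) + ver x y := fun x y => by
    simp only [B, Finset.sum_range_succ, add_assoc]
  refine ⟨B, fun x y => ?_, hver⟩
  induction y with
  | zero => simp [B, Finset.sum_range_succ]
  | succ y ih => rw [hver, hver, ih, add_assoc, hsq, ← add_assoc]

lemma exists_quadrant_potential (φ : Site → Site → ZMod 2) (hφ : ∀ u v, φ u v = φ v u)
    (hsq : ∀ x y, φ (x, y) (x + 1, y) + φ (x + 1, y) (x + 1, y + 1) =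
      φ (x, y) (x, y + 1) + φ (x, y + 1) (x + 1, y + 1)) :
    ∃ B : Site → ZMod 2, ∀ u v, quadrant.Adj u v → B v = B u + φ u v := by
  obtain ⟨B, hhor, hver⟩ := exists_discrete_potential
    (fun x y => φ (x, y) (x + 1, y)) (fun x y => φ (x, y) (x, y + 1)) hsq
  have hback : ∀ {u v}, B v = B u + φ u v → B u = B v + φ v u := fun {u v} h => by
    rw [h, hφ v u, add_assoc, CharTwo.add_self_eq_zero, add_zero]
  refine ⟨B, ?_⟩
  rintro ⟨x, y⟩ ⟨x', y'⟩ h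
  rcases (by simpa only using quadrant_adj.1 h :
    (x + 1 = x' ∨ x' + 1 = x) ∧ y = y' ∨ (y + 1 = y' ∨ y' + 1 = y) ∧ x = x')
    with ⟨rfl | rfl, rfl⟩ | ⟨rfl | rfl, rfl⟩
  exacts [hhor _ _, hback (hhor _ _), hver _ _, hback (hver _ _)]

section Crossing

variable {V : Type*} {E K : Set V} {u v : V}

open Classical in
/-- The indicator modulo `2` that exactly one of `u` and `v` belongs to `E`, this one being
moreover in `K`. -/
noncomputable def crossing (E K : Set V) (u v : V) : ZMod 2 :=
  if (u ∈ E ∧ u ∈ K ∧ v ∉ E) ∨ (v ∈ E ∧ v ∈ K ∧ u ∉ E) then 1 else 0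

lemma crossing_comm : crossing E K u v = crossing E K v u := by
  unfold crossing
  congr 1
  rw [or_comm]

lemma crossing_eq_zero_of_iff (h : u ∈ E ↔ v ∈ E) : crossing E K u v = 0 :=
  if_neg (by tauto)

lemma crossing_eq_one (hu : u ∉ E) (hv : v ∈ E) (hvK : v ∈ K) : crossing E K u v = 1 :=
  if_pos (Or.inr ⟨hv, hvK, hu⟩)

lemma mem_of_crossing_eq_one (hu : u ∉ E) (h : crossing E K u v = 1) : v ∈ K := by
  by_contra hv
  rw [crossing, if_neg (by tauto)] at h
  exact zero_ne_one h

open Classical in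
lemma exists_forall_crossing_eq_mul (G : SimpleGraph V) (Q : Set V)
    (hK : ∀ u ∈ Q, ∀ v ∈ Q, ∀ u' ∈ Q, ∀ v' ∈ Q, G.Adj u v → G.Adj u' v' →
      u ∈ E → v ∉ E → u' ∈ E → v' ∉ E → u ∈ K → u' ∈ K) :
    ∃ κ : ZMod 2, ∀ u ∈ Q, ∀ v ∈ Q, G.Adj u v →
      crossing E K u v = κ * (E.indicator 1 u + E.indicator 1 v) := by
  by_cases h : ∃ u ∈ Q, ∃ v ∈ Q, G.Adj u v ∧ u ∈ E ∧ v ∉ E ∧ u ∈ K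
  · obtain ⟨a, ha, b, hb, hab, haE, hbE, haK⟩ := h
    have hmem : ∀ u ∈ Q, ∀ v ∈ Q, G.Adj u v → u ∈ E → v ∉ E → u ∈ K :=
      fun u hu v hv huv huE hvE => hK a ha b hb u hu v hv hab huv haE hbE huE hvE haK
    refine ⟨1, fun u hu v hv huv => ?_⟩
    by_cases huE : u ∈ E <;> by_cases hvE : v ∈ E
    · simp [crossing, huE, hvE, CharTwo.add_self_eq_zero]
    · simp [crossing, huE, hvE, hmem u hu v hv huv huE hvE]
    · simp [crossing, huE, hvE, hmem v hv u hu huv.symm hvE huE]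
    · simp [crossing, huE, hvE]
  · push Not at h
    refine ⟨0, fun u hu v hv huv => ?_⟩
    rw [zero_mul, crossing, if_neg]
    rintro (⟨huE, huK, hvE⟩ | ⟨hvE, hvK, huE⟩)
    exacts [h u hu v hv huv huE hvE huK, h v hv u hu huv.symm hvE huE hvK]

end Crossing

/-- The sites outside `O` which are connected to `z` outside `O`. -/
def exterior (O : Set Site) (z : Site) : Set Site :=
  {v | v ∉ O ∧ ReflTransGen (AdjWithin quadrant Oᶜ) v z}

/-- The exterior sites adjacent to `O`. -/
def outerBoundary (O : Set Site) (z : Site) : Set Site :=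
  {v | v ∈ exterior O z ∧ ∃ u ∈ O, quadrant.Adj u v}

variable {O F : Set Site} {z u v : Site}

lemma mem_outerBoundary_of_adj (hu : u ∈ exterior O z) (h : quadrant.Adj u v)
    (hv : v ∉ exterior O z) : u ∈ outerBoundary O z := by
  refine ⟨hu, v, ?_, h.symm⟩
  by_contra hvO
  exact hv ⟨hvO, ReflTransGen.head ⟨h.symm, hvO, hu.1⟩ hu.2⟩

lemma exists_crossing_potential {K : Set Site}
    (hK : ∀ u v, AdjWithin kingGraph (outerBoundary O z) u v → u ∈ K → v ∈ K) :
    ∃ B : Site → ZMod 2, ∀ u v, quadrant.Adj u v → B v = B u + crossing (exterior O z) K u v := by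
  set E := exterior O z
  have hsquare : ∀ x y, ∃ κ : ZMod 2, ∀ u ∈ Set.Icc (x, y) (x + 1, y + 1),
      ∀ v ∈ Set.Icc (x, y) (x + 1, y + 1), quadrant.Adj u v →
        crossing E K u v = κ * (E.indicator 1 u + E.indicator 1 v) := by
    refine fun x y => exists_forall_crossing_eq_mul _ _ ?_
    intro u hu v _ u' hu' v' _ huv huv' huE hvE huE' hvE' huK
    rcases eq_or_ne u u' with rfl | hne
    · exact huK
    refine hK u u' ⟨⟨hne, ?_⟩, mem_outerBoundary_of_adj huE huv hvE,
      mem_outerBoundary_of_adj huE' huv' hvE'⟩ huK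
    simp only [Set.mem_Icc, Prod.le_def] at hu hu'
    omega
  refine exists_quadrant_potential (crossing E K) (fun _ _ => crossing_comm) fun x y => ?_
  obtain ⟨κ, hκ⟩ := hsquare x y
  rw [hκ _ (by simp) _ (by simp) (quadrant_adj_right _ _), hκ _ (by simp) _ (by simp)
    (quadrant_adj_up _ _), hκ _ (by simp) _ (by simp) (quadrant_adj_up _ _),
    hκ _ (by simp) _ (by simp) (quadrant_adj_right _ _)]
  generalize E.indicator (1 : Site → ZMod 2) (x + 1, y) = e
  generalize E.indicator (1 : Site → ZMod 2) (x, y + 1) = f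
  linear_combination κ * (CharTwo.add_self_eq_zero e) - κ * (CharTwo.add_self_eq_zero f)

/- Modulo 2, the number of edges of a path of `quadrant` having an exterior endpoint in `K` and
another endpoint which is not exterior only depends on the endpoints of the path: it is even along
unit squares, because the exterior endpoints of the crossed edges of a square are king-adjacent.
A path from `O` to `a` and a path from `O` to `b` therefore cross `K` with the same parity. -/
lemma reflTransGen_king_of_mem_outerBoundary {r : Site}
    (hconn : ∀ v ∈ O, ReflTransGen (AdjWithin quadrant O) r v) {a b : Site}
    (ha : a ∈ outerBoundary O z) (hb : b ∈ outerBoundary O z) :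
    ReflTransGen (AdjWithin kingGraph (outerBoundary O z)) a b := by
  set E := exterior O z
  let K : Set Site := {v | ReflTransGen (AdjWithin kingGraph (outerBoundary O z)) a v}
  obtain ⟨B, hB⟩ := exists_crossing_potential (O := O) (z := z) (K := K)
    fun _ _ huv hu => hu.tail huv
  have hconst : ∀ u v, quadrant.Adj u v → (u ∈ E ↔ v ∈ E) → B v = B u := fun u v huv hiff => by
    rw [hB u v huv, crossing_eq_zero_of_iff hiff, add_zero]
  have hBO : ∀ v ∈ O, B v = B r := fun v hv => by
    induction hconn v hv with
    | refl => rfl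
    | tail _ huv ih =>
      exact (hconst _ _ huv.1 (iff_of_false (fun h => h.1 huv.2.1) fun h => h.1 huv.2.2)).trans
        (ih huv.2.1)
  have hBE : ∀ v ∈ E, B v = B z := by
    rintro v ⟨_, hv⟩
    induction hv using ReflTransGen.head_induction_on with
    | refl => rfl
    | head huv hv ih =>
      exact (hconst _ _ huv.1 (iff_of_true ⟨huv.2.1, .head huv hv⟩ ⟨huv.2.2, hv⟩)).symm.trans
        (ih huv.2.2)
  obtain ⟨haE, u, hu, hua⟩ := ha
  obtain ⟨hbE, v, hv, hvb⟩ := hb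
  refine mem_of_crossing_eq_one (E := E) (K := K) (fun h => h.1 hv) ?_
  have hcross : B r + crossing E K v b = B r + 1 := by
    rw [← crossing_eq_one (E := E) (K := K) (fun h => h.1 hu) haE ReflTransGen.refl, ← hBO v hv,
      ← hB v b hvb, hBO v hv, ← hBO u hu, ← hB u a hua, hBE b hbE, hBE a haE]
  exact add_left_cancel hcross

lemma reflTransGen_adjWithin_row {A : Set Site} {x y : ℕ} (h : ∀ j, x ≤ j → (j, y) ∈ A) (i : ℕ) :
    ReflTransGen (AdjWithin quadrant A) (x, y) (x + i, y) := by
  induction i with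
  | zero => exact .refl
  | succ i ih => exact ih.tail ⟨quadrant_adj_right _ _, h _ (by omega), h _ (by omega)⟩

lemma reflTransGen_adjWithin_column {A : Set Site} {x y : ℕ} (h : ∀ j, y ≤ j → (x, j) ∈ A)
    (i : ℕ) : ReflTransGen (AdjWithin quadrant A) (x, y) (x, y + i) := by
  induction i with
  | zero => exact .refl
  | succ i ih => exact ih.tail ⟨quadrant_adj_up _ _, h _ (by omega), h _ (by omega)⟩

section Bounded

variable {h x y : ℕ}

lemma notMem_of_subset_Iic (hO : O ⊆ Set.Iic (h, h)) (hv : h < v.1 ∨ h < v.2) : v ∉ O := by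
  intro hvO
  have := Prod.le_def.1 (hO hvO)
  omega

lemma reflTransGen_far_corner (hO : O ⊆ Set.Iic (h, h)) (x y : ℕ) :
    ReflTransGen (AdjWithin quadrant Oᶜ) (x + (h + 1), y + (h + 1)) (h + 1, h + 1) := by
  refine ReflTransGen.stdSymm.symm _ _ (.trans (b := (x + (h + 1), h + 1)) ?_ ?_)
  · rw [add_comm x]
    exact reflTransGen_adjWithin_row
      (fun _ _ => notMem_of_subset_Iic hO (Or.inr (Nat.lt_succ_self h))) x
  · rw [add_comm y]
    exact reflTransGen_adjWithin_column
      (fun _ _ => notMem_of_subset_Iic hO (Or.inl (by simp only; omega))) y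

lemma mem_exterior_of_row (hO : O ⊆ Set.Iic (h, h)) (hrow : ∀ j, x ≤ j → (j, y) ∉ O) :
    (x, y) ∈ exterior O (h + 1, h + 1) := by
  refine ⟨hrow x le_rfl, (reflTransGen_adjWithin_row hrow (h + 1)).trans
    (.trans ?_ (reflTransGen_far_corner hO x y))⟩
  exact reflTransGen_adjWithin_column
    (fun _ _ => notMem_of_subset_Iic hO (Or.inl (by simp only; omega))) _

lemma mem_exterior_of_column (hO : O ⊆ Set.Iic (h, h)) (hcol : ∀ j, y ≤ j → (x, j) ∉ O) :
    (x, y) ∈ exterior O (h + 1, h + 1) := by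
  refine ⟨hcol y le_rfl, (reflTransGen_adjWithin_column hcol (h + 1)).trans
    (.trans ?_ (reflTransGen_far_corner hO x y))⟩
  exact reflTransGen_adjWithin_row
    (fun _ _ => notMem_of_subset_Iic hO (Or.inr (by simp only; omega))) _

lemma mem_outerBoundary_of_row (hO : O ⊆ Set.Iic (h, h)) (hxy : (x, y) ∈ O)
    (hrow : ∀ j, x < j → (j, y) ∉ O) : (x + 1, y) ∈ outerBoundary O (h + 1, h + 1) :=
  ⟨mem_exterior_of_row hO fun j hj => hrow j hj, _, hxy, quadrant_adj_right _ _⟩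

lemma mem_outerBoundary_of_column (hO : O ⊆ Set.Iic (h, h)) (hxy : (x, y) ∈ O)
    (hcol : ∀ j, y < j → (x, j) ∉ O) : (x, y + 1) ∈ outerBoundary O (h + 1, h + 1) :=
  ⟨mem_exterior_of_column hO fun j hj => hcol j hj, _, hxy, quadrant_adj_up _ _⟩

end Bounded

section Chains

variable {V : Type*} {G : SimpleGraph V} {S : Set V} {a b : V}

lemma reachable_induce_of_reflTransGen (ha : a ∈ S) (h : ReflTransGen (AdjWithin G S) a b) :
    ∃ hb : b ∈ S, (G.induce S).Reachable ⟨a, ha⟩ ⟨b, hb⟩ := by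
  induction h with
  | refl => exact ⟨ha, .refl _⟩
  | tail _ huv ih =>
    obtain ⟨_, hreach⟩ := ih
    exact ⟨huv.2.2, hreach.trans (SimpleGraph.Adj.reachable huv.1)⟩

lemma abs_sub_le_walk_length {f : V → ℤ} (hf : ∀ u v, G.Adj u v → |f u - f v| ≤ 1)
    (p : G.Walk a b) : |f a - f b| ≤ p.length := by
  induction p with
  | nil => simp
  | cons hadj q ih =>
    rw [SimpleGraph.Walk.length_cons]
    push_cast
    exact (abs_sub_le _ _ _).trans (by linarith [hf _ _ hadj])

lemma exists_nodup_isChain_of_reflTransGen {f : V → ℤ}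
    (hf : ∀ u v, G.Adj u v → |f u - f v| ≤ 1) (ha : a ∈ S)
    (h : ReflTransGen (AdjWithin G S) a b) {ℓ : ℕ} (hℓ : ℓ ≤ |f a - f b|) :
    ∃ l : List V, (a :: l).Nodup ∧ (a :: l).IsChain G.Adj ∧ l.length = ℓ ∧
      ∀ v ∈ a :: l, v ∈ S := by
  classical
  obtain ⟨hb, hreach⟩ := reachable_induce_of_reflTransGen ha h
  obtain ⟨p, hp⟩ := hreach.exists_isPath
  have hlength : ℓ ≤ p.length := by
    exact_mod_cast hℓ.trans (abs_sub_le_walk_length (f := fun v : S => f v) (fun _ _ => hf _ _) p)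
  have htake : a :: (p.support.tail.take ℓ).map Subtype.val =
      (p.support.take (ℓ + 1)).map Subtype.val := by
    conv_rhs => rw [← p.cons_tail_support, List.take_succ_cons, List.map_cons]
  refine ⟨(p.support.tail.take ℓ).map Subtype.val, ?_, ?_, ?_, ?_⟩
  · rw [htake]
    exact (hp.support_nodup.sublist (List.take_sublist _ _)).map Subtype.val_injective
  · rw [htake, List.isChain_map]
    exact p.isChain_adj_support.take _
  · simp [hlength]
  · rintro v hv
    obtain ⟨u, -, rfl⟩ := List.mem_map.1 (htake ▸ hv)
    exact u.2

lemma exists_finset_isChain_mem {R : V → V → Prop} (N : V → Finset V) (hN : ∀ u v, R u v → v ∈ N u)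
    {D : ℕ} (hD : ∀ v, (N v).card ≤ D) (ℓ : ℕ) (v : V) :
    ∃ L : Finset (List V), L.card ≤ D ^ ℓ ∧
      ∀ l : List V, (v :: l).IsChain R → l.length = ℓ → v :: l ∈ L := by
  classical
  induction ℓ generalizing v with
  | zero => exact ⟨{[v]}, by simp, fun l _ hl => by simp [List.length_eq_zero_iff.1 hl]⟩
  | succ ℓ ih =>
    choose L hcard hL using ih
    refine ⟨(N v).biUnion fun u => (L u).image (List.cons v), ?_, ?_⟩
    · rw [pow_succ']
      exact (Finset.card_biUnion_le_card_mul _ _ _ fun u _ =>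
        Finset.card_image_le.trans (hcard u)).trans (Nat.mul_le_mul_right _ (hD v))
    · rintro (_ | ⟨u, l⟩) hchain hlength
      · simp at hlength
      · obtain ⟨hvu, hchain⟩ := List.isChain_cons_cons.1 hchain
        exact Finset.mem_biUnion.2 ⟨u, hN v u hvu, Finset.mem_image_of_mem _
          (hL u l hchain (by simpa using hlength))⟩

end Chains

lemma exists_finset_king_chain (ℓ : ℕ) (v : Site) :
    ∃ L : Finset (List Site), L.card ≤ 9 ^ ℓ ∧
      ∀ l : List Site, (v :: l).IsChain kingGraph.Adj → l.length = ℓ → v :: l ∈ L := by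
  refine exists_finset_isChain_mem
    (fun v => Finset.Icc (v.1 - 1) (v.1 + 1) ×ˢ Finset.Icc (v.2 - 1) (v.2 + 1)) ?_ ?_ ℓ v
  · rintro u v ⟨_, huv⟩
    simp only [Finset.mem_product, Finset.mem_Icc]
    omega
  · intro v
    rw [Finset.card_product, Nat.card_Icc, Nat.card_Icc]
    exact Nat.mul_le_mul (by omega : _ ≤ 3) (by omega : _ ≤ 3)

lemma kingGraph_abs_fst_sub_le (h : kingGraph.Adj u v) : |(u.1 : ℤ) - v.1| ≤ 1 := by
  obtain ⟨-, h⟩ := h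
  rw [abs_le]
  omega

lemma kingGraph_abs_snd_sub_le (h : kingGraph.Adj u v) : |(u.2 : ℤ) - v.2| ≤ 1 := by
  obtain ⟨-, h⟩ := h
  rw [abs_le]
  omega

lemma exists_king_chain_of_mem_outerBoundary {r : Site}
    (hconn : ∀ v ∈ O, ReflTransGen (AdjWithin quadrant O) r v)
    (hF : ∀ v ∈ O, ∀ u, quadrant.Adj v u → u ∉ O → u ∈ F) {f : Site → ℤ}
    (hf : ∀ u v, kingGraph.Adj u v → |f u - f v| ≤ 1) {a b : Site} (ha : a ∈ outerBoundary O z)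
    (hb : b ∈ outerBoundary O z) {ℓ : ℕ} (hℓ : ℓ ≤ |f a - f b|) :
    ∃ l : List Site, (a :: l).Nodup ∧ (a :: l).IsChain kingGraph.Adj ∧ l.length = ℓ ∧
      ∀ v ∈ a :: l, v ∈ F := by
  obtain ⟨l, hnodup, hchain, hlength, hl⟩ := exists_nodup_isChain_of_reflTransGen hf ha
    (reflTransGen_king_of_mem_outerBoundary hconn ha hb) hℓ
  refine ⟨l, hnodup, hchain, hlength, fun v hv => ?_⟩
  obtain ⟨hvE, u, hu, huv⟩ := hl v hv
  exact hF u hu v huv hvE.1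

lemma exists_king_chain_of_surrounding {h : ℕ} (h0 : (0, 0) ∈ O)
    (hconn : ∀ v ∈ O, ReflTransGen (AdjWithin quadrant O) (0, 0) v)
    (hF : ∀ v ∈ O, ∀ u, quadrant.Adj v u → u ∉ O → u ∈ F) (hO : O ⊆ Set.Iic (h, h))
    (hex : ∃ v ∈ O, max v.1 v.2 = h) :
    ∃ k ≤ h, ∃ l : List Site, ((k + 1, 0) :: l).Nodup ∧
      ((k + 1, 0) :: l).IsChain kingGraph.Adj ∧ l.length = h / 2 ∧
      ∀ v ∈ (k + 1, 0) :: l, v ∈ F := by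
  obtain ⟨k, hk, hk_max⟩ := BddAbove.exists_isGreatest_of_nonempty (S := {k | (k, 0) ∈ O})
    ⟨h, fun k hk => (hO hk).1⟩ ⟨0, h0⟩
  obtain ⟨j, hj, hj_max⟩ := BddAbove.exists_isGreatest_of_nonempty (S := {j | (0, j) ∈ O})
    ⟨h, fun j hj => (hO hj).2⟩ ⟨0, h0⟩
  have hstart := mem_outerBoundary_of_row hO hk fun i hi hi' => (hk_max hi').not_gt hi
  refine ⟨k, (hO hk).1, ?_⟩
  rcases le_or_gt (h / 2) (k + 1) with hfar | hnear
  · exact exists_king_chain_of_mem_outerBoundary hconn hF (fun _ _ => kingGraph_abs_fst_sub_le)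
      hstart (mem_outerBoundary_of_column hO hj fun i hi hi' => (hj_max hi').not_gt hi)
      (le_abs.2 (Or.inl (by push_cast; omega)))
  obtain ⟨⟨x, y⟩, hv, hxy⟩ := hex
  rcases max_choice x y with hmax | hmax
  · obtain rfl : x = h := hmax.symm.trans hxy
    exact exists_king_chain_of_mem_outerBoundary hconn hF (fun _ _ => kingGraph_abs_fst_sub_le)
      hstart (mem_outerBoundary_of_row hO hv fun i hi => notMem_of_subset_Iic hO (Or.inl hi))
      (le_abs.2 (Or.inr (by push_cast; omega)))
  · obtain rfl : y = h := hmax.symm.trans hxy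
    exact exists_king_chain_of_mem_outerBoundary hconn hF (fun _ _ => kingGraph_abs_snd_sub_le)
      hstart (mem_outerBoundary_of_column hO hv fun i hi => notMem_of_subset_Iic hO (Or.inr hi))
      (le_abs.2 (Or.inr (by push_cast; omega)))

end Planar

/-! ### The Peierls bound -/

section StoppingHeight

open ExplorationState

/-- The height of a state: the largest coordinate of an occupied site. -/
noncomputable def ExplorationState.height {d : ℕ} (s : ExplorationState d Site) : ℕ :=
  s.occupiedSites.sup fun v => max v.1 v.2

lemma ExplorationState.max_le_height {d : ℕ} {s : ExplorationState d Site} {v : Site}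
    (hv : v ∈ s.occupiedSites) : max v.1 v.2 ≤ s.height :=
  Finset.le_sup (f := fun v : Site => max v.1 v.2) hv

lemma ExplorationState.fst_le_height {d : ℕ} {s : ExplorationState d Site} {v : Site}
    (hv : v ∈ s.occupiedSites) : v.1 ≤ s.height :=
  (le_max_left _ _).trans (max_le_height hv)

namespace ExplorationScheme

variable {d : ℕ} {C : Type*} (X : ExplorationScheme d C Site)

/-- The event that the exploration gets stuck in a state of height `h`. -/
def StopsAtHeight (h : ℕ) : Set (LayeredConfig d C) :=
  {w | ∃ t, X.nextMove (X.state w t) = none ∧ (X.state w t).height = h}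

variable {X}

lemma measurableSet_stopsAtHeight (hX : X.Admissible) (h : ℕ) :
    MeasurableSet (X.StopsAtHeight h) := by
  rw [StopsAtHeight, Set.ofPred_exists]
  exact .iUnion fun t => measurableSet_state_mem hX t {s | X.nextMove s = none ∧ s.height = h}

lemma exists_king_chain_subset_failed (hX : X.Admissible) (hgraph : X.graph = quadrant)
    (hroot : X.root = (0, 0)) {h : ℕ} {w : LayeredConfig d C} (hw : w ∈ X.StopsAtHeight h) :
    ∃ k ≤ h, ∃ l, ((k + 1, 0) :: l).Nodup ∧ ((k + 1, 0) :: l).IsChain kingGraph.Adj ∧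
      l.length = h / 2 ∧ ∃ t, ∀ v ∈ (k + 1, 0) :: l, v ∈ (X.state w t).failed := by
  obtain ⟨t, hstops, hheight⟩ := hw
  have hs := isConsistent_state hX w t
  obtain ⟨k, hk, l, hnodup, hchain, hlength, hfailed⟩ :=
    exists_king_chain_of_surrounding (O := (X.state w t).occupiedSites)
      (F := (X.state w t).failed) (h := h) (hroot ▸ hs.root_mem)
      (fun v hv => by simpa only [hgraph, hroot] using hs.reachable v hv)
      (fun v hv u huv hu => by
        obtain ⟨x, hx⟩ := mem_occupiedSites.1 hv
        by_contra hfail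
        exact not_isPossible_of_nextMove_eq_none (p := ⟨v, x, u⟩) hstops
          ⟨hx, hgraph ▸ huv, fun hexam => (mem_examined.1 hexam).elim hu hfail⟩)
      (fun v hv => by
        have hle : max v.1 v.2 ≤ h := (max_le_height hv).trans_eq hheight
        exact ⟨(le_max_left _ _).trans hle, (le_max_right _ _).trans hle⟩)
      (by
        obtain ⟨v, hv, hmax⟩ :=
          Finset.exists_mem_eq_sup _ ⟨_, hs.root_mem⟩ fun v : Site => max v.1 v.2
        exact ⟨v, hv, hmax.symm.trans hheight⟩)
  exact ⟨k, hk, l, hnodup, hchain, hlength, t, hfailed⟩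

lemma exists_finset_stopsAtHeight_subset (hX : X.Admissible) (hgraph : X.graph = quadrant)
    (hroot : X.root = (0, 0)) (h : ℕ) :
    ∃ L : Finset (Finset Site), L.card ≤ (h + 1) * 9 ^ (h / 2) ∧ (∀ D ∈ L, D.card = h / 2 + 1) ∧
      X.StopsAtHeight h ⊆ ⋃ D ∈ L, {w | ∃ t, D ⊆ (X.state w t).failed} := by
  classical
  choose K hKcard hK using fun k => exists_finset_king_chain (h / 2) (k + 1, 0)
  refine ⟨(((Finset.range (h + 1)).biUnion K).image List.toFinset).filter fun D =>
    D.card = h / 2 + 1, ?_, fun D hD => (Finset.mem_filter.1 hD).2, fun w hw => ?_⟩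
  · refine (Finset.card_filter_le _ _).trans (Finset.card_image_le.trans ?_)
    simpa using Finset.card_biUnion_le_card_mul (Finset.range (h + 1)) K _ fun k _ => hKcard k
  · obtain ⟨k, hk, l, hnodup, hchain, hlength, t, hfailed⟩ :=
      exists_king_chain_subset_failed hX hgraph hroot hw
    refine Set.mem_biUnion (x := ((k + 1, 0) :: l).toFinset) ?_
      ⟨t, fun v hv => hfailed v (List.mem_toFinset.1 hv)⟩
    refine Finset.mem_filter.2 ⟨Finset.mem_image_of_mem _ (Finset.mem_biUnion.2
      ⟨k, Finset.mem_range.2 (by omega), hK k l hchain hlength⟩), ?_⟩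
    rw [List.toFinset_card_of_nodup hnodup, List.length_cons, hlength]

lemma peierls_sum_le (h : ℕ) :
    ((h + 1) * 9 ^ (h / 2) : ℝ) * (1 / 2304) ^ (h / 2 + 1) ≤ (1 / 8) ^ (h + 1) := by
  have hcount : (h + 1 : ℝ) ≤ 2 ^ (h + 1) := mod_cast (h + 1).lt_two_pow_self.le
  calc ((h + 1) * 9 ^ (h / 2) : ℝ) * (1 / 2304) ^ (h / 2 + 1)
      ≤ 2 ^ (h + 1) * 9 ^ (h / 2 + 1) * (1 / 2304) ^ (h / 2 + 1) := by
        gcongr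
        exacts [by norm_num, by omega]
    _ = 2 ^ (h + 1) * (1 / 16) ^ (2 * (h / 2 + 1)) := by
        rw [mul_assoc, ← mul_pow, pow_mul]
        norm_num
    _ ≤ 2 ^ (h + 1) * (1 / 16) ^ (h + 1) := by
        gcongr ?_ * ?_
        exact pow_le_pow_of_le_one (by norm_num) (by norm_num) (by omega)
    _ = (1 / 8) ^ (h + 1) := by
        rw [← mul_pow]
        norm_num

theorem real_stopsAtHeight_le (hX : X.Admissible) (hgraph : X.graph = quadrant)
    (hroot : X.root = (0, 0)) {q δ : unitInterval} (hfail : X.MoveFailureLe q δ (1 / 2304))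
    (h : ℕ) : (layeredPercolation d C q δ).real (X.StopsAtHeight h) ≤ (1 / 8) ^ (h + 1) := by
  obtain ⟨L, hLcard, hL, hsub⟩ := exists_finset_stopsAtHeight_subset hX hgraph hroot h
  calc (layeredPercolation d C q δ).real (X.StopsAtHeight h)
      ≤ ∑ D ∈ L, (layeredPercolation d C q δ).real {w | ∃ t, D ⊆ (X.state w t).failed} :=
        (measureReal_mono hsub (measure_ne_top _ _)).trans (measureReal_biUnion_finset_le _ _)
    _ ≤ ∑ _D ∈ L, (1 / 2304 : ℝ) ^ (h / 2 + 1) := Finset.sum_le_sum fun D hD =>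
        hL D hD ▸ real_exists_subset_failed_le hX (by norm_num) hfail D
    _ ≤ (h + 1) * 9 ^ (h / 2) * (1 / 2304) ^ (h / 2 + 1) := by
        rw [Finset.sum_const, nsmul_eq_mul]
        gcongr
        exact_mod_cast hLcard
    _ ≤ (1 / 8) ^ (h + 1) := peierls_sum_le h

end ExplorationScheme

end StoppingHeight

namespace ExplorationScheme

open ExplorationState

variable {d : ℕ} {C V : Type*} {X : ExplorationScheme d C V} {w : LayeredConfig d C}

lemma finite_setOf_mem_cube_center [Finite C] (hX : X.Admissible) (y : Vertex d) :
    {v | y ∈ cube (X.center v) X.zoneRadius}.Finite := by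
  refine Set.Finite.of_finite_image (Set.toFinite (X.color '' _)) fun v hv u hu hvu => ?_
  by_contra hne
  exact Finset.disjoint_left.1 (hX.disjoint_zones v u hne hvu) hv hu

theorem infinite_explored_of_forall_nextMove_ne_none [Finite C] (hX : X.Admissible)
    (hfin : ∀ v, (X.graph.neighborSet v).Finite) (h : ∀ t, X.nextMove (X.state w t) ≠ none) :
    {y | ∃ t, y ∈ (X.state w t).explored}.Infinite := by
  refine fun hexp => infinite_occupied_of_forall_nextMove_ne_none hX hfin h
    ((hexp.biUnion fun y _ => finite_setOf_mem_cube_center hX y).subset ?_)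
  rintro v ⟨t, hv⟩
  obtain ⟨y, hy⟩ := mem_occupiedSites.1 hv
  obtain ⟨hmem, hcube⟩ := (isConsistent_state hX w t).cube_subset_explored _ hy
  exact Set.mem_biUnion (x := y) ⟨t, hcube (self_mem_cube _ _)⟩
    (cube_subset_cube (by simp only [zoneRadius]; omega) hmem)

end ExplorationScheme

/-! ### The quadrant in the lattice -/

section BaseOpen

variable {d : ℕ} {C : Type*}

/-- The event that all the edges incident to `S` are open in the base layer. -/
def BaseOpen (S : Finset (Vertex d)) : Set (LayeredConfig d C) :=
  {w | layer none w ∈ {ω : Config d | ∀ e ∈ incidentEdgeFinset S, ω e = true}}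

variable {S : Finset (Vertex d)} {w : LayeredConfig d C}

lemma determinedBy_baseOpen (S : Finset (Vertex d)) :
    DeterminedBy (BaseOpen S : Set (LayeredConfig d C)) (layerEdge none '' incidentEdges S) :=
  coe_incidentEdgeFinset S ▸ (determinedBy_forall_mem_eq (incidentEdgeFinset S) true).layer none

lemma measurableSet_baseOpen (S : Finset (Vertex d)) :
    MeasurableSet (BaseOpen S : Set (LayeredConfig d C)) :=
  (determinedBy_baseOpen S).measurableSet ((incidentEdges_finite S).image _)

lemma pow_le_real_baseOpen (q δ : unitInterval) (S : Finset (Vertex d)) :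
    (q : ℝ) ^ (S.card * 3 ^ d) ≤ (layeredPercolation d C q δ).real (BaseOpen S) := by
  rw [BaseOpen, real_layer_none_mem ((determinedBy_forall_mem_eq _ _).measurableSet
    (Finset.finite_toSet _)), bernoulliProduct_real_forall_true, Finset.prod_const]
  exact pow_le_pow_of_le_one q.2.1 q.2.2 (card_incidentEdgeFinset_le S)

lemma step_unionLayers_of_mem_baseOpen (hw : w ∈ BaseOpen S) {u v : Vertex d} (huv : adj u v)
    (hv : v ∈ S) : step (unionLayers w) u v := by
  refine step.unionLayers (o := none) (step_iff_exists_edge.2 ⟨edge u v huv, rfl, hw _ ?_⟩)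
  rw [← Finset.mem_coe, coe_incidentEdgeFinset]
  exact (mem_incidentEdges rfl).2 (Or.inr hv)

end BaseOpen

section QuadrantScheme

variable {d : ℕ} {i₀ i₁ : Fin d} {m n : ℕ} {x z : Vertex d}

variable (i₀ m n x) in
/-- A vertical segment issued from `x`, topped with a cube of radius `m`. -/
noncomputable def stem : Finset (Vertex d) :=
  (Finset.range (3 * (n + m + 1))).image (fun j : ℕ => x + Pi.single i₀ (j + 1 : ℤ)) ∪
    cube (x + Pi.single i₀ (3 * (n + m + 1) : ℤ)) m

lemma card_stem_le : (stem i₀ m n x).card ≤ 3 * (n + m + 1) + (2 * m + 1) ^ d :=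
  (Finset.card_union_le _ _).trans <| add_le_add
    (Finset.card_image_le.trans_eq (Finset.card_range _)) (card_cube _ _).le

lemma lt_apply_of_mem_stem (hz : z ∈ stem i₀ m n x) : x i₀ < z i₀ := by
  rcases Finset.mem_union.1 hz with hz | hz
  · obtain ⟨j, -, rfl⟩ := Finset.mem_image.1 hz
    simp only [Pi.add_apply, Pi.single_eq_same]
    omega
  · have := abs_le.1 (mem_cube.1 hz i₀)
    simp only [Pi.add_apply, Pi.single_eq_same] at this
    omega

lemma apply_le_of_mem_stem (hz : z ∈ stem i₀ m n x) : z i₀ ≤ x i₀ + 3 * (n + m + 1) + m := by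
  rcases Finset.mem_union.1 hz with hz | hz
  · obtain ⟨j, hj, rfl⟩ := Finset.mem_image.1 hz
    rw [Finset.mem_range] at hj
    simp only [Pi.add_apply, Pi.single_eq_same]
    omega
  · have := abs_le.1 (mem_cube.1 hz i₀)
    simp only [Pi.add_apply, Pi.single_eq_same] at this
    omega

lemma conn_of_mem_stem {C : Type*} {w : LayeredConfig d C} (hw : w ∈ BaseOpen (stem i₀ m n x))
    (hz : z ∈ stem i₀ m n x) : Conn (unionLayers w) x z := by
  have hsegment : ∀ j : ℕ, j ≤ 3 * (n + m + 1) →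
      Conn (unionLayers w) x (x + Pi.single i₀ (j : ℤ)) := by
    intro j
    induction j with
    | zero => exact fun _ => by simp [Conn, Relation.ReflTransGen.refl]
    | succ j ih =>
      refine fun hj => (ih (by omega)).tail (step_unionLayers_of_mem_baseOpen hw ?_
        (Finset.mem_union_left _ (Finset.mem_image.2 ⟨j, Finset.mem_range.2 hj, by simp⟩)))
      have hupdate : x + Pi.single i₀ ((j + 1 : ℕ) : ℤ) =
          Function.update (x + Pi.single i₀ (j : ℤ)) i₀ (x i₀ + (j + 1 : ℕ)) := by
        ext i
        by_cases hi : i = i₀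
        · subst hi
          simp
        · simp [hi]
      rw [hupdate]
      exact adj_update (by simp)
  rcases Finset.mem_union.1 hz with hz | hz
  · obtain ⟨j, hj, rfl⟩ := Finset.mem_image.1 hz
    exact_mod_cast hsegment (j + 1) (Finset.mem_range.1 hj)
  · have htop := hsegment _ le_rfl
    push_cast at htop
    exact htop.trans (Relation.ReflTransGen.mono (fun u v ⟨_, hv, huv⟩ =>
      step_unionLayers_of_mem_baseOpen hw huv (Finset.mem_union_right _ hv)) _ _
      (reflTransGen_adj_cube hz))

/-- The colours of the sites; two sites of the same colour have coordinates congruent modulo 7,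
which keeps their zones apart. -/
abbrev Color := ZMod 7 × ZMod 7

variable (i₀ i₁ m n x) in
/-- The exploration of `quadrant` embedded in the plane through `x` directed by `i₀` and `i₁`. -/
noncomputable def quadrantScheme : ExplorationScheme d Color Site where
  graph := quadrant
  root := (0, 0)
  m := m
  n := n
  center v := x + Pi.single i₀ ((n + m + 1) * (3 + v.1) : ℤ) +
    Pi.single i₁ ((n + m + 1) * v.2 : ℤ)
  color v := (v.1, v.2)
  seed := x + Pi.single i₀ (3 * (n + m + 1) : ℤ)
  initial := stem i₀ m n x

lemma exists_quadrantScheme_center_eq_add {u v : Site} (h : quadrant.Adj u v) :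
    ∃ (j : Fin d) (s : ℤˣ), (quadrantScheme i₀ i₁ m n x).center v =
      (quadrantScheme i₀ i₁ m n x).center u + Pi.single j (s * (n + m + 1) : ℤ) := by
  obtain ⟨a, b⟩ := u
  obtain ⟨a', b'⟩ := v
  simp only [quadrant_adj] at h
  rcases h with ⟨rfl | rfl, rfl⟩ | ⟨rfl | rfl, rfl⟩
  · exact ⟨i₀, 1, by simp [quadrantScheme, mul_add, Pi.single_add]; abel⟩
  · exact ⟨i₀, -1, by simp [quadrantScheme, mul_add, Pi.single_add, Pi.single_neg]; abel⟩
  · exact ⟨i₁, 1, by simp [quadrantScheme, mul_add, Pi.single_add]; abel⟩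
  · exact ⟨i₁, -1, by simp [quadrantScheme, mul_add, Pi.single_add, Pi.single_neg]; abel⟩

lemma eq_of_zmod_eq_of_abs_sub_le {D y t : ℤ} {a b : ℕ} (hD : 1 ≤ D) (hab : (a : ZMod 7) = b)
    (ha : |t - (y + D * a)| ≤ 3 * D - 1) (hb : |t - (y + D * b)| ≤ 3 * D - 1) : a = b := by
  have hdvd : (7 : ℤ) ∣ b - a := by
    exact_mod_cast (ZMod.intCast_eq_intCast_iff_dvd_sub a b 7).1 (by exact_mod_cast hab)
  have hlt : |(b : ℤ) - a| < 7 := by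
    rw [abs_le] at ha hb
    rw [abs_lt]
    constructor <;> nlinarith
  have := Int.eq_zero_of_abs_lt_dvd hdvd hlt
  omega

lemma quadrantScheme_center_apply_fst (h01 : i₀ ≠ i₁) (v : Site) :
    (quadrantScheme i₀ i₁ m n x).center v i₀ = x i₀ + 3 * (n + m + 1) + (n + m + 1) * v.1 := by
  simp only [quadrantScheme, Pi.add_apply, Pi.single_eq_same, Pi.single_eq_of_ne h01]
  ring

lemma admissible_quadrantScheme (h01 : i₀ ≠ i₁) : (quadrantScheme i₀ i₁ m n x).Admissible where
  center_mem_cube u v huv := by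
    obtain ⟨j, s, hj⟩ := exists_quadrantScheme_center_eq_add (i₀ := i₀) (i₁ := i₁) (m := m) (n := n)
      (x := x) huv.symm
    refine mem_cube.2 fun i => ?_
    rw [hj, Pi.add_apply, add_sub_cancel_left]
    rcases eq_or_ne i j with rfl | hij
    · rw [Pi.single_eq_same, abs_le]
      simp only [quadrantScheme]
      rcases Int.units_eq_one_or s with rfl | rfl <;> push_cast <;> constructor <;> omega
    · rw [Pi.single_eq_of_ne hij, abs_zero]
      positivity
  disjoint_zones u v huv hcolor := by
    refine Finset.disjoint_left.2 fun t hu hv => huv ?_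
    have hradius : ((quadrantScheme i₀ i₁ m n x).zoneRadius : ℤ) = 3 * (n + m + 1) - 1 := by
      simp only [ExplorationScheme.zoneRadius, quadrantScheme]
      push_cast
      ring
    obtain ⟨hfst, hsnd⟩ := Prod.mk.inj hcolor
    have h0 := quadrantScheme_center_apply_fst (m := m) (n := n) (x := x) h01
    have h1 := fun (v : Site) => show (quadrantScheme i₀ i₁ m n x).center v i₁ =
      x i₁ + (n + m + 1) * v.2 by simp [quadrantScheme, h01.symm]
    rw [mem_cube] at hu hv
    exact Prod.ext
      (eq_of_zmod_eq_of_abs_sub_le (by omega) hfst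
        (h0 u ▸ hradius ▸ hu i₀) (h0 v ▸ hradius ▸ hv i₀))
      (eq_of_zmod_eq_of_abs_sub_le (by omega) hsnd
        (h1 u ▸ hradius ▸ hu i₁) (h1 v ▸ hradius ▸ hv i₁))
  seed_mem_cube := by
    have : (quadrantScheme i₀ i₁ m n x).seed = (quadrantScheme i₀ i₁ m n x).center (0, 0) := by
      simp [quadrantScheme, mul_comm]
    rw [this]
    exact self_mem_cube _ _
  cube_seed_subset := Finset.subset_union_right

lemma moveFailureLe_quadrantScheme {q δ : unitInterval} {ε : ℝ}
    (h : ∀ (S : Finset (Vertex d)) (c : Color) (j : Fin d) (s : ℤˣ) (x u v : Vertex d),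
      cube x m ⊆ S → x ∈ cube u n → v j = u j + s * (n + m + 1 : ℤ) → (∀ i, i ≠ j → v i = u i) →
        (layeredPercolation d Color q δ).real
          (NoCubeReached m S (cube x (n + 2 * m + 1)) (cube v n) c) ≤ ε) :
    (quadrantScheme i₀ i₁ m n x).MoveFailureLe q δ ε := by
  intro S v u y huv hS hy
  obtain ⟨j, s, hj⟩ := exists_quadrantScheme_center_eq_add (i₀ := i₀) (i₁ := i₁) (m := m) (n := n)
    (x := x) huv
  exact h S _ j s y _ _ hS hy (by simp [hj]) fun i hij => by simp [hj, hij]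

theorem infinite_cluster_unionLayers_of_forall_notMem_stopsAtHeight (h01 : i₀ ≠ i₁)
    {w : LayeredConfig d Color} (hopen : w ∈ BaseOpen (stem i₀ m n x))
    (hstops : ∀ h, w ∉ (quadrantScheme i₀ i₁ m n x).StopsAtHeight h) :
    (cluster (unionLayers w) x).Infinite := by
  have hfin (v : Site) : (quadrant.neighborSet v).Finite := by
    refine (Set.finite_Iic (v.1 + 1, v.2 + 1)).subset fun u hu => ?_
    rw [SimpleGraph.mem_neighborSet, quadrant_adj] at hu
    exact ⟨by grind, by grind⟩
  refine (ExplorationScheme.infinite_explored_of_forall_nextMove_ne_none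
    (admissible_quadrantScheme h01) hfin fun t ht => hstops _ ⟨t, ht, rfl⟩).mono ?_
  rintro y ⟨t, hy⟩
  obtain ⟨a, ha, hay⟩ := ExplorationScheme.exists_conn_of_mem_explored _ y hy
  exact (conn_of_mem_stem hopen ha).trans hay

end QuadrantScheme

/-! ### Restarting at the tips of half-spaces -/

section UnionLayers

variable {d : ℕ} {C : Type*}

lemma measurable_unionLayers [Countable C] :
    Measurable (unionLayers : LayeredConfig d C → Config d) := by
  refine measurable_pi_iff.2 fun e => measurable_to_bool ?_
  have : (fun w : LayeredConfig d C => unionLayers w e) ⁻¹' {true} =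
      ⋃ o, {w | w (e, o) = true} := by
    ext w
    simp [unionLayers]
  rw [this]
  exact .iUnion fun o => measurableSet_eq_fun (measurable_pi_apply (e, o)) measurable_const

lemma DeterminedBy.unionLayers {A : Set (Config d)} {J : Set (Edge d)} (hA : DeterminedBy A J) :
    DeterminedBy (unionLayers ⁻¹' A : Set (LayeredConfig d C)) (Prod.fst ⁻¹' J) := by
  refine determinedBy_of_imp fun w w' h hw => (hA.mem_iff fun e he => ?_).1 hw
  exact decide_eq_decide.2 (exists_congr fun o => by rw [h (e, o) he])

end UnionLayers

section HalfSpaces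

variable {d : ℕ} {C : Type*} {i₀ i₁ : Fin d} {a b : ℤ}

variable (i₀) in
/-- The half-space below level `a` in direction `i₀`. -/
def halfSpace (a : ℤ) : Set (Vertex d) := {z | z i₀ ≤ a}

variable (C i₀) in
/-- The variables of a layered configuration that live in a half-space: those of the restart
argument that have been revealed once the cluster of the origin is known below level `a`. -/
def halfSpaceVars (a : ℤ) : Set (Edge d × Option C) := Prod.fst ⁻¹' innerEdges (halfSpace i₀ a)

variable (i₀) in
/-- The event that the cluster of the origin is finite but reaches level `a` in direction `i₀`. -/
def FiniteReaching (a : ℤ) : Set (Config d) :=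
  {ω | (∃ y, Conn ω (origin d) y ∧ a ≤ y i₀) ∧ (cluster ω (origin d)).Finite}

variable (i₀) in
/-- The event that `x` is a tip at level `a` of the cluster of the origin in `halfSpace i₀ a`. -/
def HasTip (a : ℤ) (x : Vertex d) : Set (Config d) :=
  {ω | x i₀ = a ∧ ConnIn ω (halfSpace i₀ a) (origin d) x}

lemma halfSpaceVars_mono (h : a ≤ b) : halfSpaceVars C i₀ a ⊆ halfSpaceVars C i₀ b :=
  Set.preimage_mono <| innerEdges_mono fun _ hz => le_trans hz h

lemma incidentEdges_subset_innerEdges_halfSpace {S : Set (Vertex d)} (h : ∀ z ∈ S, z i₀ + 1 ≤ a) :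
    incidentEdges S ⊆ innerEdges (halfSpace i₀ a) := by
  intro e he
  obtain ⟨u, v, huv, rfl⟩ := exists_eq_edge e
  have hadj := abs_le.1 (huv.abs_sub_le_one i₀)
  refine (mem_innerEdges rfl).2 ?_
  rcases (mem_incidentEdges rfl).1 he with hu | hv
  · have := h u hu
    exact ⟨show u i₀ ≤ a by omega, show v i₀ ≤ a by omega⟩
  · have := h v hv
    exact ⟨show u i₀ ≤ a by omega, show v i₀ ≤ a by omega⟩

lemma measurableSet_finiteReaching : MeasurableSet (FiniteReaching i₀ a) := by
  have : FiniteReaching i₀ a = (⋃ y ∈ {y : Vertex d | a ≤ y i₀}, {ω | Conn ω (origin d) y}) ∩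
      {ω | (cluster ω (origin d)).Infinite}ᶜ := by
    ext ω
    simp [FiniteReaching, and_comm]
  rw [this]
  exact (MeasurableSet.biUnion (Set.to_countable _) fun y _ => measurableSet_conn _ y).inter
    (measurableSet_cluster_infinite _).compl

lemma measurableSet_hasTip (x : Vertex d) : MeasurableSet (HasTip i₀ a x) :=
  (MeasurableSet.const _).inter (measurableSet_connIn _ _ x)

lemma determinedBy_hasTip (x : Vertex d) :
    DeterminedBy (HasTip i₀ a x) (innerEdges (halfSpace i₀ a)) :=
  determinedBy_of_imp fun _ _ h hω => ⟨hω.1, hω.2.congr h⟩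

lemma conn_of_mem_hasTip {ω : Config d} {x : Vertex d} (h : ω ∈ HasTip i₀ a x) :
    Conn ω (origin d) x :=
  h.2.conn

lemma exists_mem_hasTip {ω : Config d} (ha : 0 ≤ a) (hab : a ≤ b) (hω : ω ∈ FiniteReaching i₀ b) :
    ∃ x, ω ∈ HasTip i₀ a x := by
  obtain ⟨⟨y, hy, hby⟩, -⟩ := hω
  rcases ha.eq_or_lt with rfl | ha
  · exact ⟨origin d, rfl, .refl⟩
  obtain ⟨u, v, hconn, hu, hv, huv⟩ := exists_exit_of_reflTransGen (S := {z : Vertex d | z i₀ < a})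
    hy ha fun h : y i₀ < a => by omega
  have hu : u i₀ < a := hu
  have hv : ¬ v i₀ < a := hv
  have hadj := abs_le.1 (huv.choose.abs_sub_le_one i₀)
  have hva : v i₀ = a := by omega
  refine ⟨v, hva, .tail (Relation.ReflTransGen.mono ?_ _ _ hconn) ⟨hu.le, hva.le, huv⟩⟩
  exact fun z z' ⟨hz, hz', hzz'⟩ => ⟨(show z i₀ < a from hz).le, (show z' i₀ < a from hz').le, hzz'⟩

end HalfSpaces

section StoppingHeightVars

variable {d : ℕ} {i₀ i₁ : Fin d} {m n : ℕ} {x : Vertex d}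

variable (i₀ m n x) in
/-- The variables strictly above `x` in direction `i₀` other than the base layer around the stem.
Together with those below `x` and the base layer around the stem they form a disjoint triple. -/
def aheadVars : Set (Edge d × Option Color) :=
  Prod.fst ⁻¹' innerEdges {z : Vertex d | x i₀ < z i₀} \
    layerEdge none '' incidentEdges (stem i₀ m n x : Set (Vertex d))

lemma determinedBy_stopsAtHeight_aheadVars (h01 : i₀ ≠ i₁) (h : ℕ) :
    DeterminedBy ((quadrantScheme i₀ i₁ m n x).StopsAtHeight h) (aheadVars i₀ m n x) := by
  refine determinedBy_of_imp fun w w' hww' ⟨t, hstops, hheight⟩ => ?_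
  have hstate := ExplorationScheme.state_eq_state_of_forall_innerEdges (w := w) (w' := w')
    (admissible_quadrantScheme (m := m) (n := n) (x := x) h01) (T := {z | x i₀ < z i₀})
    (fun v y hy z hz => ?_) (fun e he => hww' _ ⟨he.1, ?_⟩) (fun e he c => hww' _ ⟨he, ?_⟩) t
  · exact ⟨t, by rwa [hstate], by rwa [hstate]⟩
  · have hy := abs_le.1 (mem_cube.1 hy i₀)
    have hz := abs_le.1 (mem_cube.1 (Finset.mem_coe.1 hz) i₀)
    rw [quadrantScheme_center_apply_fst h01] at hy
    simp only [ExplorationScheme.boxRadius, quadrantScheme] at hy hz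
    push_cast at hz
    have : (0 : ℤ) ≤ (n + m + 1) * v.1 := by positivity
    change x i₀ < z i₀
    linarith
  · rintro ⟨e', he', heq⟩
    cases heq
    exact he.2 he'
  · rintro ⟨e', -, heq⟩
    cases heq

lemma determinedBy_baseOpen_stem (x : Vertex d) (h : ℕ) :
    DeterminedBy (BaseOpen (stem i₀ m n x) : Set (LayeredConfig d Color))
      (halfSpaceVars Color i₀ (x i₀ + 7 * (n + m + 1) * (h + 1))) := by
  refine (determinedBy_baseOpen _).mono (Set.image_subset_iff.2 ?_)
  refine incidentEdges_subset_innerEdges_halfSpace fun z hz => ?_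
  have := apply_le_of_mem_stem hz
  nlinarith

lemma apply_le_of_mem_explored (h01 : i₀ ≠ i₁) {w : LayeredConfig d Color} {t : ℕ} {z : Vertex d}
    (hz : z ∈ ((quadrantScheme i₀ i₁ m n x).state w t).explored) :
    z i₀ + 1 ≤ x i₀ +
      (n + m + 1) * (((quadrantScheme i₀ i₁ m n x).state w t).height + 7) := by
  have hs := ExplorationScheme.isConsistent_state
    (admissible_quadrantScheme (m := m) (n := n) (x := x) h01) w t
  rcases hs.explored_subset z hz with hz | ⟨p, hp, hz⟩
  · have := apply_le_of_mem_stem hz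
    nlinarith
  · have hcenter := abs_le.1 (mem_cube.1 (hs.cube_subset_explored p hp).1 i₀)
    have hz := abs_le.1 (mem_cube.1 hz i₀)
    have hheight := ExplorationState.fst_le_height (ExplorationState.mem_occupiedSites.2 ⟨p.2, hp⟩)
    rw [quadrantScheme_center_apply_fst h01] at hcenter
    simp only [ExplorationScheme.boxRadius, quadrantScheme] at hcenter hz
    push_cast at hz
    have := mul_le_mul_of_nonneg_left (Nat.cast_le (α := ℤ).2 hheight)
      (show (0 : ℤ) ≤ n + m + 1 by positivity)
    linarith

lemma fst_le_height_add_one_of_mem_examined (h01 : i₀ ≠ i₁) {w : LayeredConfig d Color} {t : ℕ}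
    {u : Site} (hu : u ∈ ((quadrantScheme i₀ i₁ m n x).state w t).examined) :
    u.1 ≤ ((quadrantScheme i₀ i₁ m n x).state w t).height + 1 := by
  have hs := ExplorationScheme.isConsistent_state
    (admissible_quadrantScheme (m := m) (n := n) (x := x) h01) w t
  rcases ExplorationState.mem_examined.1 hu with hu | hu
  · exact (ExplorationState.fst_le_height hu).trans (Nat.le_succ _)
  · obtain ⟨v, hv, hvu⟩ := hs.exists_adj_failed u hu
    have := ExplorationState.fst_le_height hv
    have := quadrant_adj.1 hvu
    omega

lemma determinedBy_stopsAtHeight_halfSpaceVars (h01 : i₀ ≠ i₁) (h : ℕ) :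
    DeterminedBy ((quadrantScheme i₀ i₁ m n x).StopsAtHeight h)
      (halfSpaceVars Color i₀ (x i₀ + 7 * (n + m + 1) * (h + 1))) := by
  refine determinedBy_of_imp fun w w' hww' ⟨t, hstops, hheight⟩ => ?_
  have hstate := ExplorationScheme.state_eq_state_of_forall_revealed (w := w) (w' := w') (t := t)
    (admissible_quadrantScheme (m := m) (n := n) (x := x) h01) fun i hi => hww' i ?_
  · exact ⟨t, by rwa [hstate], by rwa [hstate]⟩
  rcases hi with ⟨e, he, rfl⟩ | hi
  · refine incidentEdges_subset_innerEdges_halfSpace (fun z hz => ?_) he.1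
    have := apply_le_of_mem_explored h01 hz
    rw [hheight] at this
    nlinarith
  · obtain ⟨u, hu, e, he, rfl⟩ := Set.mem_iUnion₂.1 hi
    refine innerEdges_mono (fun z hz => ?_) he
    have hz := abs_le.1 (mem_cube.1 (Finset.mem_coe.1 hz) i₀)
    have hu := fst_le_height_add_one_of_mem_examined h01 hu
    rw [hheight] at hu
    rw [quadrantScheme_center_apply_fst h01] at hz
    simp only [ExplorationScheme.zoneRadius, quadrantScheme] at hz
    push_cast at hz
    change z i₀ ≤ _
    zify at hu
    nlinarith

end StoppingHeightVars

section TipStep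

variable {d : ℕ} {i₀ i₁ : Fin d} {m n : ℕ} {x : Vertex d} {q δ : unitInterval}
  {B : Set (LayeredConfig d Color)}

lemma disjoint_halfSpaceVars_layerEdge_stem :
    Disjoint (halfSpaceVars Color i₀ (x i₀))
      (layerEdge none '' incidentEdges (stem i₀ m n x : Set (Vertex d))) := by
  rw [Set.disjoint_left]
  rintro _ hi ⟨e, ⟨v, hv, hvS⟩, rfl⟩
  exact (lt_apply_of_mem_stem hvS).not_ge (hi v hv)

lemma disjoint_halfSpaceVars_union_aheadVars :
    Disjoint (halfSpaceVars Color i₀ (x i₀) ∪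
      layerEdge none '' incidentEdges (stem i₀ m n x : Set (Vertex d))) (aheadVars i₀ m n x) := by
  refine Set.disjoint_union_left.2 ⟨?_, disjoint_sdiff_self_right⟩
  refine Disjoint.mono_right Set.sdiff_subset (Disjoint.preimage _ ?_)
  exact disjoint_innerEdges_of_subsingleton fun z hz =>
    (show ¬z i₀ ≤ x i₀ from not_le.2 hz.2).elim hz.1

lemma real_inter_baseOpen (hBm : MeasurableSet B)
    (hB : DeterminedBy B (halfSpaceVars Color i₀ (x i₀))) :
    (layeredPercolation d Color q δ).real (B ∩ BaseOpen (stem i₀ m n x)) =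
      (layeredPercolation d Color q δ).real B *
        (layeredPercolation d Color q δ).real (BaseOpen (stem i₀ m n x)) :=
  infinitePi_real_inter _ hBm (measurableSet_baseOpen _) hB (determinedBy_baseOpen _)
    disjoint_halfSpaceVars_layerEdge_stem

lemma real_inter_baseOpen_inter_stopsAtHeight (h01 : i₀ ≠ i₁) (hBm : MeasurableSet B)
    (hB : DeterminedBy B (halfSpaceVars Color i₀ (x i₀))) (h : ℕ) :
    (layeredPercolation d Color q δ).real
        (B ∩ BaseOpen (stem i₀ m n x) ∩ (quadrantScheme i₀ i₁ m n x).StopsAtHeight h) =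
      (layeredPercolation d Color q δ).real B *
        (layeredPercolation d Color q δ).real (BaseOpen (stem i₀ m n x)) *
          (layeredPercolation d Color q δ).real
            ((quadrantScheme i₀ i₁ m n x).StopsAtHeight h) := by
  rw [← real_inter_baseOpen hBm hB]
  exact infinitePi_real_inter _ (hBm.inter (measurableSet_baseOpen _))
    (ExplorationScheme.measurableSet_stopsAtHeight (admissible_quadrantScheme h01) h)
    ((hB.mono Set.subset_union_left).inter ((determinedBy_baseOpen _).mono Set.subset_union_right))
    (determinedBy_stopsAtHeight_aheadVars h01 h) disjoint_halfSpaceVars_union_aheadVars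

lemma inter_finiteReaching_subset (h01 : i₀ ≠ i₁) {a b : ℤ}
    (hB : B ⊆ unionLayers ⁻¹' HasTip i₀ a x) :
    B ∩ unionLayers ⁻¹' FiniteReaching i₀ b ⊆
      (B ∩ (BaseOpen (stem i₀ m n x))ᶜ ∩ unionLayers ⁻¹' FiniteReaching i₀ b) ∪
        ⋃ h, B ∩ BaseOpen (stem i₀ m n x) ∩ (quadrantScheme i₀ i₁ m n x).StopsAtHeight h ∩
          unionLayers ⁻¹' FiniteReaching i₀ b := by
  rintro w ⟨hwB, hw⟩
  by_cases hopen : w ∈ BaseOpen (stem i₀ m n x)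
  · by_cases hstops : ∃ h, w ∈ (quadrantScheme i₀ i₁ m n x).StopsAtHeight h
    · obtain ⟨h, hh⟩ := hstops
      exact .inr (Set.mem_iUnion.2 ⟨h, ⟨⟨hwB, hopen⟩, hh⟩, hw⟩)
    · push Not at hstops
      have hinf := infinite_cluster_unionLayers_of_forall_notMem_stopsAtHeight h01 hopen hstops
      refine absurd (hw.2.subset ?_) hinf
      exact fun y hy => (conn_of_mem_hasTip (hB hwB)).trans hy
  · exact .inl ⟨⟨hwB, hopen⟩, hw⟩

end TipStep

section Restart

lemma pow_sub_le_pow_mul_two_pow {r : ℝ} (hr : 1 / 2 ≤ r) (j i : ℕ) :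
    r ^ (j - i) ≤ r ^ j * 2 ^ i := by
  have hr0 : 0 ≤ r := by linarith
  induction i with
  | zero => simp
  | succ i ih =>
    refine le_trans ?_ ((mul_le_mul_of_nonneg_right ih zero_le_two).trans_eq (by ring))
    rcases hji : j - i with _ | e
    · simp [show j - (i + 1) = 0 by omega]
    · rw [show j - (i + 1) = e by omega, pow_succ, mul_assoc]
      exact le_mul_of_one_le_right (pow_nonneg hr0 e) (by linarith)

variable {d : ℕ} {i₀ i₁ : Fin d} {m n : ℕ} {q δ : unitInterval} {a b : ℤ}

variable (i₀ q δ a b) in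
/-- Conditionally on any information about the variables below level `a`, the cluster of the origin
in the union of the layers is finite and reaches level `b` with probability at most `ρ`. -/
def ConditionalReachingLe (ρ : ℝ) : Prop :=
  ∀ B : Set (LayeredConfig d Color), MeasurableSet B → DeterminedBy B (halfSpaceVars Color i₀ a) →
    (layeredPercolation d Color q δ).real (B ∩ unionLayers ⁻¹' FiniteReaching i₀ b) ≤
      ρ * (layeredPercolation d Color q δ).real B

variable {x : Vertex d} {B : Set (LayeredConfig d Color)} {ρ r : ℝ} {j : ℕ}

lemma real_inter_compl_baseOpen_inter_finiteReaching_le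
    (hρ : ConditionalReachingLe i₀ q δ (x i₀ + 7 * (n + m + 1)) b ρ) (hBm : MeasurableSet B)
    (hB : DeterminedBy B (halfSpaceVars Color i₀ (x i₀))) :
    (layeredPercolation d Color q δ).real
        (B ∩ (BaseOpen (stem i₀ m n x))ᶜ ∩ unionLayers ⁻¹' FiniteReaching i₀ b) ≤
      ρ * ((layeredPercolation d Color q δ).real B *
        (1 - (layeredPercolation d Color q δ).real (BaseOpen (stem i₀ m n x)))) := by
  refine (hρ _ (hBm.inter (measurableSet_baseOpen _).compl) ?_).trans_eq ?_
  · have hstem := determinedBy_baseOpen_stem (i₀ := i₀) (m := m) (n := n) x 0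
    rw [Nat.cast_zero, zero_add, mul_one] at hstem
    exact (hB.mono (halfSpaceVars_mono (by omega))).inter hstem.compl
  · have := real_inter_baseOpen (q := q) (δ := δ) (m := m) (n := n) hBm hB
    rw [mul_one_sub, ← this, ← Set.sdiff_eq, ← measureReal_inter_add_sdiff (s := B)
      (measurableSet_baseOpen (stem i₀ m n x)), add_sub_cancel_left]

lemma real_inter_stopsAtHeight_inter_finiteReaching_le (h01 : i₀ ≠ i₁) {h : ℕ}
    (hr : 1 / 2 ≤ r)
    (hstops : (layeredPercolation d Color q δ).real
      ((quadrantScheme i₀ i₁ m n x).StopsAtHeight h) ≤ (1 / 8) ^ (h + 1))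
    (hreach : ConditionalReachingLe i₀ q δ (x i₀ + 7 * (n + m + 1) * (h + 1)) b (r ^ (j - (h + 1))))
    (hBm : MeasurableSet B) (hB : DeterminedBy B (halfSpaceVars Color i₀ (x i₀))) :
    (layeredPercolation d Color q δ).real (B ∩ BaseOpen (stem i₀ m n x) ∩
        (quadrantScheme i₀ i₁ m n x).StopsAtHeight h ∩ unionLayers ⁻¹' FiniteReaching i₀ b) ≤
      r ^ j * ((layeredPercolation d Color q δ).real B *
        (layeredPercolation d Color q δ).real (BaseOpen (stem i₀ m n x))) * (1 / 4) ^ (h + 1) := by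
  have hlevel : x i₀ ≤ x i₀ + 7 * (n + m + 1) * (h + 1) := le_add_of_nonneg_right (by positivity)
  have := hreach _ ((hBm.inter (measurableSet_baseOpen _)).inter
      (ExplorationScheme.measurableSet_stopsAtHeight (admissible_quadrantScheme h01) h))
    (((hB.mono (halfSpaceVars_mono hlevel)).inter (determinedBy_baseOpen_stem x h)).inter
      (determinedBy_stopsAtHeight_halfSpaceVars h01 h))
  rw [real_inter_baseOpen_inter_stopsAtHeight h01 hBm hB] at this
  refine this.trans ?_
  have hpow := pow_sub_le_pow_mul_two_pow hr j (h + 1)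
  calc _ ≤ r ^ j * 2 ^ (h + 1) * ((layeredPercolation d Color q δ).real B *
          (layeredPercolation d Color q δ).real (BaseOpen (stem i₀ m n x)) *
            (1 / 8) ^ (h + 1)) := by gcongr
    _ = r ^ j * ((layeredPercolation d Color q δ).real B *
          (layeredPercolation d Color q δ).real (BaseOpen (stem i₀ m n x))) *
            (2 * (1 / 8)) ^ (h + 1) := by rw [mul_pow]; ring
    _ = _ := by norm_num

/- Above a tip, either the stem is not open or the exploration stops at some height
`h`, and in either case the next attempt starts from the first level not yet revealed. -/
lemma real_inter_finiteReaching_le_of_subset_hasTip (h01 : i₀ ≠ i₁) {c : ℝ}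
    (hc0 : 0 ≤ c) (hc : c ≤ (layeredPercolation d Color q δ).real (BaseOpen (stem i₀ m n x)))
    (hstops : ∀ h, (layeredPercolation d Color q δ).real
      ((quadrantScheme i₀ i₁ m n x).StopsAtHeight h) ≤ (1 / 8) ^ (h + 1))
    (hr : 1 / 2 ≤ r) (hcr : r * (1 + c / 3) = 1) (hj : 1 ≤ j)
    (hreach : ∀ h : ℕ, ConditionalReachingLe i₀ q δ (x i₀ + 7 * (n + m + 1) * (h + 1)) b
      (r ^ (j - (h + 1))))
    (hBm : MeasurableSet B) (hB : DeterminedBy B (halfSpaceVars Color i₀ (x i₀)))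
    (hBtip : B ⊆ unionLayers ⁻¹' HasTip i₀ a x) :
    (layeredPercolation d Color q δ).real (B ∩ unionLayers ⁻¹' FiniteReaching i₀ b) ≤
      r ^ j * (layeredPercolation d Color q δ).real B := by
  have hstem := real_inter_compl_baseOpen_inter_finiteReaching_le (m := m) (n := n)
    (by simpa using hreach 0) hBm hB
  have hexplore := measureReal_iUnion_le_of_hasSum
    (((hasSum_geometric_of_lt_one (r := (1 / 4 : ℝ)) (by norm_num) (by norm_num)).mul_right
      (1 / 4)).mul_left (r ^ j * ((layeredPercolation d Color q δ).real B *
        (layeredPercolation d Color q δ).real (BaseOpen (stem i₀ m n x)))))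
    fun h => (real_inter_stopsAtHeight_inter_finiteReaching_le h01 hr (hstops h) (hreach h) hBm
      hB).trans_eq (by rw [pow_succ])
  have hpow : r ^ (j - 1) = r ^ j * (1 + c / 3) := by
    obtain ⟨e, rfl⟩ := Nat.exists_eq_add_of_le' hj
    rw [Nat.add_sub_cancel, pow_succ, mul_assoc, hcr, mul_one]
  refine (measureReal_mono (inter_finiteReaching_subset h01 hBtip)).trans <|
    (measureReal_union_le _ _).trans <| (add_le_add hstem hexplore).trans ?_
  set s := (layeredPercolation d Color q δ).real (BaseOpen (stem i₀ m n x))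
  have hs1 : s ≤ 1 := measureReal_le_one
  have hr0 : 0 ≤ r := by linarith
  calc _ = r ^ j * (layeredPercolation d Color q δ).real B *
        ((1 + c / 3) * (1 - s) + s / 3) := by rw [hpow]; norm_num; ring
    _ ≤ r ^ j * (layeredPercolation d Color q δ).real B :=
        mul_le_of_le_one_right (mul_nonneg (pow_nonneg hr0 j) measureReal_nonneg)
          (by nlinarith [hs1])

theorem ConditionalReachingLe.of_forall_restart (h01 : i₀ ≠ i₁) {c : ℝ} (hc0 : 0 ≤ c)
    (hc : ∀ x, c ≤ (layeredPercolation d Color q δ).real (BaseOpen (stem i₀ m n x)))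
    (hstops : ∀ x h, (layeredPercolation d Color q δ).real
      ((quadrantScheme i₀ i₁ m n x).StopsAtHeight h) ≤ (1 / 8) ^ (h + 1))
    (hr : 1 / 2 ≤ r) (hcr : r * (1 + c / 3) = 1) (hj : 1 ≤ j) (ha : 0 ≤ a)
    (hab : a ≤ b)
    (hreach : ∀ h : ℕ, ConditionalReachingLe i₀ q δ (a + 7 * (n + m + 1) * (h + 1)) b
      (r ^ (j - (h + 1)))) :
    ConditionalReachingLe i₀ q δ a b (r ^ j) := by
  intro B hBm hB
  obtain ⟨tip, htip⟩ := exists_surjective_nat (Vertex d)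
  set E : ℕ → Set (LayeredConfig d Color) := fun k => unionLayers ⁻¹' HasTip i₀ a (tip k)
  have hEm (k : ℕ) : MeasurableSet (E k) := measurable_unionLayers (measurableSet_hasTip _)
  have hE (k : ℕ) : DeterminedBy (E k) (halfSpaceVars Color i₀ a) :=
    (determinedBy_hasTip _).unionLayers
  refine measureReal_le_mul_of_forall_inter_le (E := disjointed E) (fun k => .disjointed hEm k)
    (disjoint_disjointed E) ?_ hBm (pow_nonneg (by linarith) _) fun k => ?_
  · rw [iUnion_disjointed]
    rintro w ⟨-, hw⟩
    obtain ⟨x, hx⟩ := exists_mem_hasTip ha hab hw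
    obtain ⟨k, rfl⟩ := htip x
    exact Set.mem_iUnion.2 ⟨k, hx⟩
  rw [← Set.inter_assoc]
  by_cases hk : tip k i₀ = a
  · subst hk
    exact real_inter_finiteReaching_le_of_subset_hasTip h01 hc0 (hc _) (hstops _) hr hcr hj hreach
      ((MeasurableSet.disjointed hEm k).inter hBm) ((DeterminedBy.disjointed hE k).inter hB)
      (Set.inter_subset_left.trans (disjointed_subset E k))
  · have hempty : disjointed E k = ∅ :=
      Set.subset_empty_iff.1 fun w hw => hk (disjointed_subset E k hw).1
    simp [hempty]

theorem conditionalReachingLe_pow (h01 : i₀ ≠ i₁) {c : ℝ} (hc0 : 0 ≤ c)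
    (hc : ∀ x, c ≤ (layeredPercolation d Color q δ).real (BaseOpen (stem i₀ m n x)))
    (hstops : ∀ x h, (layeredPercolation d Color q δ).real
      ((quadrantScheme i₀ i₁ m n x).StopsAtHeight h) ≤ (1 / 8) ^ (h + 1))
    (hr : 1 / 2 ≤ r) (hcr : r * (1 + c / 3) = 1) (N k : ℕ) :
    ConditionalReachingLe i₀ q δ k N (r ^ ((N - k) / (7 * (n + m + 1)))) := by
  induction hg : N - k using Nat.strong_induction_on generalizing k with
  | _ g ih =>
    rcases Nat.eq_zero_or_pos (g / (7 * (n + m + 1))) with hj | hj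
    · rw [hj]
      exact fun B _ _ => by simpa using measureReal_mono Set.inter_subset_left
    refine .of_forall_restart h01 hc0 hc hstops hr hcr hj k.cast_nonneg ?_ fun h => ?_
    · by_contra hlt
      rw [← hg, Nat.sub_eq_zero_of_le (by omega), Nat.zero_div] at hj
      exact hj.false
    · have hg0 : 0 < g := pos_of_ne_zero fun h0 => by simp [h0] at hj
      have hstep : 0 < 7 * (n + m + 1) * (h + 1) := by positivity
      have := ih _ (by omega) (k + 7 * (n + m + 1) * (h + 1)) rfl
      rw [← Nat.sub_sub, hg, Nat.sub_mul_div] at this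
      exact_mod_cast this

end Restart

/-! ### Exponential decay -/

section ExponentialDecay

lemma exists_pos_forall_le_exp_of_eventually {f : ℕ → ℝ} {a c : ℝ} (ha : a < 1)
    (hfa : ∀ n, f n ≤ a) (hc : 0 < c) (hfc : ∀ᶠ n : ℕ in Filter.atTop, f n ≤ Real.exp (-c * n)) :
    ∃ c' : ℝ, 0 < c' ∧ ∀ n : ℕ, f n ≤ Real.exp (-c' * n) := by
  obtain ⟨n₀, hn₀⟩ := Filter.eventually_atTop.1 hfc
  set b := max a (1 / 2)
  have hb0 : 0 < b := lt_max_of_lt_right (by norm_num)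
  have hb1 : Real.log b < 0 := Real.log_neg hb0 (max_lt ha (by norm_num))
  have hb' : 0 < -Real.log b / (n₀ + 1) := div_pos (neg_pos.2 hb1) n₀.cast_add_one_pos
  refine ⟨min c (-Real.log b / (n₀ + 1)), lt_min hc hb', fun n => ?_⟩
  rcases le_or_gt n₀ n with hn | hn
  · refine (hn₀ n hn).trans (Real.exp_le_exp.2 ?_)
    gcongr
    exact min_le_left _ _
  · have hn' : (n : ℝ) ≤ n₀ + 1 := by exact_mod_cast hn.le.trans n₀.le_succ
    have hlog : min c (-Real.log b / (n₀ + 1)) * n ≤ -Real.log b :=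
      calc min c (-Real.log b / (n₀ + 1)) * n ≤ -Real.log b / (n₀ + 1) * (n₀ + 1) :=
            mul_le_mul (min_le_right _ _) hn' n.cast_nonneg hb'.le
        _ = -Real.log b := div_mul_cancel₀ _ n₀.cast_add_one_pos.ne'
    calc f n ≤ b := (hfa n).trans (le_max_left _ _)
      _ = Real.exp (Real.log b) := (Real.exp_log hb0).symm
      _ ≤ _ := Real.exp_le_exp.2 (by linarith)

lemma pow_div_le_exp {r : ℝ} (hr0 : 0 < r) (hr1 : r < 1) (L n : ℕ) :
    r ^ (n / L) ≤ r⁻¹ * Real.exp (Real.log r / L * n) := by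
  have hn : (n : ℝ) / L ≤ (n / L : ℕ) + 1 := by
    rw [← Nat.floor_div_eq_div (K := ℝ)]
    exact (Nat.lt_floor_add_one _).le
  have hlog : Real.log r * ((n / L : ℕ) + 1) ≤ Real.log r / L * n := by
    calc Real.log r * ((n / L : ℕ) + 1) ≤ Real.log r * (n / L) :=
          mul_le_mul_of_nonpos_left hn (Real.log_neg hr0 hr1).le
      _ = Real.log r / L * n := by ring
  rw [le_inv_mul_iff₀ hr0, ← pow_succ', ← Real.exp_log (pow_pos hr0 _), Real.log_pow, mul_comm]
  exact Real.exp_le_exp.2 (by exact_mod_cast hlog)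

lemma exists_pos_eventually_mul_pow_div_le_exp (K : ℝ) {r : ℝ} (hr0 : 0 < r) (hr1 : r < 1) {L : ℕ}
    (hL : L ≠ 0) :
    ∃ c : ℝ, 0 < c ∧ ∀ᶠ n : ℕ in Filter.atTop, K * r ^ (n / L) ≤ Real.exp (-c * n) := by
  set c := -(Real.log r / L) / 2
  have hc : 0 < c :=
    half_pos (neg_pos.2 (div_neg_of_neg_of_pos (Real.log_neg hr0 hr1) (by positivity)))
  have hlim : Filter.Tendsto (fun n : ℕ => |K| * r⁻¹ * Real.exp (-(c * n))) Filter.atTop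
      (nhds 0) := by
    simpa using (Real.tendsto_exp_neg_atTop_nhds_zero.comp
      (tendsto_natCast_atTop_atTop.const_mul_atTop hc)).const_mul (|K| * r⁻¹)
  refine ⟨c, hc, (hlim.eventually_le_const one_pos).mono fun n hn => ?_⟩
  calc K * r ^ (n / L) ≤ |K| * (r⁻¹ * Real.exp (Real.log r / L * n)) :=
        mul_le_mul (le_abs_self K) (pow_div_le_exp hr0 hr1 L n) (by positivity) (abs_nonneg K)
    _ = |K| * r⁻¹ * Real.exp (-(c * n)) * Real.exp (-c * n) := by
        rw [mul_assoc, mul_assoc, ← Real.exp_add]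
        congr 3
        ring
    _ ≤ Real.exp (-c * n) := mul_le_of_le_one_left (Real.exp_nonneg _) hn

end ExponentialDecay

section LayerLaw

variable {d : ℕ} {C : Type*} [Fintype C] {p q δ : unitInterval}

lemma real_unionLayers_eq_false (e : Edge d) :
    (layeredPercolation d C q δ).real {w | unionLayers w e = false} =
      (1 - q) * (1 - δ : ℝ) ^ Fintype.card C := by
  have hset : {w : LayeredConfig d C | unionLayers w e = false} =
      {w | ∀ i ∈ Finset.univ.map (Function.Embedding.sectR e (Option C)), w i = false} := by
    ext w
    simp [unionLayers]
  rw [hset, bernoulliProduct_real_forall_false, Finset.prod_map, Fintype.prod_option]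
  simp

theorem map_unionLayers (h : (1 - q : ℝ) * (1 - δ) ^ Fintype.card C = 1 - p) :
    (layeredPercolation d C q δ).map unionLayers = bernoulliPercolation d p := by
  have hm (e : Edge d) (b : Bool) :
      MeasurableSet (unionLayers ⁻¹' {ω | ω e = b} : Set (LayeredConfig d C)) :=
    measurable_unionLayers (measurableSet_eq_fun (measurable_pi_apply e) measurable_const)
  have hmarginal (e : Edge d) (b : Bool) : (layeredPercolation d C q δ).real
      (unionLayers ⁻¹' {ω | ω e = b}) = if b then (p : ℝ) else 1 - p := by
    have hfalse : (layeredPercolation d C q δ).real (unionLayers ⁻¹' {ω | ω e = false}) = 1 - p :=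
      (real_unionLayers_eq_false e).trans h
    cases b
    · simpa using hfalse
    · have hcompl : (unionLayers ⁻¹' {ω | ω e = true} : Set (LayeredConfig d C)) =
          (unionLayers ⁻¹' {ω | ω e = false})ᶜ := by
        ext w
        simp
      rw [hcompl, probReal_compl_eq_one_sub (hm e false), hfalse]
      simp
  refine eq_infinitePi_of_forall_cylinder _ fun s f => ?_
  have hcyl : {ω : Config d | ∀ e ∈ s, ω e = f e} = ⋂ e ∈ s, {ω | ω e = f e} := by
    ext ω
    simp
  have hmcyl : MeasurableSet {ω : Config d | ∀ e ∈ s, ω e = f e} := hcyl ▸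
    s.measurableSet_biInter fun e _ => measurableSet_eq_fun (measurable_pi_apply e) measurable_const
  rw [Measure.map_apply measurable_unionLayers hmcyl, hcyl, Set.preimage_iInter₂,
    ← ofReal_measureReal, infinitePi_real_biInter _ s (fun e _ => hm e (f e))
      (fun e _ => (determinedBy_eval_eq e (f e)).unionLayers)
      fun e _ e' _ hee' => Disjoint.preimage _ (Set.disjoint_singleton.2 hee'),
    ENNReal.ofReal_prod_of_nonneg fun _ _ => measureReal_nonneg]
  refine Finset.prod_congr rfl fun e _ => ?_
  rw [bernoulliMeasure_bool_singleton, ← hmarginal e (f e)]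

lemma exists_pos_one_sub_mul_one_sub_pow_eq (hqp : q < p) (hp : (p : ℝ) < 1) {k : ℕ} (hk : k ≠ 0) :
    ∃ δ : unitInterval, 0 < (δ : ℝ) ∧ (1 - q : ℝ) * (1 - δ) ^ k = 1 - p := by
  have hqp' : (q : ℝ) < p := hqp
  have hq : (0 : ℝ) < 1 - q := by linarith
  have h0 : 0 ≤ (1 - p : ℝ) / (1 - q) := div_nonneg (by linarith) hq.le
  have h1 : (1 - p : ℝ) / (1 - q) < 1 := (div_lt_one hq).2 (by linarith)
  set a := ((1 - p : ℝ) / (1 - q)) ^ ((k : ℝ)⁻¹)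
  have ha0 : 0 ≤ a := Real.rpow_nonneg h0 _
  have ha1 : a < 1 := Real.rpow_lt_one h0 h1 (by positivity)
  refine ⟨⟨1 - a, by linarith, by linarith⟩, sub_pos.2 ha1, ?_⟩
  rw [sub_sub_cancel, Real.rpow_inv_natCast_pow h0 hk, mul_div_cancel₀ _ hq.ne']

end LayerLaw

section Directions

variable {d : ℕ} {p : unitInterval}

lemma LatticeAut.cluster_pullback (φ : LatticeAut d) (ω : Config d) (x : Vertex d) :
    cluster (φ.pullback ω) x = φ ⁻¹' cluster ω (φ x) :=
  Set.ext fun _ => φ.conn_pullback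

lemma exists_units_mul_eq_of_mem_boxBoundary {n : ℕ} {y : Vertex d} (hy : y ∈ boxBoundary d n) :
    ∃ (i : Fin d) (s : ℤˣ), s * y i = n := by
  obtain ⟨hybox, z, hyz, hz⟩ := hy
  obtain ⟨i, hi⟩ : ∃ i, (n : ℤ) < |z i| := by simpa [box] using hz
  have hyi := abs_le.1 (hybox i)
  have hyzi := abs_le.1 (hyz.abs_sub_le_one i)
  rcases lt_abs.1 hi with hi | hi
  · exact ⟨i, 1, by push_cast; omega⟩
  · exact ⟨i, -1, by push_cast; omega⟩

lemma zeroToBoundary_inter_finite_subset (i₀ : Fin d) (n : ℕ) :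
    ZeroToBoundary d n ∩ {ω | ¬(cluster ω (origin d)).Infinite} ⊆
      ⋃ is : Fin d × ℤˣ, {ω | (affineAut (origin d) (Equiv.swap i₀ is.1) fun _ => is.2).pullback ω ∈
        FiniteReaching i₀ n} := by
  rintro ω ⟨⟨y, hy, hconn⟩, hfin⟩
  obtain ⟨i, s, his⟩ := exists_units_mul_eq_of_mem_boxBoundary hy
  refine Set.mem_iUnion.2 ⟨(i, s), ?_⟩
  set φ := affineAut (origin d) (Equiv.swap i₀ i) fun _ => s
  have hφ : φ (origin d) = origin d := affineAut_origin
  obtain ⟨x, rfl⟩ := φ.surjective y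
  refine ⟨⟨x, ?_, ?_⟩, ?_⟩
  · rwa [LatticeAut.conn_pullback, hφ]
  · rw [← his, affineAut_apply, Equiv.swap_apply_right]
    rcases Int.units_eq_one_or s with rfl | rfl <;> simp [origin]
  · rw [LatticeAut.cluster_pullback, hφ]
    exact (Set.not_infinite.1 hfin).preimage φ.injective.injOn

lemma real_zeroToBoundary_inter_finite_le (i₀ : Fin d) (n : ℕ) :
    (bernoulliPercolation d p).real
        (ZeroToBoundary d n ∩ {ω | ¬(cluster ω (origin d)).Infinite}) ≤
      2 * d * (bernoulliPercolation d p).real (FiniteReaching i₀ n) := by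
  refine (measureReal_mono (zeroToBoundary_inter_finite_subset i₀ n)).trans
    ((measureReal_iUnion_fintype_le _).trans_eq ?_)
  simp only [LatticeAut.real_pullback_mem _ measurableSet_finiteReaching, Finset.sum_const,
    Finset.card_univ, Fintype.card_prod, Fintype.card_fin, Fintype.card_units_int, nsmul_eq_mul]
  push_cast
  ring

end Directions

section Supercritical

variable {d : ℕ} {p q : unitInterval}

theorem exists_real_finiteReaching_le_pow {i₀ i₁ : Fin d} (h01 : i₀ ≠ i₁) (hq0 : 0 < (q : ℝ))
    (hqp : q < p) (hp : (p : ℝ) < 1) (h0 : bernoulliPercolation d q (ZeroToInfinity d) ≠ 0) :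
    ∃ (r : ℝ) (L : ℕ), 0 < r ∧ r < 1 ∧ L ≠ 0 ∧
      ∀ n : ℕ, (bernoulliPercolation d p).real (FiniteReaching i₀ n) ≤ r ^ (n / L) := by
  obtain ⟨δ, hδ0, hδ⟩ := exists_pos_one_sub_mul_one_sub_pow_eq hqp hp
    (Fintype.card_ne_zero (α := Color))
  obtain ⟨m, n, -, -, hstep⟩ := exists_forall_real_noCubeReached_cube_le (C := Color) hq0
    (lt_trans hqp hp) hδ0 h0 i₀ (ε := 1 / 2304) (by norm_num)
  set c := (q : ℝ) ^ ((3 * (n + m + 1) + (2 * m + 1) ^ d) * 3 ^ d)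
  have hc0 : 0 < c := pow_pos hq0 _
  have hc1 : c ≤ 1 := pow_le_one₀ hq0.le q.2.2
  have hopen (x : Vertex d) :
      c ≤ (layeredPercolation d Color q δ).real (BaseOpen (stem i₀ m n x)) :=
    (pow_le_pow_of_le_one hq0.le q.2.2 (Nat.mul_le_mul_right _ card_stem_le)).trans
      (pow_le_real_baseOpen q δ _)
  have hstops (x : Vertex d) (h : ℕ) : (layeredPercolation d Color q δ).real
      ((quadrantScheme i₀ i₁ m n x).StopsAtHeight h) ≤ (1 / 8) ^ (h + 1) :=
    ExplorationScheme.real_stopsAtHeight_le (admissible_quadrantScheme h01) rfl rfl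
      (moveFailureLe_quadrantScheme hstep) h
  have hr : 1 / 2 ≤ (1 + c / 3)⁻¹ := by
    rw [one_div]
    exact inv_anti₀ (by positivity) (by linarith)
  refine ⟨(1 + c / 3)⁻¹, 7 * (n + m + 1), by positivity, inv_lt_one_of_one_lt₀ (by linarith),
    by omega, fun N => ?_⟩
  have := conditionalReachingLe_pow h01 hc0.le hopen hstops hr
    (inv_mul_cancel₀ (by positivity)) N 0 Set.univ .univ (determinedBy_of_imp fun _ _ _ h => h)
  rwa [Set.univ_inter, probReal_univ, mul_one, Nat.sub_zero,
    ← map_measureReal_apply measurable_unionLayers measurableSet_finiteReaching,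
    map_unionLayers hδ] at this

theorem exists_real_zeroToBoundary_inter_finite_le_exp (hd : 2 ≤ d) (hq0 : 0 < (q : ℝ))
    (hqp : q < p) (hp : (p : ℝ) < 1) (hq : bernoulliPercolation d q (ZeroToInfinity d) ≠ 0)
    (hp' : bernoulliPercolation d p (ZeroToInfinity d) ≠ 0) :
    ∃ c : ℝ, 0 < c ∧ ∀ n : ℕ, (bernoulliPercolation d p).real
      (ZeroToBoundary d n ∩ {ω | ¬(cluster ω (origin d)).Infinite}) ≤ Real.exp (-c * n) := by
  have h01 : (⟨0, by omega⟩ : Fin d) ≠ ⟨1, by omega⟩ := by simp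
  obtain ⟨r, L, hr0, hr1, hL, hreach⟩ := exists_real_finiteReaching_le_pow h01 hq0 hqp hp hq
  obtain ⟨c, hc, hexp⟩ := exists_pos_eventually_mul_pow_div_le_exp (2 * d) hr0 hr1 hL
  refine exists_pos_forall_le_exp_of_eventually
    (a := 1 - (bernoulliPercolation d p).real (ZeroToInfinity d)) ?_ (fun n => ?_) hc
    (hexp.mono fun n hn => ?_)
  · exact sub_lt_self 1 (measureReal_nonneg.lt_of_ne' ((measureReal_eq_zero_iff).not.2 hp'))
  · rw [← probReal_compl_eq_one_sub (show MeasurableSet (ZeroToInfinity d) from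
      measurableSet_cluster_infinite _)]
    exact measureReal_mono Set.inter_subset_right
  · refine (real_zeroToBoundary_inter_finite_le ⟨0, by omega⟩ n).trans (le_trans ?_ hn)
    gcongr
    exact hreach n

theorem IsBernoulli.eq_bernoulliPercolation {μ : Measure (Config d)} (h : IsBernoulli d p μ) :
    μ = bernoulliPercolation d p :=
  eq_infinitePi_of_forall_cylinder _ fun s f => (h.2 s f).trans <| by
    simp only [bernoulliMeasure_bool_singleton]
    refine ENNReal.ofReal_prod_of_nonneg fun e _ => ?_
    split_ifs
    exacts [p.2.1, sub_nonneg.2 p.2.2]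

end Supercritical

/-- Super-critical sharpness: for every `d ≥ 2` and `p ∈ (0,1)` with `p > p_c(ℤ^d)`, there
exists `c = c(p) > 0` such that
`ℙ_p[0 ↔ ∂Λ_n but the open cluster of 0 is finite] ≤ exp(−c·n)` for all `n ≥ 1`. -/
theorem supercritical_sharpness
    (d : ℕ) (hd : 2 ≤ d)
    (μ : ℝ → Measure (Config d))
    (hμ : ∀ p ∈ Set.Ioo (0 : ℝ) 1, IsBernoulli d p (μ p))
    (p : ℝ) (hp : p ∈ Set.Ioo (0 : ℝ) 1)
    (hsup : sSup {q : ℝ | q ∈ Set.Ioo (0 : ℝ) 1 ∧ μ q (ZeroToInfinity d) = 0} < p) :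
    ∃ c : ℝ, 0 < c ∧ ∀ n : ℕ, 1 ≤ n →
      μ p (ZeroToBoundary d n ∩ {ω : Config d | ¬ (cluster ω (origin d)).Infinite}) ≤
        ENNReal.ofReal (Real.exp (-c * n)) := by
  have hlaw (q : ℝ) (hq : q ∈ Set.Ioo (0 : ℝ) 1) :
      μ q = bernoulliPercolation d ⟨q, hq.1.le, hq.2.le⟩ :=
    IsBernoulli.eq_bernoulliPercolation (hμ q hq)
  have hinf (q : ℝ) (hq : q ∈ Set.Ioo (0 : ℝ) 1)
      (hlt : sSup {q : ℝ | q ∈ Set.Ioo (0 : ℝ) 1 ∧ μ q (ZeroToInfinity d) = 0} < q) :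
      bernoulliPercolation d ⟨q, hq.1.le, hq.2.le⟩ (ZeroToInfinity d) ≠ 0 := fun h0 =>
    hlt.not_ge (le_csSup ⟨1, fun _ hx => hx.1.2.le⟩ ⟨hq, (hlaw q hq).symm ▸ h0⟩)
  obtain ⟨q, hq, hqp⟩ := exists_between (max_lt hsup hp.1)
  have hq01 : q ∈ Set.Ioo (0 : ℝ) 1 := ⟨(le_max_right _ _).trans_lt hq, hqp.trans hp.2⟩
  obtain ⟨c, hc, hexp⟩ := exists_real_zeroToBoundary_inter_finite_le_exp hd hq01.1 hqp hp.2
    (hinf q hq01 ((le_max_left _ _).trans_lt hq)) (hinf p hp hsup)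
  refine ⟨c, hc, fun n _ => ?_⟩
  rw [hlaw p hp, ENNReal.le_ofReal_iff_toReal_le (measure_ne_top _ _) (Real.exp_nonneg _)]
  exact hexp n

end Perc
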